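/- For every integer d ≥ 3, every integer R ≥ 1, every real p with 1/(d-1) < p < 1, and every α ∈ (0,1), there exist b > 0 and c > 0 such that for every ε > 0 and every n₀ there exist n ≥ n₀ and a regular (b,d)-expander 𝒢 on n vertices with girth at least R for which the random graph G ∼ 𝒢_p satisfies |V(C₂(G))| ≥ c·n^α with probability at least 1 − ε, where C₂(G) denotes a second largest connected component of G (a component of maximum size among those different from a fixed largest component). -/

import Mathlib

open scoped Classical symmDiff

noncomputable section

namespace Percolation

variable {V : Type} [Fintype V] [DecidableEq V]

/-- The edge set of `G` as a finset. -/
noncomputable def edgeFinset' (G : SimpleGraph V) : Finset (Sym2 V) :=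
  Finset.univ.filter (· ∈ G.edgeSet)

/-- Probability that bond percolation on `G` with parameter `p` produces a spanning
subgraph satisfying `P`. -/
noncomputable def percProb (G : SimpleGraph V) (p : ℝ) (P : SimpleGraph V → Prop) : ℝ :=
  ∑ s ∈ (edgeFinset' G).powerset,
    (p ^ s.card * (1 - p) ^ ((edgeFinset' G).card - s.card)) *
      (if P (SimpleGraph.fromEdgeSet (↑s)) then 1 else 0)

/-- Joint probability for two independent bond percolations on `G`. -/
noncomputable def percProb2 (G : SimpleGraph V) (p₁ p₂ : ℝ)
    (P : SimpleGraph V → SimpleGraph V → Prop) : ℝ :=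
  ∑ s ∈ (edgeFinset' G).powerset, ∑ t ∈ (edgeFinset' G).powerset,
    (p₁ ^ s.card * (1 - p₁) ^ ((edgeFinset' G).card - s.card)) *
    (p₂ ^ t.card * (1 - p₂) ^ ((edgeFinset' G).card - t.card)) *
      (if P (SimpleGraph.fromEdgeSet (↑s)) (SimpleGraph.fromEdgeSet (↑t)) then 1 else 0)

/-- Number of edges of `G` joining `S` to its complement. -/
noncomputable def cutCard (G : SimpleGraph V) (S : Finset V) : ℕ :=
  ((edgeFinset' G).filter (fun e => ∃ x ∈ S, ∃ y, y ∉ S ∧ e = s(x, y))).card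

/-- `G` is a `(b,d)`-expander: max degree at most `d`, and every vertex set of size at most
`n/2` has at least `b|S|` edges to its complement. -/
def IsExpander (G : SimpleGraph V) (b : ℝ) (d : ℕ) : Prop :=
  (∀ v, (G.neighborSet v).ncard ≤ d) ∧
  ∀ S : Finset V, (S.card : ℝ) ≤ Fintype.card V / 2 → b * S.card ≤ cutCard G S

/-- `G` is a regular `(b,d)`-expander. -/
def IsRegularExpander (G : SimpleGraph V) (b : ℝ) (d : ℕ) : Prop :=
  IsExpander G b d ∧ ∀ v, (G.neighborSet v).ncard = d

/-- The vertices of the connected component `c` of `G`. -/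
noncomputable def compVerts (G : SimpleGraph V) (c : G.ConnectedComponent) : Finset V :=
  Finset.univ.filter (fun v => G.connectedComponentMk v = c)

/-- The edges of the connected component `c` of `G`. -/
noncomputable def compEdges (G : SimpleGraph V) (c : G.ConnectedComponent) : Finset (Sym2 V) :=
  (edgeFinset' G).filter (fun e => ∀ v ∈ e, G.connectedComponentMk v = c)

/-- `c` is a largest connected component of `G`. -/
def IsLargestComp (G : SimpleGraph V) (c : G.ConnectedComponent) : Prop :=
  ∀ c' : G.ConnectedComponent, (compVerts G c').card ≤ (compVerts G c).card

/-- The 2-core of the connected component `c` of `G` : the maximal subgraph of `G`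
supported inside `c` all of whose vertices have degree at least 2. -/
noncomputable def twoCoreComp (G : SimpleGraph V) (c : G.ConnectedComponent) : SimpleGraph V :=
  sSup {H : SimpleGraph V | H ≤ G ∧ (∀ v ∈ H.support, G.connectedComponentMk v = c) ∧
    ∀ v ∈ H.support, 2 ≤ (H.neighborSet v).ncard}

/-- The event `A^R_{x,y}(H)`: the connected component of `y` in `H` with the edge `xy`
removed (if present) has at least `R` vertices. -/
def eventA (H : SimpleGraph V) (R : ℕ) (x y : V) : Prop :=
  R ≤ (compVerts (H.deleteEdges {s(x, y)})
        ((H.deleteEdges {s(x, y)}).connectedComponentMk y)).card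

/-- `E₁(H)`: edges `xy` of `H` such that `A^R_{x,y}` or `A^R_{y,x}` holds. -/
noncomputable def E1set (H : SimpleGraph V) (R : ℕ) : Finset (Sym2 V) :=
  (edgeFinset' H).filter (fun e => ∃ x y, e = s(x, y) ∧ (eventA H R x y ∨ eventA H R y x))

/-- `V₁(H)`: vertices `x` such that for some `y`, `xy ∈ E(H)` and `A^R_{x,y}` holds. -/
noncomputable def V1set (H : SimpleGraph V) (R : ℕ) : Finset V :=
  Finset.univ.filter (fun x => ∃ y, H.Adj x y ∧ eventA H R x y)

/-- `E₂(H)`: edges `xy` of `H` such that both `A^R_{x,y}` and `A^R_{y,x}` hold. -/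
noncomputable def E2set (H : SimpleGraph V) (R : ℕ) : Finset (Sym2 V) :=
  (edgeFinset' H).filter (fun e => ∃ x y, e = s(x, y) ∧ eventA H R x y ∧ eventA H R y x)

/-- `V₂(H)`: vertices incident to an edge of `E₂(H)`. -/
noncomputable def V2set (H : SimpleGraph V) (R : ℕ) : Finset V :=
  Finset.univ.filter (fun x => ∃ e ∈ E2set H R, x ∈ e)

/-- `V̄₁(H)`: vertices `y` such that `A^R_{x,y}(H)` holds for some `x`. -/
noncomputable def Vbar1 (H : SimpleGraph V) (R : ℕ) : Finset V :=
  Finset.univ.filter (fun y => ∃ x, eventA H R x y)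

/-- `S` is `k`-thick in `H`: a union of pairwise disjoint subsets, each of size at least
`k`, each inducing a connected subgraph of `H`. -/
def IsThick (H : SimpleGraph V) (k : ℕ) (S : Finset V) : Prop :=
  ∃ P : Finset (Finset V),
    (∀ T ∈ P, k ≤ T.card ∧ (H.induce (↑T : Set V)).Connected) ∧
    (↑P : Set (Finset V)).PairwiseDisjoint id ∧ S = P.biUnion id

/-- `S` is a separator of `K`. -/
def IsSeparator {W : Type} [Fintype W] (K : SimpleGraph W) (S : Finset W) : Prop :=
  ∃ A B : Finset W, Disjoint A B ∧ Disjoint A S ∧ Disjoint B S ∧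
    (∀ w, w ∈ A ∨ w ∈ B ∨ w ∈ S) ∧
    (∀ a ∈ A, ∀ b ∈ B, ¬ K.Adj a b) ∧
    3 * A.card ≤ 2 * Fintype.card W ∧ 3 * B.card ≤ 2 * Fintype.card W

/-!
Percolation with `p > 1 / (d - 1)` is supercritical on the `d`-regular tree, hence also on finite
graphs of large girth. The expander is a cover of the Cayley graph of a finite group of large girth
generated by `d` involutions, in which a few marked edges lift in a special way. It has two sides.
Each side has copies of the base graph, called cores, indexed by a set `J`, and each core carries a
binary tree, whose edges are stretched to paths of length `L` and whose height is `L * T`; every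
node of a tree is again a copy of the base graph. The copies are joined as follows.

* The unmarked edges join the cores of each side within blocks of bounded size, which look like
  trees locally. With probability bounded below, the root of a tree is joined to a large cluster of
  cores. This is independent for different blocks, so by a second moment bound a positive
  proportion of the trees is good in this sense.
* A permutation of `J` matches the roots of each side. For all but a tiny fraction of the
  permutations it merges a positive proportion of the clusters of good trees into one giant, so by
  averaging some permutation does so with high probability.
* The leaves of all trees, on both sides, are joined by permutations under which every set of leaves
  expands. A set of vertices with a small boundary is controlled by the leaves it contains, since
  the trees branch every `L` levels; hence the whole graph is an expander.

The two sides thus meet only at the leaves. There are at most `2 ^ T` branches from a root to the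
leaves, each open with probability exponentially small in `L * T`, so that for `L` large no leaf is
joined to its root and the two giants stay apart. The number `n` of vertices is at most a constant
times `|J| * 4 ^ T`; choosing `|J|` to be a constant times `2 ^ (s * T)` with `s` large makes `|J|`
at least of order `n ^ α`.
-/

/-! ### Independent Bernoulli bits -/

section BernoulliPi

open MeasureTheory ProbabilityTheory

/-- The law of independent Bernoulli bits with parameter `p`, indexed by a finite type `E`. In a
percolation, `ω e = true` means that the edge labelled `e` is retained. -/
def bernoulliPi (E : Type*) [Fintype E] (p : unitInterval) : Measure (E → Bool) :=
  Measure.pi fun _ => bernoulliMeasure true false p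

instance (E : Type*) [Fintype E] (p : unitInterval) : IsProbabilityMeasure (bernoulliPi E p) := by
  unfold bernoulliPi; infer_instance

variable {E F ι : Type*} [Fintype E] [Fintype F] {p : unitInterval}

lemma map_eval_bernoulliPi (e : E) :
    (bernoulliPi E p).map (fun ω => ω e) = bernoulliMeasure true false p :=
  (measurePreserving_eval _ e).map_eq

lemma iIndepFun_eval_bernoulliPi : iIndepFun (fun (e : E) ω => ω e) (bernoulliPi E p) :=
  iIndepFun_pi (X := fun _ => id) fun _ => aemeasurable_id

lemma map_comp_bernoulliPi {i : E → F} (hi : Function.Injective i) :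
    (bernoulliPi F p).map (· ∘ i) = bernoulliPi E p := by
  have h := (iIndepFun_iff_map_fun_eq_pi_map fun e => (measurable_pi_apply (i e)).aemeasurable).1
    (iIndepFun_eval_bernoulliPi (p := p).precomp hi)
  simp only [map_eval_bernoulliPi] at h
  exact h

lemma bernoulliPi_real_comp {i : E → F} (hi : Function.Injective i) (A : (E → Bool) → Prop) :
    (bernoulliPi F p).real {ω | A (ω ∘ i)} = (bernoulliPi E p).real {η | A η} := by
  rw [← map_comp_bernoulliPi hi, map_measureReal_apply .of_discrete .of_discrete]
  rfl

lemma bernoulliPi_real_singleton (ω : E → Bool) :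
    (bernoulliPi E p).real {ω} = ∏ e, if ω e = true then (p : ℝ) else 1 - p := by
  rw [bernoulliPi, measureReal_def, Measure.pi_singleton, ENNReal.toReal_prod]
  refine Finset.prod_congr rfl fun e _ => ?_
  cases h : ω e <;> simp

lemma bernoulliPi_real_eval (e : E) : (bernoulliPi E p).real {ω | ω e = true} = p := by
  have h := map_measureReal_apply (μ := bernoulliPi E p) (measurable_pi_apply e)
    (.of_discrete : MeasurableSet {true})
  rw [map_eval_bernoulliPi] at h
  simpa [bernoulliMeasure_real_apply, Set.preimage] using h.symm

lemma indepFun_of_dependsOn {α β : Type*} [MeasurableSpace α] [MeasurableSpace β] [Nonempty α]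
    [Nonempty β] {S T : Set E} (hST : Disjoint S T) {f : (E → Bool) → α} {g : (E → Bool) → β}
    (hf : DependsOn f S) (hg : DependsOn g T) : IndepFun f g (bernoulliPi E p) := by
  obtain ⟨f', rfl⟩ := dependsOn_iff_exists_comp.1 (hf.mono (Set.coe_toFinset S).ge)
  obtain ⟨g', rfl⟩ := dependsOn_iff_exists_comp.1 (hg.mono (Set.coe_toFinset T).ge)
  exact (iIndepFun_eval_bernoulliPi.indepFun_finset S.toFinset T.toFinset
    (Set.disjoint_toFinset.2 hST) fun e => measurable_pi_apply e).comp
      (φ := f') (ψ := g') .of_discrete .of_discrete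

lemma bernoulliPi_real_and {S T : Set E} (hST : Disjoint S T) {A B : (E → Bool) → Prop}
    (hA : DependsOn A S) (hB : DependsOn B T) :
    (bernoulliPi E p).real {ω | A ω ∧ B ω}
      = (bernoulliPi E p).real {ω | A ω} * (bernoulliPi E p).real {ω | B ω} := by
  have h := congrArg ENNReal.toReal <|
    (indepFun_of_dependsOn (p := p) hST hA hB).measure_inter_preimage_eq_mul {True} {True}
      .of_discrete .of_discrete
  simpa [Set.preimage, measureReal_def, Set.ofPred_and] using h

lemma bernoulliPi_real_forall (s : Finset ι) {S : ι → Set E}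
    (hS : (s : Set ι).PairwiseDisjoint S) {A : ι → (E → Bool) → Prop}
    (hA : ∀ i ∈ s, DependsOn (A i) (S i)) :
    (bernoulliPi E p).real {ω | ∀ i ∈ s, A i ω} = ∏ i ∈ s, (bernoulliPi E p).real {ω | A i ω} := by
  induction s using Finset.induction_on with
  | empty => simp
  | insert a s ha ih =>
    simp only [Finset.forall_mem_insert, Finset.coe_insert] at hA hS ⊢
    rw [Set.pairwiseDisjoint_insert] at hS
    rw [Finset.prod_insert ha, ← ih hS.1 hA.2]
    refine bernoulliPi_real_and (T := ⋃ i ∈ s, S i) ?_ hA.1 fun ω ω' h => ?_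
    · exact Set.disjoint_iUnion₂_right.2 fun i hi => hS.2 i hi fun h => ha (h ▸ hi)
    · exact propext <| forall₂_congr fun i hi =>
        (hA.2 i hi fun x hx => h x (Set.mem_biUnion hi hx)).to_iff

lemma bernoulliPi_real_exists (s : Finset ι) {S : ι → Set E}
    (hS : (s : Set ι).PairwiseDisjoint S) {A : ι → (E → Bool) → Prop}
    (hA : ∀ i ∈ s, DependsOn (A i) (S i)) :
    (bernoulliPi E p).real {ω | ∃ i ∈ s, A i ω}
      = 1 - ∏ i ∈ s, (1 - (bernoulliPi E p).real {ω | A i ω}) := by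
  have hnot (B : (E → Bool) → Prop) :
      (bernoulliPi E p).real {ω | ¬ B ω} = 1 - (bernoulliPi E p).real {ω | B ω} :=
    probReal_compl_eq_one_sub .of_discrete
  have h := bernoulliPi_real_forall (p := p) s hS (A := fun i ω => ¬ A i ω)
    fun i hi ω ω' hω => congrArg Not (hA i hi hω)
  have hall := hnot fun ω => ∃ i ∈ s, A i ω
  simp only [hnot] at h
  push Not at hall
  linarith

lemma bernoulliPi_real_forall_eval (s : Finset E) :
    (bernoulliPi E p).real {ω | ∀ e ∈ s, ω e = true} = (p : ℝ) ^ s.card := by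
  rw [bernoulliPi_real_forall s (S := fun e => {e})
    (fun i _ j _ hij => Set.disjoint_singleton.2 hij)
    (A := fun e ω => ω e = true) fun e _ ω ω' h => congrArg (· = true) (h e rfl)]
  simp only [bernoulliPi_real_eval, Finset.prod_const]

end BernoulliPi

/-! ### Finite groups generated by involutions without short relations -/

section FreeUpTo

variable {ι Q : Type*} [Group Q] {s : ι → Q} {g : ℕ}

/-- Distinct reduced words of length at most `g` in the involutions `s` have distinct values;
a word in involutions is reduced when no two consecutive letters agree. -/
def FreeUpTo (s : ι → Q) (g : ℕ) : Prop :=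
  ∀ w w' : List ι, w.IsChain (· ≠ ·) → w.length ≤ g → w'.IsChain (· ≠ ·) →
    w'.length ≤ g → (w.map s).prod = (w'.map s).prod → w = w'

lemma FreeUpTo.mono {m : ℕ} (hs : FreeUpTo s g) (hmg : m ≤ g) : FreeUpTo s m :=
  fun w w' hw hl hw' hl' => hs w w' hw (hl.trans hmg) hw' (hl'.trans hmg)

lemma FreeUpTo.injective (hs : FreeUpTo s g) (hg : 1 ≤ g) : Function.Injective s := by
  intro k k' h
  simpa using hs [k] [k'] (by simp) (by simpa) (by simp) (by simpa) (by simpa)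

lemma FreeUpTo.ne_one (hs : FreeUpTo s g) (hg : 1 ≤ g) (k : ι) : s k ≠ 1 := by
  intro h
  simpa using hs [k] [] (by simp) (by simpa) (by simp) (by simp) (by simpa)

lemma exists_isChain_ne_of_length (ι : Type*) [Nontrivial ι] (n : ℕ) :
    ∃ w : List ι, w.IsChain (· ≠ ·) ∧ w.length = n := by
  induction n with
  | zero => exact ⟨[], by simp⟩
  | succ n ih =>
    obtain ⟨w, hw, hl⟩ := ih
    obtain ⟨k, hk⟩ : ∃ k, w.head? ≠ some k := by
      obtain ⟨a, b, hab⟩ := exists_pair_ne ι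
      by_contra! h
      exact hab (Option.some_injective _ ((h a).symm.trans (h b)))
    exact ⟨k :: w, List.isChain_cons.2 ⟨fun y hy he => hk (he ▸ hy), hw⟩, by simp [hl]⟩

lemma FreeUpTo.lt_card [Nontrivial ι] [Fintype Q] (hs : FreeUpTo s g) : g < Fintype.card Q := by
  choose word word_isChain length_word using exists_isChain_ne_of_length ι
  have hinj : Function.Injective fun n : Fin (g + 1) => ((word n).map s).prod := by
    intro m n h
    have hw := hs _ _ (word_isChain m) (by rw [length_word]; omega) (word_isChain n)
      (by rw [length_word]; omega) h
    exact Fin.ext <| by rw [← length_word m, hw, length_word]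
  simpa using Fintype.card_le_of_injective _ hinj

lemma exists_map_prod_eq (hs : ∀ k, s k * s k = 1) (ht : Subgroup.closure (Set.range s) = ⊤)
    (x : Q) : ∃ w : List ι, (w.map s).prod = x := by
  have hx : x ∈ Submonoid.closure (Set.range s) := by
    have hinv : (Set.range s)⁻¹ = Set.range s := by
      rw [Set.inv_range]
      exact congrArg Set.range (funext fun k => inv_eq_of_mul_eq_one_left (hs k))
    have hmem : x ∈ (Subgroup.closure (Set.range s)).toSubmonoid := by simp [ht]
    rwa [Subgroup.closure_toSubmonoid, hinv, Set.union_self] at hmem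
  obtain ⟨l, hl, rfl⟩ := Submonoid.exists_list_of_mem_closure hx
  obtain ⟨w, rfl⟩ : l ∈ Set.range (List.map s) := by rwa [Set.range_list_map]
  exact ⟨w, rfl⟩

end FreeUpTo

section ExistsFreeUpTo

variable {ι : Type*} {g : ℕ}

/-- Reduced words of length at most `g`, on which a finite group without short relations acts. -/
def RedWord (ι : Type*) (g : ℕ) : Type _ :=
  {w : List ι // w.IsChain (· ≠ ·) ∧ w.length ≤ g}

instance [Finite ι] : Finite (RedWord ι g) :=
  ((List.finite_length_le ι g).subset fun _ hw => hw.2).to_subtype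

/-- Left multiplication by the letter `k` on reduced words: it cancels against a leading `k`, and a
word of the maximal length `g` that does not start with `k` is left unchanged. -/
def letterFun (g : ℕ) (k : ι) (w : List ι) : List ι :=
  if w.head? = some k then w.tail else if w.length < g then k :: w else w

lemma letterFun_mem (k : ι) {w : List ι} (hw : w.IsChain (· ≠ ·) ∧ w.length ≤ g) :
    (letterFun g k w).IsChain (· ≠ ·) ∧ (letterFun g k w).length ≤ g := by
  unfold letterFun
  split_ifs with hhead hlen
  · exact ⟨hw.1.tail, by simpa using hw.2.trans (Nat.le_succ g)⟩
  · exact ⟨List.isChain_cons.2 ⟨fun y hy he => hhead (he ▸ hy), hw.1⟩, by simpa using hlen⟩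
  · exact hw

lemma letterFun_letterFun (k : ι) {w : List ι} (hw : w.IsChain (· ≠ ·) ∧ w.length ≤ g) :
    letterFun g k (letterFun g k w) = w := by
  cases w with
  | nil => by_cases hg : 0 < g <;> simp [letterFun, hg]
  | cons a w =>
    obtain ⟨hchain, hlen⟩ := hw
    rw [List.length_cons] at hlen
    by_cases h : a = k
    · subst h
      have hhead : w.head? ≠ some a := fun h => (List.isChain_cons.1 hchain).1 a h rfl
      simp [letterFun, hhead, Nat.lt_of_succ_le hlen]
    · by_cases hlt : w.length + 1 < g <;> simp [letterFun, h, hlt]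

/-- The involution of the reduced words of length at most `g` induced by a letter. -/
def letterPerm (g : ℕ) (k : ι) : Equiv.Perm (RedWord ι g) :=
  Function.Involutive.toPerm (fun w => ⟨letterFun g k w.1, letterFun_mem k w.2⟩)
    fun w => Subtype.ext (letterFun_letterFun k w.2)

lemma letterPerm_prod_apply_nil (w : List ι) (hw : w.IsChain (· ≠ ·)) (hl : w.length ≤ g) :
    ((w.map (letterPerm g)).prod (⟨[], by simp⟩ : RedWord ι g)).1 = w := by
  induction w with
  | nil => rfl
  | cons k w ih =>
    obtain ⟨hne, hchain⟩ := List.isChain_cons.1 hw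
    rw [List.length_cons] at hl
    have hhead : w.head? ≠ some k := fun h => hne k h rfl
    rw [List.map_cons, List.prod_cons]
    change letterFun g k _ = _
    rw [ih hchain (by omega)]
    simp [letterFun, hhead, Nat.lt_of_succ_le hl]

lemma freeUpTo_letterPerm (g : ℕ) : FreeUpTo (letterPerm (ι := ι) g) g := by
  intro w w' hw hl hw' hl' h
  rw [← letterPerm_prod_apply_nil w hw hl, ← letterPerm_prod_apply_nil w' hw' hl', h]

lemma FreeUpTo.of_map {Q Q' : Type*} [Group Q] [Group Q'] {s : ι → Q} (f : Q →* Q')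
    (h : FreeUpTo (fun k => f (s k)) g) : FreeUpTo s g := by
  intro w w' hw hl hw' hl' hprod
  refine h w w' hw hl hw' hl' ?_
  simpa [map_list_prod, Function.comp_def] using congrArg f hprod

lemma exists_freeUpTo_involutions.{u} (ι : Type u) [Finite ι] (g : ℕ) :
    ∃ (Q : Type u) (_ : Group Q) (_ : Fintype Q) (s : ι → Q),
      (∀ k, s k * s k = 1) ∧ FreeUpTo s g ∧ Subgroup.closure (Set.range s) = ⊤ := by
  let S : Set (Equiv.Perm (RedWord ι g)) := Set.range (letterPerm g)
  let s : ι → Subgroup.closure S := fun k => ⟨letterPerm g k, Subgroup.subset_closure ⟨k, rfl⟩⟩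
  refine ⟨Subgroup.closure S, inferInstance, Fintype.ofFinite _, s, fun k => ?_,
    .of_map (Subgroup.closure S).subtype (freeUpTo_letterPerm g), ?_⟩
  · exact Subtype.ext <| Equiv.ext fun w => Subtype.ext (letterFun_letterFun k w.2)
  · have hrange : Set.range s = Subtype.val ⁻¹' S := by
      ext x
      exact ⟨fun ⟨k, hk⟩ => ⟨k, congrArg Subtype.val hk⟩, fun ⟨k, hk⟩ => ⟨k, Subtype.ext hk⟩⟩
    rw [hrange]
    exact Subgroup.closure_closure_coe_preimage

end ExistsFreeUpTo

/-! ### Counting permutations -/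

section PermCounting

variable {J : Type*}

lemma injective_mul_swap (a : J) :
    Function.Injective fun q : Equiv.Perm J × J => (q.1 * Equiv.swap a q.2, q.1 a) := by
  rintro ⟨π, b⟩ ⟨π', b'⟩ h
  obtain ⟨hmul, happly⟩ := Prod.mk.inj h
  have hb : b = b' := by
    apply (π * Equiv.swap a b).injective
    calc (π * Equiv.swap a b) b = π a := by simp
      _ = π' a := happly
      _ = (π' * Equiv.swap a b') b' := by simp
      _ = (π * Equiv.swap a b) b' := by rw [hmul]
  subst hb
  exact Prod.ext (mul_left_injective _ hmul) rfl

variable [Fintype J]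

/-- The permutations mapping `X` into `Z`. -/
def permsMapping (X Z : Finset J) : Finset (Equiv.Perm J) :=
  Finset.univ.filter fun π => ∀ x ∈ X, π x ∈ Z

lemma mem_permsMapping {X Z : Finset J} {π : Equiv.Perm J} :
    π ∈ permsMapping X Z ↔ ∀ x ∈ X, π x ∈ Z := by
  simp [permsMapping]

lemma card_permsMapping_insert {X Z : Finset J} {a : J} (ha : a ∉ X) :
    (permsMapping (insert a X) Z).card * Fintype.card J ≤ (permsMapping X Z).card * Z.card := by
  rw [← Finset.card_univ, ← Finset.card_product, ← Finset.card_product]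
  refine Finset.card_le_card_of_injOn _ ?_ (injective_mul_swap a).injOn
  rintro ⟨π, b⟩ h
  simp only [Finset.coe_product, Set.mem_prod, Finset.mem_coe, mem_permsMapping,
    Finset.forall_mem_insert] at h ⊢
  refine ⟨fun x hx => ?_, h.1.1⟩
  rw [Equiv.Perm.mul_apply]
  by_cases hb : x = b
  · rw [hb, Equiv.swap_apply_right]
    exact h.1.1
  · rw [Equiv.swap_apply_of_ne_of_ne (fun h : x = a => ha (h ▸ hx)) hb]
    exact h.1.2 x hx

lemma card_permsMapping_mul_pow_le (X Z : Finset J) :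
    (permsMapping X Z).card * Fintype.card J ^ X.card ≤
      Fintype.card (Equiv.Perm J) * Z.card ^ X.card := by
  induction X using Finset.induction_on with
  | empty => simpa using Finset.card_le_univ _
  | insert a X ha ih =>
    rw [Finset.card_insert_of_notMem ha, pow_succ, pow_succ]
    calc _ = (permsMapping (insert a X) Z).card * Fintype.card J * Fintype.card J ^ X.card := by
            ring
      _ ≤ (permsMapping X Z).card * Z.card * Fintype.card J ^ X.card :=
            Nat.mul_le_mul_right _ (card_permsMapping_insert ha)
      _ = (permsMapping X Z).card * Fintype.card J ^ X.card * Z.card := by ring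
      _ ≤ Fintype.card (Equiv.Perm J) * Z.card ^ X.card * Z.card := Nat.mul_le_mul_right _ ih
      _ = _ := by ring

lemma card_permsMapping_le [Nonempty J] (X Z : Finset J) :
    ((permsMapping X Z).card : ℝ) ≤
      Fintype.card (Equiv.Perm J) * ((Z.card : ℝ) / Fintype.card J) ^ X.card := by
  rw [div_pow, ← mul_div_assoc, le_div_iff₀ (pow_pos (mod_cast Fintype.card_pos) _)]
  exact_mod_cast card_permsMapping_mul_pow_le X Z

end PermCounting

/-! ### Giant blocks of randomly linked classes -/

section Linked

lemma exists_subset_sum_mem_Ico {ι : Type*} (s : Finset ι) (f : ι → ℝ) {t : ℝ}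
    (hf : ∀ i ∈ s, f i < t) (hs : t ≤ ∑ i ∈ s, f i) (ht : 0 < t) :
    ∃ S ⊆ s, ∑ i ∈ S, f i ∈ Set.Ico t (2 * t) := by
  induction s using Finset.induction_on with
  | empty => exact absurd ht hs.not_gt
  | insert a s ha ih =>
    by_cases h : t ≤ ∑ i ∈ s, f i
    · obtain ⟨S, hS, hsum⟩ := ih (fun i hi => hf i (Finset.mem_insert_of_mem hi)) h
      exact ⟨S, hS.trans (Finset.subset_insert _ _), hsum⟩
    · refine ⟨_, subset_rfl, hs, ?_⟩
      rw [Finset.sum_insert ha]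
      linarith [hf a (Finset.mem_insert_self _ _)]

variable {J ι : Type*} (Gd : Finset J) (cl : J → ι)

/-- Two elements of `Gd` are linked if they have the same class or are matched by `ρ`. The
equivalence classes of the relation that this generates, which are the elements of
`Quot (Linked Gd cl ρ)`, are called blocks. -/
def Linked (ρ : Equiv.Perm J) (i i' : J) : Prop :=
  i ∈ Gd ∧ i' ∈ Gd ∧ (cl i = cl i' ∨ ρ i = i')

/-- The elements of `Gd` with class in `A`. -/
def classUnion (A : Finset ι) : Finset J := Gd.filter fun i => cl i ∈ A

variable {Gd cl}

lemma classUnion_image_filter_mk (ρ : Equiv.Perm J) (S : Finset (Quot (Linked Gd cl ρ))) :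
    classUnion Gd cl ((Gd.filter fun i => Quot.mk _ i ∈ S).image cl) =
      Gd.filter fun i => Quot.mk _ i ∈ S := by
  ext i
  simp only [classUnion, Finset.mem_filter, Finset.mem_image]
  refine ⟨fun ⟨hi, x, ⟨hx, hxS⟩, hxi⟩ => ⟨hi, ?_⟩, fun hi => ⟨hi.1, i, hi, rfl⟩⟩
  rwa [← Quot.sound (r := Linked Gd cl ρ) ⟨hx, hi, .inl hxi⟩]

variable [Fintype J]

lemma exists_unlinked_classUnion {ρ : Equiv.Perm J} {t : ℝ} (ht : 0 < t) (hG : 3 * t ≤ Gd.card)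
    (hρ : ∀ q : Quot (Linked Gd cl ρ), ((Gd.filter fun i => Quot.mk _ i = q).card : ℝ) < t) :
    ∃ A ⊆ Gd.image cl, t ≤ (classUnion Gd cl A).card ∧ t ≤ (Gd \ classUnion Gd cl A).card ∧
      ρ ∈ permsMapping (classUnion Gd cl A) (Gd \ classUnion Gd cl A)ᶜ := by
  let mk : J → Quot (Linked Gd cl ρ) := Quot.mk _
  have hsum (S : Finset (Quot (Linked Gd cl ρ))) :
      ∑ q ∈ S, ((Gd.filter fun i => mk i = q).card : ℝ) = (Gd.filter fun i => mk i ∈ S).card := by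
    exact_mod_cast Finset.sum_card_fiberwise_eq_card_filter Gd S mk
  have hall : (Gd.filter fun i => mk i ∈ Gd.image mk) = Gd :=
    Finset.filter_true_of_mem fun i hi => Finset.mem_image_of_mem _ hi
  obtain ⟨S, -, hlow, hup⟩ := exists_subset_sum_mem_Ico (Gd.image mk)
    (fun q => ((Gd.filter fun i => mk i = q).card : ℝ)) (fun q _ => hρ q)
    (by rw [hsum, hall]; linarith) ht
  rw [hsum] at hlow hup
  set X := Gd.filter fun i => mk i ∈ S
  have hX : classUnion Gd cl (X.image cl) = X := classUnion_image_filter_mk ρ S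
  have hsub : X ⊆ Gd := Finset.filter_subset _ _
  refine ⟨X.image cl, Finset.image_subset_image hsub, ?_⟩
  rw [hX]
  refine ⟨hlow, ?_, mem_permsMapping.2 fun i hi => Finset.mem_compl.2 fun hmem => ?_⟩
  · rw [Finset.cast_card_sdiff hsub]
    linarith
  · obtain ⟨hiG, hiS⟩ := Finset.mem_filter.1 hi
    obtain ⟨hρG, hρX⟩ := Finset.mem_sdiff.1 hmem
    have hmk : mk i = mk (ρ i) := Quot.sound ⟨hiG, hρG, .inr rfl⟩
    exact hρX (Finset.mem_filter.2 ⟨hρG, hmk ▸ hiS⟩)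

lemma card_permsMapping_compl_le [Nonempty J] {X Y : Finset J} {η : ℝ}
    (hX : η * Fintype.card J ≤ X.card) (hY : η * Fintype.card J ≤ Y.card) (hη : 0 < η) :
    ((permsMapping X Yᶜ).card : ℝ) ≤
      Fintype.card (Equiv.Perm J) * (1 - η) ^ ⌈η * Fintype.card J⌉₊ := by
  have hJ : (0 : ℝ) < Fintype.card J := by exact_mod_cast Fintype.card_pos
  have hdiv : (Yᶜ.card : ℝ) / Fintype.card J ≤ 1 - η := by
    rw [div_le_iff₀ hJ, Finset.card_compl, Nat.cast_sub (Finset.card_le_univ _)]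
    linarith
  have h0 : 0 ≤ 1 - η := le_trans (by positivity) hdiv
  refine (card_permsMapping_le _ _).trans ?_
  gcongr
  calc _ ≤ (1 - η) ^ X.card := by gcongr
    _ ≤ _ := pow_le_pow_of_le_one h0 (by linarith) (Nat.ceil_le.2 hX)

lemma card_perms_no_giant_le [Nonempty J] (Gd : Finset J) (cl : J → ι) {m : ℕ}
    (hm : (Gd.image cl).card ≤ m) {η : ℝ} (hη : 0 < η) (hG : 3 * η * Fintype.card J ≤ Gd.card) :
    ((Finset.univ.filter fun ρ : Equiv.Perm J => ∀ q : Quot (Linked Gd cl ρ),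
      ((Gd.filter fun i => Quot.mk _ i = q).card : ℝ) < η * Fintype.card J).card : ℝ) ≤
      Fintype.card (Equiv.Perm J) * (2 ^ m * (1 - η) ^ ⌈η * Fintype.card J⌉₊) := by
  have hJ : (0 : ℝ) < Fintype.card J := by exact_mod_cast Fintype.card_pos
  set P : ℝ := ↑(Fintype.card (Equiv.Perm J))
  set N : ℝ := ↑(Fintype.card J)
  let X := classUnion Gd cl
  let 𝒜 := (Gd.image cl).powerset.filter fun A => η * N ≤ (X A).card ∧ η * N ≤ (Gd \ X A).card
  have hη1 : 0 ≤ 1 - η := by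
    have hGN : (Gd.card : ℝ) ≤ N := Nat.cast_le.2 (Finset.card_le_univ Gd)
    nlinarith
  have h𝒜 : (𝒜.card : ℝ) ≤ 2 ^ m := by
    refine mod_cast (Finset.card_filter_le _ _).trans ?_
    rw [Finset.card_powerset]
    exact Nat.pow_le_pow_right two_pos hm
  calc _ ≤ ((𝒜.biUnion fun A => permsMapping (X A) (Gd \ X A)ᶜ).card : ℝ) := by
          refine mod_cast Finset.card_le_card fun ρ hρ => ?_
          obtain ⟨A, hA, hlow, hup, hmem⟩ := exists_unlinked_classUnion (t := η * N) (by positivity)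
            (by linarith) (Finset.mem_filter.1 hρ).2
          exact Finset.mem_biUnion.2
            ⟨A, Finset.mem_filter.2 ⟨Finset.mem_powerset.2 hA, hlow, hup⟩, hmem⟩
    _ ≤ ∑ A ∈ 𝒜, ((permsMapping (X A) (Gd \ X A)ᶜ).card : ℝ) := mod_cast Finset.card_biUnion_le
    _ ≤ ∑ A ∈ 𝒜, P * (1 - η) ^ ⌈η * N⌉₊ := Finset.sum_le_sum fun A hA =>
          card_permsMapping_compl_le (Finset.mem_filter.1 hA).2.1 (Finset.mem_filter.1 hA).2.2 hη
    _ = 𝒜.card * (P * (1 - η) ^ ⌈η * N⌉₊) := by simp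
    _ ≤ 2 ^ m * (P * (1 - η) ^ ⌈η * N⌉₊) := by gcongr
    _ = _ := by ring

end Linked

/-! ### Expanding permutations -/

section ExpandingPerms

variable {J : Type*} [Fintype J]

lemma choose_mul_pow_le (N m : ℕ) : (N.choose m : ℝ) * (m : ℝ) ^ m ≤ 3 ^ m * (N : ℝ) ^ m := by
  have hpow : (m : ℝ) ^ m / m.factorial ≤ 3 ^ m := by
    refine (Real.pow_div_factorial_le_exp (m : ℝ) (Nat.cast_nonneg m) m).trans ?_
    rw [← mul_one (m : ℝ), Real.exp_nat_mul]
    gcongr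
    linarith [Real.exp_one_lt_d9]
  calc (N.choose m : ℝ) * (m : ℝ) ^ m ≤ (N : ℝ) ^ m / m.factorial * (m : ℝ) ^ m := by
        gcongr
        exact Nat.choose_le_pow_div m N
    _ = (m : ℝ) ^ m / m.factorial * (N : ℝ) ^ m := by ring
    _ ≤ _ := by gcongr

lemma choose_mul_two_pow_mul_pow_le {N m : ℕ} (hm : 4 * m ≤ 3 * N) :
    (N.choose m : ℝ) * 2 ^ m * ((m : ℝ) / N) ^ (20 * m) ≤ (1 / 4) ^ m := by
  obtain rfl | hN := N.eq_zero_or_pos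
  · obtain rfl : m = 0 := by omega
    simp
  have hNr : (0 : ℝ) < N := by exact_mod_cast hN
  have hm' : (4 : ℝ) * m ≤ 3 * N := by exact_mod_cast hm
  have hx : (m : ℝ) / N ≤ 3 / 4 := by
    rw [div_le_iff₀ hNr]
    linarith
  calc (N.choose m : ℝ) * 2 ^ m * ((m : ℝ) / N) ^ (20 * m)
      = (N.choose m * ((m : ℝ) / N) ^ m) * (2 * ((m : ℝ) / N) ^ 19) ^ m := by ring
    _ ≤ 3 ^ m * (2 * (3 / 4) ^ 19) ^ m := by
        gcongr
        rw [div_pow, ← mul_div_assoc, div_le_iff₀ (by positivity)]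
        exact choose_mul_pow_le N m
    _ = (3 * (2 * (3 / 4) ^ 19)) ^ m := by rw [mul_pow 3]
    _ ≤ (1 / 4) ^ m := by
        gcongr
        norm_num

/-- The 30-tuples of permutations of `J` all of which map some set of size `s` into a common
superset of size at most `3 * s / 2`. -/
def contractingPerms (J : Type*) [Fintype J] (s : ℕ) : Finset (Fin 30 → Equiv.Perm J) :=
  (Finset.univ.powersetCard (s + s / 2)).biUnion fun Z =>
    (Z.powersetCard s).biUnion fun S => Fintype.piFinset fun _ => permsMapping S Z

lemma mem_contractingPerms {f : Fin 30 → Equiv.Perm J} {S : Finset J}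
    (hS : 2 * S.card ≤ Fintype.card J) (hf : 2 * ∑ j, ((S.image (f j)) \ S).card < S.card) :
    f ∈ contractingPerms J S.card := by
  let T := Finset.univ.biUnion fun j => (S.image (f j)) \ S
  have hT : T.card ≤ ∑ j, ((S.image (f j)) \ S).card := Finset.card_biUnion_le
  obtain ⟨Z, hSTZ, hZ⟩ := Finset.exists_superset_card_eq (s := S ∪ T) (n := S.card + S.card / 2)
    ((Finset.card_union_le _ _).trans (by omega)) (by omega)
  refine Finset.mem_biUnion.2 ⟨Z, Finset.mem_powersetCard.2 ⟨Finset.subset_univ _, hZ⟩,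
    Finset.mem_biUnion.2 ⟨S, Finset.mem_powersetCard.2 ⟨Finset.subset_union_left.trans hSTZ, rfl⟩,
      Fintype.mem_piFinset.2 fun j => mem_permsMapping.2 fun x hx => hSTZ ?_⟩⟩
  by_cases h : f j x ∈ S
  · exact Finset.mem_union_left _ h
  · exact Finset.mem_union_right _ (Finset.mem_biUnion.2 ⟨j, Finset.mem_univ _,
      Finset.mem_sdiff.2 ⟨Finset.mem_image_of_mem _ hx, h⟩⟩)

lemma card_piFinset_permsMapping_le [Nonempty J] {S Z : Finset J}
    (hZ : Z.card = S.card + S.card / 2) :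
    ((Fintype.piFinset fun _ : Fin 30 => permsMapping S Z).card : ℝ) ≤
      (Fintype.card (Equiv.Perm J) : ℝ) ^ 30 *
        ((Z.card : ℝ) / Fintype.card J) ^ (20 * Z.card) := by
  have hJ : (0 : ℝ) < Fintype.card J := by exact_mod_cast Fintype.card_pos
  set x : ℝ := (Z.card : ℝ) / Fintype.card J
  have hx : x ≤ 1 := div_le_one_of_le₀ (mod_cast Finset.card_le_univ Z) hJ.le
  rw [Fintype.card_piFinset]
  simp only [Finset.prod_const, Finset.card_univ, Fintype.card_fin, Nat.cast_pow]
  calc ((permsMapping S Z).card : ℝ) ^ 30 ≤ (Fintype.card (Equiv.Perm J) * x ^ S.card) ^ 30 := by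
        gcongr
        exact card_permsMapping_le S Z
    _ = Fintype.card (Equiv.Perm J) ^ 30 * x ^ (30 * S.card) := by ring
    _ ≤ Fintype.card (Equiv.Perm J) ^ 30 * x ^ (20 * Z.card) := by
        gcongr ?_ * ?_
        exact pow_le_pow_of_le_one (by positivity) hx (by omega)

lemma card_contractingPerms_le [Nonempty J] {s : ℕ} (hs : 2 * s ≤ Fintype.card J) :
    ((contractingPerms J s).card : ℝ) ≤ (Fintype.card (Equiv.Perm J) : ℝ) ^ 30 * (1 / 4) ^ s := by
  set m := s + s / 2
  set N := Fintype.card J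
  set P := Fintype.card (Equiv.Perm J)
  have hZ : ∀ Z ∈ (Finset.univ : Finset J).powersetCard m,
      (((Z.powersetCard s).biUnion fun S =>
        Fintype.piFinset fun _ : Fin 30 => permsMapping S Z).card : ℝ) ≤
        2 ^ m * (P ^ 30 * ((m : ℝ) / N) ^ (20 * m)) := by
    intro Z hZ
    rw [Finset.mem_powersetCard_univ] at hZ
    refine (Nat.cast_le.2 Finset.card_biUnion_le).trans ?_
    rw [Nat.cast_sum]
    refine (Finset.sum_le_card_nsmul _ _ (P ^ 30 * ((m : ℝ) / N) ^ (20 * m))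
      fun S hS => ?_).trans ?_
    · rw [← hZ]
      exact card_piFinset_permsMapping_le (by rw [hZ, (Finset.mem_powersetCard.1 hS).2])
    · rw [Finset.card_powersetCard, hZ, nsmul_eq_mul]
      gcongr
      exact_mod_cast Nat.choose_le_two_pow m s
  calc ((contractingPerms J s).card : ℝ)
      ≤ N.choose m * (2 ^ m * (P ^ 30 * ((m : ℝ) / N) ^ (20 * m))) := by
        refine (Nat.cast_le.2 Finset.card_biUnion_le).trans ?_
        rw [Nat.cast_sum]
        refine (Finset.sum_le_card_nsmul _ _ _ hZ).trans_eq ?_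
        rw [Finset.card_powersetCard, Finset.card_univ, nsmul_eq_mul]
    _ = P ^ 30 * (N.choose m * 2 ^ m * ((m : ℝ) / N) ^ (20 * m)) := by ring
    _ ≤ P ^ 30 * (1 / 4) ^ m := by
        gcongr
        exact choose_mul_two_pow_mul_pow_le (by omega)
    _ ≤ P ^ 30 * (1 / 4) ^ s := by
        gcongr ?_ * ?_
        exact pow_le_pow_of_le_one (by norm_num) (by norm_num) (by omega)

lemma sum_Icc_one_quarter_pow_lt_one (N : ℕ) : ∑ s ∈ Finset.Icc 1 N, (1 / 4 : ℝ) ^ s < 1 := by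
  have hpos : (0 : ℝ) < (1 / 4) ^ (N + 1) := by positivity
  rw [← Finset.Ico_add_one_right_eq_Icc, geom_sum_Ico (by norm_num) (by omega)]
  norm_num
  linarith

/-- A union bound over the sets that fail to expand. -/
lemma exists_expanding_perms (J : Type*) [Fintype J] :
    ∃ f : Fin 30 → Equiv.Perm J, ∀ S : Finset J, 2 * S.card ≤ Fintype.card J →
      S.card ≤ 2 * ∑ j, ((S.image (f j)) \ S).card := by
  by_contra! hcon
  obtain ⟨S₀, -, hS₀⟩ := hcon 1
  have : Nonempty J := (Finset.card_pos.1 (Nat.zero_lt_of_lt hS₀)).to_type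
  set N := Fintype.card J
  set P := Fintype.card (Equiv.Perm J)
  let sizes := (Finset.Icc 1 N).filter fun s => 2 * s ≤ N
  have hcover : Finset.univ ⊆ sizes.biUnion (contractingPerms J) := by
    intro f _
    obtain ⟨S, hS, hf⟩ := hcon f
    exact Finset.mem_biUnion.2 ⟨S.card, Finset.mem_filter.2 ⟨Finset.mem_Icc.2 (by omega), hS⟩,
      mem_contractingPerms hS hf⟩
  have hP : (0 : ℝ) < (P : ℝ) ^ 30 := pow_pos (mod_cast Fintype.card_pos) _
  have hlt : (P : ℝ) ^ 30 < (P : ℝ) ^ 30 := by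
    calc (P : ℝ) ^ 30 = (Finset.univ : Finset (Fin 30 → Equiv.Perm J)).card := by
          simp [P, Finset.card_univ]
      _ ≤ ∑ s ∈ sizes, ((contractingPerms J s).card : ℝ) := by
          exact_mod_cast (Finset.card_le_card hcover).trans Finset.card_biUnion_le
      _ ≤ ∑ s ∈ sizes, (P : ℝ) ^ 30 * (1 / 4) ^ s := Finset.sum_le_sum fun s hs =>
          card_contractingPerms_le (Finset.mem_filter.1 hs).2
      _ ≤ ∑ s ∈ Finset.Icc 1 N, (P : ℝ) ^ 30 * (1 / 4) ^ s :=
          Finset.sum_le_sum_of_subset_of_nonneg (Finset.filter_subset _ _)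
            fun _ _ _ => by positivity
      _ = (P : ℝ) ^ 30 * ∑ s ∈ Finset.Icc 1 N, (1 / 4 : ℝ) ^ s := by rw [Finset.mul_sum]
      _ < (P : ℝ) ^ 30 := mul_lt_of_lt_one_right hP (sum_Icc_one_quarter_pow_lt_one N)
  exact hlt.false

end ExpandingPerms

/-! ### Growth of nonbacktracking walks avoiding an edge -/

section Growth

variable {d : ℕ} {Q : Type*} [Group Q]

/-- `x` is an end of the edge of colour `kc` at `xc` in the Cayley graph of the involutions `s`.
This edge is going to be cut. -/
def IsCutEnd (s : Fin d → Q) (xc : Q) (kc : Fin d) (x : Q) : Prop :=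
  x = xc ∨ x = xc * s kc

/-- `(x, k)` is one of the two half-edges of the cut edge. -/
def IsCut (s : Fin d → Q) (xc : Q) (kc : Fin d) (x : Q) (k : Fin d) : Prop :=
  k = kc ∧ IsCutEnd s xc kc x

/-- The colours of the uncut edges at `x` by which a nonbacktracking walk that arrived through
colour `i` can continue. -/
def nextColours (s : Fin d → Q) (xc : Q) (kc : Fin d) (x : Q) (i : Fin d) : Finset (Fin d) :=
  Finset.univ.filter fun j => j ≠ i ∧ ¬ IsCut s xc kc x j

/-- The sum of `f` over the uncut nonbacktracking continuations. -/
def nextSum (s : Fin d → Q) (xc : Q) (kc : Fin d) (f : Q → Fin d → ℝ) (x : Q) (i : Fin d) : ℝ :=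
  ∑ j ∈ nextColours s xc kc x i, f (x * s j) j

/-- The number of nonbacktracking walks of length `r` avoiding the cut edge. -/
def walkCount (s : Fin d → Q) (xc : Q) (kc : Fin d) : ℕ → Q → Fin d → ℝ
  | 0, _, _ => 1
  | r + 1, x, i => nextSum s xc kc (walkCount s xc kc r) x i

/-- The number of such walks of length `r` that can be continued through the cut edge. -/
def exitCount (s : Fin d → Q) (xc : Q) (kc : Fin d) : ℕ → Q → Fin d → ℝ
  | 0, x, i => if kc ≠ i ∧ IsCutEnd s xc kc x then 1 else 0
  | r + 1, x, i => nextSum s xc kc (exitCount s xc kc r) x i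

/-- The reduced word `w` leads from `x` to an end of the cut edge, and `w` followed by the colour
of that edge is still reduced. -/
def IsExitWord (s : Fin d → Q) (xc : Q) (kc : Fin d) (x : Q) (w : List (Fin d)) : Prop :=
  (w ++ [kc]).IsChain (· ≠ ·) ∧ IsCutEnd s xc kc (x * (w.map s).prod)

variable {s : Fin d → Q} {xc : Q} {kc : Fin d}

lemma mem_nextColours {x : Q} {i j : Fin d} :
    j ∈ nextColours s xc kc x i ↔ j ≠ i ∧ ¬ IsCut s xc kc x j := by
  simp [nextColours]

lemma card_nextColours (x : Q) (i : Fin d) :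
    ((nextColours s xc kc x i).card : ℝ) = (d : ℝ) - 1 - exitCount s xc kc 0 x i := by
  have hcard : ((Finset.univ.erase i).card : ℝ) = (d : ℝ) - 1 := by
    rw [Finset.cast_card_erase_of_mem (Finset.mem_univ _), Finset.card_univ, Fintype.card_fin]
  by_cases h : kc ≠ i ∧ IsCutEnd s xc kc x
  · have heq : nextColours s xc kc x i = (Finset.univ.erase i).erase kc := by
      ext j
      simp only [mem_nextColours, IsCut, Finset.mem_univ, Finset.mem_erase]
      tauto
    rw [heq, Finset.cast_card_erase_of_mem (by simp [h.1]), hcard, exitCount, if_pos h]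
  · have heq : nextColours s xc kc x i = Finset.univ.erase i := by
      ext j
      simp only [mem_nextColours, IsCut, Finset.mem_univ, Finset.mem_erase, and_true,
        and_iff_left_iff_imp]
      rintro hj ⟨rfl, hend⟩
      exact h ⟨hj, hend⟩
    rw [heq, hcard, exitCount, if_neg h, sub_zero]

lemma walkCount_succ (r : ℕ) (x : Q) (i : Fin d) :
    walkCount s xc kc (r + 1) x i =
      ((d : ℝ) - 1) * walkCount s xc kc r x i - exitCount s xc kc r x i := by
  induction r generalizing x i with
  | zero =>
    simp only [walkCount, nextSum, Finset.sum_const, nsmul_eq_mul, mul_one]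
    exact card_nextColours x i
  | succ r ih =>
    change ∑ j ∈ nextColours s xc kc x i, walkCount s xc kc (r + 1) (x * s j) j = _
    rw [Finset.sum_congr rfl fun j _ => ih (x * s j) j,
      Finset.sum_sub_distrib, ← Finset.mul_sum]
    rfl

lemma exitCount_nonneg (r : ℕ) (x : Q) (i : Fin d) : 0 ≤ exitCount s xc kc r x i := by
  induction r generalizing x i with
  | zero => unfold exitCount; split_ifs <;> norm_num
  | succ r ih =>
    rw [exitCount]
    exact Finset.sum_nonneg fun j _ => ih (x * s j) j

lemma sum_exitCount_succ (r : ℕ) (x : Q) (i : Fin d) :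
    ∑ t ∈ Finset.range (r + 1), exitCount s xc kc t x i =
      exitCount s xc kc 0 x i + ∑ j ∈ nextColours s xc kc x i,
        ∑ t ∈ Finset.range r, exitCount s xc kc t (x * s j) j := by
  rw [Finset.sum_range_succ', add_comm, Finset.sum_comm]
  rfl

lemma isExitWord_nil {x : Q} : IsExitWord s xc kc x [] ↔ IsCutEnd s xc kc x := by
  simp [IsExitWord]

lemma IsExitWord.cons {x : Q} {j : Fin d} {w : List (Fin d)} (hw : IsExitWord s xc kc (x * s j) w)
    (hj : (j :: (w ++ [kc])).IsChain (· ≠ ·)) : IsExitWord s xc kc x (j :: w) :=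
  ⟨hj, by simpa [mul_assoc] using hw.2⟩

lemma exists_isExitWord_of_sum_exitCount_ne_zero (r : ℕ) (x : Q) (i : Fin d)
    (h : ∑ t ∈ Finset.range r, exitCount s xc kc t x i ≠ 0) :
    ∃ w, IsExitWord s xc kc x w ∧ (i :: (w ++ [kc])).IsChain (· ≠ ·) ∧ w.length < r := by
  induction r generalizing x i with
  | zero => simp at h
  | succ r ih =>
    rw [sum_exitCount_succ] at h
    by_cases hx : kc ≠ i ∧ IsCutEnd s xc kc x
    · exact ⟨[], isExitWord_nil.2 hx.2, by simpa using hx.1.symm, by simp⟩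
    · rw [exitCount, if_neg hx, zero_add] at h
      obtain ⟨j, hj, hne⟩ := Finset.exists_ne_zero_of_sum_ne_zero h
      obtain ⟨w, hw, hchain, hlen⟩ := ih _ _ hne
      exact ⟨j :: w, hw.cons hchain,
        List.isChain_cons_cons.2 ⟨(mem_nextColours.1 hj).1.symm, hchain⟩, by simpa using hlen⟩

lemma IsExitWord.eq {g : ℕ} (hs : ∀ k, s k * s k = 1) (hfree : FreeUpTo s g) {x : Q}
    {w w' : List (Fin d)} (hw : IsExitWord s xc kc x w) (hl : w.length < g)
    (hw' : IsExitWord s xc kc x w') (hl' : w'.length < g) : w = w' := by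
  have hcw := (List.isChain_append.1 hw.1).1
  have hcw' := (List.isChain_append.1 hw'.1).1
  have same (h : x * (w.map s).prod = x * (w'.map s).prod) : w = w' :=
    hfree w w' hcw hl.le hcw' hl'.le (mul_left_cancel h)
  have opposite (h : x * (w.map s).prod = x * ((w'.map s).prod * s kc)) : w = w' := by
    have h := mul_left_cancel h
    have h' : (w'.map s).prod = (w.map s).prod * s kc := by rw [h, mul_assoc, hs, mul_one]
    have hlen := congrArg List.length <|
      hfree w (w' ++ [kc]) hcw hl.le hw'.1 (by simpa using hl') (by simpa using h)
    have hlen' := congrArg List.length <|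
      hfree w' (w ++ [kc]) hcw' hl'.le hw.1 (by simpa using hl) (by simpa using h')
    simp only [List.length_append, List.length_singleton] at hlen hlen'
    omega
  rcases hw.2 with h | h <;> rcases hw'.2 with h' | h'
  · exact same (h.trans h'.symm)
  · refine opposite ?_
    rw [← mul_assoc, h', h, mul_assoc, hs, mul_one]
  · refine opposite ?_
    rw [← mul_assoc, h', h]
  · exact same (h.trans h'.symm)

lemma sum_exitCount_le_one {g : ℕ} (hs : ∀ k, s k * s k = 1) (hfree : FreeUpTo s g) (r : ℕ)
    (hr : r ≤ g) (x : Q) (i : Fin d) :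
    ∑ t ∈ Finset.range r, exitCount s xc kc t x i ≤ 1 := by
  induction r generalizing x i with
  | zero => simp
  | succ r ih =>
    rw [sum_exitCount_succ]
    have hword (j : Fin d) (hj : ∑ t ∈ Finset.range r, exitCount s xc kc t (x * s j) j ≠ 0) :
        ∃ w, IsExitWord s xc kc x (j :: w) ∧ (j :: w).length < g := by
      obtain ⟨w, hw, hchain, hlen⟩ := exists_isExitWord_of_sum_exitCount_ne_zero _ _ _ hj
      exact ⟨w, hw.cons hchain, by simp only [List.length_cons]; omega⟩
    by_cases hx : kc ≠ i ∧ IsCutEnd s xc kc x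
    · rw [exitCount, if_pos hx, Finset.sum_eq_zero, add_zero]
      intro j _
      by_contra hj
      obtain ⟨w, hw, hlen⟩ := hword j hj
      exact List.cons_ne_nil _ _ <| hw.eq hs hfree hlen (isExitWord_nil.2 hx.2) (by simp; omega)
    · rw [exitCount, if_neg hx, zero_add]
      by_contra! hlt
      obtain ⟨j, hj, hne⟩ := Finset.exists_ne_zero_of_sum_ne_zero (one_pos.trans hlt).ne'
      refine hlt.not_ge ((Finset.sum_eq_single_of_mem j hj fun j' _ hjj => ?_).trans_le
        (ih (by omega) _ _))
      by_contra hne'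
      obtain ⟨w, hw, hlen⟩ := hword j hne
      obtain ⟨w', hw', hlen'⟩ := hword j' hne'
      exact hjj (List.cons.inj (hw'.eq hs hfree hlen' hw hlen)).1

lemma walkCount_ge (hd : 2 ≤ d) (r : ℕ) (x : Q) (i : Fin d) :
    ((d : ℝ) - 1) ^ r * (1 - (∑ t ∈ Finset.range r, exitCount s xc kc t x i) / ((d : ℝ) - 1)) ≤
      walkCount s xc kc r x i := by
  have hd' : (1 : ℝ) ≤ (d : ℝ) - 1 := by
    have : (2 : ℝ) ≤ d := by exact_mod_cast hd
    linarith
  induction r with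
  | zero => simp [walkCount]
  | succ r ih =>
    rw [walkCount_succ, Finset.sum_range_succ, pow_succ]
    have hexit := exitCount_nonneg (s := s) (xc := xc) (kc := kc) r x i
    set D := (d : ℝ) - 1
    set S := ∑ t ∈ Finset.range r, exitCount s xc kc t x i
    set e := exitCount s xc kc r x i
    calc D ^ r * D * (1 - (S + e) / D) = D * (D ^ r * (1 - S / D)) - D ^ r * e := by
          field_simp
          ring
      _ ≤ D * walkCount s xc kc r x i - e := by
          gcongr
          exact le_mul_of_one_le_left hexit (one_le_pow₀ hd')

lemma walkCount_le (r : ℕ) (x : Q) (i : Fin d) :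
    walkCount s xc kc r x i ≤ ((d : ℝ) - 1) ^ r := by
  have hd : (0 : ℝ) ≤ (d : ℝ) - 1 := sub_nonneg.2 (mod_cast i.pos)
  induction r with
  | zero => simp [walkCount]
  | succ r ih =>
    rw [walkCount_succ, pow_succ']
    linarith [exitCount_nonneg (s := s) (xc := xc) (kc := kc) r x i,
      mul_le_mul_of_nonneg_left ih hd]

lemma half_pow_le_walkCount {g : ℕ} (hs : ∀ k, s k * s k = 1) (hfree : FreeUpTo s g) (hd : 3 ≤ d)
    {r : ℕ} (hr : r ≤ g) (x : Q) (i : Fin d) :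
    ((d : ℝ) - 1) ^ r / 2 ≤ walkCount s xc kc r x i := by
  have hD : (2 : ℝ) ≤ (d : ℝ) - 1 := by
    have : (3 : ℝ) ≤ d := by exact_mod_cast hd
    linarith
  refine le_trans ?_ (walkCount_ge (by omega) r x i)
  rw [div_eq_mul_one_div]
  gcongr
  have hhalf : (∑ t ∈ Finset.range r, exitCount s xc kc t x i) / ((d : ℝ) - 1) ≤ 1 / 2 := by
    rw [div_le_iff₀ (by linarith)]
    linarith [sum_exitCount_le_one (xc := xc) (kc := kc) hs hfree r hr x i]
  linarith

lemma exitCount_le_one {g : ℕ} (hs : ∀ k, s k * s k = 1) (hfree : FreeUpTo s g) {r : ℕ}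
    (hr : r < g) (x : Q) (i : Fin d) : exitCount s xc kc r x i ≤ 1 :=
  (Finset.single_le_sum (f := fun t => exitCount s xc kc t x i)
    (fun t _ => exitCount_nonneg t x i) (Finset.self_mem_range_succ r)).trans
      (sum_exitCount_le_one hs hfree (r + 1) hr x i)

/-- The weight is given by the numbers of uncut nonbacktracking walks of a large fixed length; by
the large girth, very few walks meet the cut edge. -/
lemma exists_supercritical_weight (d : ℕ) (hd : 3 ≤ d) (p : ℝ) (hp : 1 / ((d : ℝ) - 1) < p)
    (hp1 : p ≤ 1) : ∃ g : ℕ, ∃ η > (0 : ℝ), ∃ H : ℝ, ∀ (Q : Type*) [Group Q] (s : Fin d → Q),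
      (∀ k, s k * s k = 1) → FreeUpTo s g → ∀ (xc : Q) (kc : Fin d),
      ∃ h : Q → Fin d → ℝ, (∀ x i, 1 / 2 ≤ h x i) ∧ (∀ x i, h x i ≤ H) ∧
        ∀ x i, (1 + η) * h x i ≤ p * nextSum s xc kc h x i := by
  have hD : (2 : ℝ) ≤ (d : ℝ) - 1 := by
    have : (3 : ℝ) ≤ d := by exact_mod_cast hd
    linarith
  set D := (d : ℝ) - 1
  obtain ⟨η, hη⟩ : ∃ η, p * D = 1 + 2 * η := ⟨(p * D - 1) / 2, by ring⟩
  have hηpos : 0 < η := by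
    rw [div_lt_iff₀ (by linarith)] at hp
    linarith
  obtain ⟨r, hr⟩ := pow_unbounded_of_one_lt (2 / η) (by linarith : (1 : ℝ) < D)
  refine ⟨r + 1, η, hηpos, D ^ r, fun Q _ s hs hfree xc kc => ?_⟩
  have hge (x i) : D ^ r / 2 ≤ walkCount s xc kc r x i :=
    half_pow_le_walkCount hs hfree hd (Nat.le_succ r) x i
  refine ⟨walkCount s xc kc r, fun x i => ?_, fun x i => walkCount_le r x i, fun x i => ?_⟩
  · linarith [hge x i, one_le_pow₀ (n := r) (by linarith : 1 ≤ D)]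
  have hexit : p * exitCount s xc kc r x i ≤ 1 :=
    mul_le_one₀ hp1 (exitCount_nonneg r x i) (exitCount_le_one hs hfree (Nat.lt_succ_self r) x i)
  have hwalk : 1 ≤ η * walkCount s xc kc r x i := by
    rw [div_lt_iff₀ hηpos] at hr
    nlinarith [hge x i]
  calc (1 + η) * walkCount s xc kc r x i
      ≤ (1 + 2 * η) * walkCount s xc kc r x i - 1 := by linarith
    _ ≤ p * D * walkCount s xc kc r x i - p * exitCount s xc kc r x i := by rw [hη]; linarith
    _ = p * nextSum s xc kc (walkCount s xc kc r) x i := by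
        rw [← walkCount, walkCount_succ]
        ring

end Growth

/-! ### Covers of Cayley graphs -/

/-- The Cayley graph of `Q` with respect to involutions `s k`, with an orientation of its edges.
The edge of colour `k` at `x` joins `x` to `x * s k`, and `o` is `true` at exactly one of its ends,
its initial vertex. -/
structure OrientedCayley (d : ℕ) (Q : Type*) [Group Q] where
  s : Fin d → Q
  s_mul : ∀ k, s k * s k = 1
  o : Q → Fin d → Bool
  o_mul : ∀ x k, o (x * s k) k = !o x k

/-- Voltage data for a cover, with fibre `I`, of an oriented Cayley graph: `π x k` permutes the
fibre along the edge of colour `k` with initial vertex `x`. -/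
structure Cover (d : ℕ) (Q I : Type*) [Group Q] extends OrientedCayley d Q where
  π : Q → Fin d → Equiv.Perm I

lemma OrientedCayley.mul_s_mul_s {d : ℕ} {Q : Type*} [Group Q] (C : OrientedCayley d Q) (x : Q)
    (k : Fin d) :
    x * C.s k * C.s k = x := by
  rw [mul_assoc, C.s_mul, mul_one]

namespace Cover

variable {d : ℕ} {Q I : Type*} [Group Q] (C : Cover d Q I)

/-- The neighbour of `v` along the edge of colour `k`. -/
def move (k : Fin d) (v : I × Q) : I × Q :=
  (if C.o v.2 k then C.π v.2 k v.1 else (C.π (v.2 * C.s k) k)⁻¹ v.1, v.2 * C.s k)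

/-- The name of the edge of colour `k` at `v`: its positively oriented end and its colour. -/
def label (k : Fin d) (v : I × Q) : (I × Q) × Fin d :=
  (if C.o v.2 k then v else C.move k v, k)

lemma move_snd (k : Fin d) (v : I × Q) : (C.move k v).2 = v.2 * C.s k := rfl

lemma move_move (k : Fin d) (v : I × Q) : C.move k (C.move k v) = v := by
  cases h : C.o v.2 k <;> simp [move, C.o_mul, C.mul_s_mul_s, h]

lemma move_ne (k : Fin d) (v : I × Q) : C.move k v ≠ v := by
  intro h
  have hfix : v.2 * C.s k = v.2 := congrArg Prod.snd h
  simpa [hfix] using C.o_mul v.2 k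

lemma label_move (k : Fin d) (v : I × Q) : C.label k (C.move k v) = C.label k v := by
  cases h : C.o v.2 k <;> simp [label, C.move_move, C.move_snd, C.o_mul, h]

lemma move_colour_injective (hs : Function.Injective C.s) (v : I × Q) :
    Function.Injective fun k => C.move k v := by
  intro k k' h
  exact hs (mul_left_cancel (congrArg Prod.snd h))

variable {W : Type*} (e : W ≃ I × Q)

/-- The covering graph, with its vertices renamed by `e`. -/
def graph : SimpleGraph W where
  Adj v w := ∃ k, e w = C.move k (e v)
  symm := ⟨by
    rintro v w ⟨k, hk⟩
    exact ⟨k, by rw [hk, C.move_move]⟩⟩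
  loopless := ⟨by
    rintro v ⟨k, hk⟩
    exact C.move_ne k _ hk.symm⟩

/-- The spanning subgraph of the covering graph formed by the edges whose names `ω` retains. -/
def openGraph (ω : (I × Q) × Fin d → Bool) : SimpleGraph W where
  Adj v w := ∃ k, e w = C.move k (e v) ∧ ω (C.label k (e v)) = true
  symm := ⟨by
    rintro v w ⟨k, hk, hω⟩
    exact ⟨k, by rw [hk, C.move_move], by rw [hk, C.label_move, hω]⟩⟩
  loopless := ⟨by
    rintro v ⟨k, hk, -⟩
    exact C.move_ne k _ hk.symm⟩

/-- The edge of colour `k` at `v` in the covering graph. -/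
def edge (k : Fin d) (v : I × Q) : Sym2 W := s(e.symm v, e.symm (C.move k v))

variable {e}

lemma graph_adj {v w : W} : (C.graph e).Adj v w ↔ ∃ k, e w = C.move k (e v) := Iff.rfl

lemma mk_eq_edge {v w : W} {k : Fin d} (h : e w = C.move k (e v)) : s(v, w) = C.edge e k (e v) := by
  rw [edge, ← h, e.symm_apply_apply, e.symm_apply_apply]

lemma exists_eq_edge {a : Sym2 W} (ha : a ∈ (C.graph e).edgeSet) : ∃ k v, a = C.edge e k v := by
  induction a using Sym2.ind with
  | _ v w =>
    obtain ⟨k, hk⟩ := ha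
    exact ⟨k, e v, C.mk_eq_edge hk⟩

lemma edge_move (k : Fin d) (v : I × Q) : C.edge e k (C.move k v) = C.edge e k v := by
  rw [edge, edge, C.move_move, Sym2.eq_swap]

lemma edge_label (k : Fin d) (v : I × Q) :
    C.edge e (C.label k v).2 (C.label k v).1 = C.edge e k v := by
  cases h : C.o v.2 k <;> simp [label, h, C.edge_move]

lemma edge_eq_edge_iff (hs : Function.Injective C.s) {k k' : Fin d} {v v' : I × Q} :
    C.edge e k v = C.edge e k' v' ↔ C.label k v = C.label k' v' := by
  refine ⟨fun h => ?_, fun h => by rw [← C.edge_label k v, h, C.edge_label]⟩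
  simp only [edge, Sym2.eq_iff, EmbeddingLike.apply_eq_iff_eq] at h
  rcases h with ⟨rfl, h⟩ | ⟨rfl, h⟩
  · rw [C.move_colour_injective hs v h]
  · have hk : k = k' := C.move_colour_injective hs _ (h.trans (C.move_move k' v').symm)
    rw [hk, C.label_move]

lemma ncard_neighborSet (hs : Function.Injective C.s) (v : W) :
    ((C.graph e).neighborSet v).ncard = d := by
  have hrange : (C.graph e).neighborSet v = Set.range fun k => e.symm (C.move k (e v)) := by
    ext w
    simp only [SimpleGraph.mem_neighborSet, graph_adj, Set.mem_range, e.symm_apply_eq,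
      eq_comm (a := e w)]
  rw [hrange, ← Set.image_univ, Set.ncard_image_of_injective, Set.ncard_univ, Nat.card_fin]
  exact e.symm.injective.comp (C.move_colour_injective hs (e v))

end Cover

section CutCard

variable {d : ℕ} {Q I : Type*} [Group Q] (C : Cover d Q I) {W : Type} (e : W ≃ I × Q)
  [Fintype W] [DecidableEq W] [Fintype I] [Fintype Q]

lemma Cover.card_exit_le_cutCard (hs : Function.Injective C.s) (S : Finset W) :
    ((Finset.univ : Finset ((I × Q) × Fin d)).filter
      fun q => e.symm q.1 ∈ S ∧ e.symm (C.move q.2 q.1) ∉ S).card ≤ cutCard (C.graph e) S := by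
  refine Finset.card_le_card_of_injOn (fun q => C.edge e q.2 q.1) ?_ ?_
  · rintro ⟨v, k⟩ hq
    simp only [Finset.coe_filter, Finset.mem_univ, true_and, Set.mem_ofPred_eq] at hq
    simp only [edgeFinset', Finset.coe_filter, Finset.mem_filter, Finset.mem_univ, true_and,
      Set.mem_ofPred_eq]
    exact ⟨⟨k, by simp⟩, _, hq.1, _, hq.2, rfl⟩
  · rintro ⟨v, k⟩ hq ⟨v', k'⟩ hq' h
    simp only [Finset.coe_filter, Finset.mem_univ, true_and, Set.mem_ofPred_eq] at hq hq'
    simp only [Cover.edge, Sym2.eq_iff, EmbeddingLike.apply_eq_iff_eq] at h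
    rcases h with ⟨rfl, h⟩ | ⟨rfl, -⟩
    · rw [C.move_colour_injective hs v h]
    · exact absurd hq.1 hq'.2

end CutCard

/-! ### Percolation on a cover -/

section PercProb

open MeasureTheory

variable {p : unitInterval}

lemma bernoulliPi_real_decide_mem {E : Type*} [DecidableEq E] {s t : Finset E} (hst : s ⊆ t) :
    (bernoulliPi t p).real {fun a => decide (a.1 ∈ s)}
      = (p : ℝ) ^ s.card * (1 - p) ^ (t.card - s.card) := by
  simp only [bernoulliPi_real_singleton, decide_eq_true_eq, Finset.univ_eq_attach]
  rw [Finset.prod_attach t fun a => if a ∈ s then (p : ℝ) else 1 - p, Finset.prod_ite,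
    Finset.prod_const, Finset.prod_const, Finset.filter_mem_eq_inter, Finset.inter_eq_right.2 hst,
    Finset.filter_notMem_eq_sdiff, Finset.card_sdiff_of_subset hst]

lemma percProb_eq_bernoulliPi_real {W : Type} [Fintype W] (G : SimpleGraph W)
    (P : SimpleGraph W → Prop) :
    percProb G p P = (bernoulliPi (edgeFinset' G) p).real {ω |
      P (SimpleGraph.fromEdgeSet {a | ∃ h : a ∈ edgeFinset' G, ω ⟨a, h⟩ = true})} := by
  set A : (edgeFinset' G → Bool) → Prop := fun ω =>
    P (SimpleGraph.fromEdgeSet {a | ∃ h : a ∈ edgeFinset' G, ω ⟨a, h⟩ = true})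
  have hfilter : {ω | A ω} = ((Finset.univ.filter A : Finset _) : Set _) := by simp
  rw [hfilter, ← sum_measureReal_singleton, Finset.sum_filter, percProb]
  refine Finset.sum_bij' (fun s _ a => decide (a.1 ∈ s))
    (fun ω _ => (Finset.univ.filter fun a => ω a = true).map (Function.Embedding.subtype _))
    (fun _ _ => Finset.mem_univ _) (fun ω _ => ?_) (fun s hs => ?_) (fun ω _ => ?_) fun s hs => ?_
  · exact Finset.mem_powerset.2 (Finset.map_subtype_subset _)
  · ext a
    simpa using fun ha => Finset.mem_powerset.1 hs ha
  · funext a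
    simp
  · have hset : {a | ∃ _ : a ∈ edgeFinset' G, decide (a ∈ s) = true} = (s : Set (Sym2 W)) := by
      ext a
      simpa using fun ha => Finset.mem_powerset.1 hs ha
    simp only [hset, bernoulliPi_real_decide_mem (Finset.mem_powerset.1 hs), mul_ite, mul_one,
      mul_zero]

variable {d : ℕ} {Q I : Type*} [Group Q] (C : Cover d Q I) {W : Type} (e : W ≃ I × Q)
  [Fintype W] [Fintype I] [Fintype Q]

lemma Cover.percProb_graph (hs : Function.Injective C.s) (P : SimpleGraph W → Prop) :
    percProb (C.graph e) p P
      = (bernoulliPi ((I × Q) × Fin d) p).real {ω | P (C.openGraph e ω)} := by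
  have hmem {a : Sym2 W} : a ∈ edgeFinset' (C.graph e) ↔ a ∈ (C.graph e).edgeSet := by
    simp [edgeFinset']
  choose k v hkv using fun a : edgeFinset' (C.graph e) => C.exists_eq_edge (hmem.1 a.2)
  have hinj : Function.Injective fun a => C.label (k a) (v a) := fun a b hab =>
    Subtype.ext ((hkv a).trans (((C.edge_eq_edge_iff hs).2 hab).trans (hkv b).symm))
  rw [percProb_eq_bernoulliPi_real, ← bernoulliPi_real_comp hinj]
  congr! with ω
  ext x y
  have hlabel {k' : Fin d} (hk' : e y = C.move k' (e x)) (h : s(x, y) ∈ edgeFinset' (C.graph e)) :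
      C.label (k ⟨s(x, y), h⟩) (v ⟨s(x, y), h⟩) = C.label k' (e x) :=
    (C.edge_eq_edge_iff hs).1 ((hkv _).symm.trans (C.mk_eq_edge hk'))
  simp only [SimpleGraph.fromEdgeSet_adj, Set.mem_ofPred_eq, Function.comp]
  constructor
  · rintro ⟨⟨h, hω⟩, -⟩
    obtain ⟨k', hk'⟩ := hmem.1 h
    exact ⟨k', hk', hlabel hk' h ▸ hω⟩
  · rintro ⟨k', hk', hω⟩
    have hadj : (C.graph e).Adj x y := ⟨k', hk'⟩
    exact ⟨⟨hmem.2 hadj, (hlabel hk' _).symm ▸ hω⟩, hadj.ne⟩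

end PercProb

/-! ### Girth of covers -/

lemma not_isAcyclic_of_two_le_ncard_neighborSet {W : Type*} [Finite W] [Nonempty W]
    {G : SimpleGraph W} (h : ∀ v, 2 ≤ (G.neighborSet v).ncard) : ¬ G.IsAcyclic := by
  intro hG
  obtain ⟨u, v, q, hq, hmax⟩ := SimpleGraph.Walk.exists_isPath_forall_isPath_length_le_length G
  have hsupp {w : W} (hw : G.Adj v w) : w ∈ q.support := by
    by_contra hwq
    have := hmax u w _ (hq.concat hwq hw)
    rw [SimpleGraph.Walk.length_concat] at this
    omega
  have hsub : G.neighborSet v ⊆ {q.penultimate} := fun w hw =>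
    hG.eq_penultimate_of_adj_end hq hw (hsupp hw)
  have := Set.ncard_le_ncard hsub
  rw [Set.ncard_singleton] at this
  exact absurd (h v) (by omega)

namespace Cover

variable {d : ℕ} {Q I W : Type*} [Group Q] (C : Cover d Q I) (e : W ≃ I × Q)

/-- A trail never uses the same edge twice in a row, so the colours along it form a word without
repeated adjacent letters; the last clause carries the first edge through the induction. -/
lemma exists_word_of_isTrail {v w : W} (q : (C.graph e).Walk v w) (hq : q.IsTrail) :
    ∃ l : List (Fin d), l.length = q.length ∧ l.IsChain (· ≠ ·) ∧
      (e w).2 = (e v).2 * (l.map C.s).prod ∧ ∀ k ∈ l.head?, C.edge e k (e v) ∈ q.edges := by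
  induction q with
  | nil => exact ⟨[], by simp⟩
  | @cons v u w h q ih =>
    rw [SimpleGraph.Walk.isTrail_cons] at hq
    obtain ⟨l, hlength, hchain, hprod, hhead⟩ := ih hq.1
    obtain ⟨k, hk⟩ := id h
    refine ⟨k :: l, by simp [hlength], ?_, ?_, ?_⟩
    · refine List.isChain_cons.2 ⟨?_, hchain⟩
      rintro k' hk' rfl
      have hedge := hhead k hk'
      rw [hk, C.edge_move, ← C.mk_eq_edge hk] at hedge
      exact hq.2 hedge
    · rw [hprod, hk, C.move_snd, List.map_cons, List.prod_cons, mul_assoc]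
    · simp [C.mk_eq_edge hk]

lemma le_girth [Finite W] [Nonempty W] {g : ℕ} (hg : 1 ≤ g) (hs : FreeUpTo C.s g) (hd : 2 ≤ d) :
    g ≤ (C.graph e).girth := by
  have hcyclic : ¬ (C.graph e).IsAcyclic := not_isAcyclic_of_two_le_ncard_neighborSet fun v =>
    (C.ncard_neighborSet (hs.injective hg) v).symm ▸ hd
  obtain ⟨a, q, hq, hlength⟩ := SimpleGraph.exists_girth_eq_length.2 hcyclic
  by_contra! hlt
  obtain ⟨l, hl, hchain, hprod, -⟩ := C.exists_word_of_isTrail e q hq.isTrail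
  have hone : (l.map C.s).prod = 1 := by simpa using hprod.symm
  have hnil : l = [] := hs l [] hchain (by omega) (by simp) (by simp) (by simpa using hone)
  have := hq.three_le_length
  rw [hnil, List.length_nil] at hl
  omega

end Cover

/-! ### Edges outside a spanning tree of a Cayley graph -/

section Base

variable {ι Q : Type*} [Group Q] {s : ι → Q}

lemma exists_orientation (hs : ∀ k, s k * s k = 1) (hne : ∀ k, s k ≠ 1) :
    ∃ o : Q → ι → Bool, ∀ x k, o (x * s k) k = !o x k := by
  let := linearOrderOfSTO (WellOrderingRel (α := Q))
  refine ⟨fun x k => decide (x < x * s k), fun x k => ?_⟩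
  simp only [mul_assoc, hs, mul_one]
  rw [← decide_not, decide_eq_decide, not_lt, le_iff_lt_or_eq,
    or_iff_left fun h => hne k (by simpa using h)]

lemma mulCayley_range_adj (hs : ∀ k, s k * s k = 1) {x y : Q} :
    (SimpleGraph.mulCayley (Set.range s)).Adj x y ↔ x ≠ y ∧ ∃ k, y = x * s k := by
  have hswap (k : ι) : x = y * s k ↔ x * s k = y := by
    rw [← inv_eq_of_mul_eq_one_left (hs k), eq_mul_inv_iff_mul_eq, inv_eq_of_mul_eq_one_left (hs k)]
  simp only [SimpleGraph.mulCayley_adj', Set.exists_range_iff, hswap, or_self, eq_comm]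

lemma mulCayley_range_connected (hs : ∀ k, s k * s k = 1)
    (ht : Subgroup.closure (Set.range s) = ⊤) :
    (SimpleGraph.mulCayley (Set.range s)).Connected := by
  have hstep (x : Q) (k : ι) : (SimpleGraph.mulCayley (Set.range s)).Reachable x (x * s k) := by
    by_cases h : x = x * s k
    · exact h ▸ .refl x
    · exact ((mulCayley_range_adj hs).2 ⟨h, k, rfl⟩).reachable
  have hword (w : List ι) (x : Q) :
      (SimpleGraph.mulCayley (Set.range s)).Reachable x (x * (w.map s).prod) := by
    induction w generalizing x with
    | nil => simp
    | cons k w ih => simpa [mul_assoc] using (hstep x k).trans (ih (x * s k))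
  refine ⟨fun x y => ?_⟩
  obtain ⟨w, hw⟩ := exists_map_prod_eq hs ht (x⁻¹ * y)
  simpa [hw] using hword w x

variable {o : Q → ι → Bool} [Fintype ι] [Fintype Q]

lemma two_mul_card_oriented (hs : ∀ k, s k * s k = 1) (ho : ∀ x k, o (x * s k) k = !o x k) :
    2 * (Finset.univ.filter fun q : Q × ι => o q.1 q.2 = true).card
      = Fintype.card Q * Fintype.card ι := by
  have hflip : (Finset.univ.filter fun q : Q × ι => o q.1 q.2 = true).card
      = (Finset.univ.filter fun q : Q × ι => ¬ o q.1 q.2 = true).card := by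
    refine Finset.card_bij' (fun q _ => (q.1 * s q.2, q.2)) (fun q _ => (q.1 * s q.2, q.2))
      ?_ ?_ ?_ ?_ <;> simp +contextual [ho, mul_assoc, hs]
  have hsplit := Finset.card_filter_add_card_filter_not (s := (Finset.univ : Finset (Q × ι)))
    (fun q => o q.1 q.2 = true)
  rw [← hflip, Finset.card_univ, Fintype.card_prod] at hsplit
  omega

lemma card_oriented_adj_le (hs : ∀ k, s k * s k = 1) (hinj : Function.Injective s)
    (ho : ∀ x k, o (x * s k) k = !o x k) (G : SimpleGraph Q) :
    (Finset.univ.filter fun q : Q × ι => o q.1 q.2 = true ∧ G.Adj q.1 (q.1 * s q.2)).card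
      ≤ G.edgeFinset.card := by
  refine Finset.card_le_card_of_injOn (fun q => s(q.1, q.1 * s q.2))
    (fun q hq => by simpa using (Finset.mem_filter.1 hq).2.2) ?_
  rintro ⟨x, k⟩ hx ⟨y, l⟩ hy h
  simp only [Finset.coe_filter, Finset.mem_univ, true_and, Set.mem_ofPred_eq] at hx hy
  rw [Sym2.eq_iff] at h
  rcases h with ⟨hxy, h⟩ | ⟨hxy, h⟩ <;> dsimp only at hxy h <;> subst hxy
  · rw [hinj (mul_left_cancel h)]
  · rw [mul_assoc, mul_eq_left] at h
    obtain rfl : k = l := hinj (mul_left_cancel (h.trans (hs l).symm))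
    simp [ho, hy.1] at hx

/-- A Cayley graph of degree at least three has at least `|Q| / 2` edges off a spanning tree. -/
lemma exists_mobile_edges (hι : 3 ≤ Fintype.card ι) (hs : ∀ k, s k * s k = 1)
    (hinj : Function.Injective s) (ht : Subgroup.closure (Set.range s) = ⊤)
    (ho : ∀ x k, o (x * s k) k = !o x k) (M : Type*) [Fintype M]
    (hM : 2 * Fintype.card M ≤ Fintype.card Q) :
    ∃ mob : M → Q × ι, Function.Injective mob ∧ (∀ τ, o (mob τ).1 (mob τ).2 = true) ∧
      ∀ x y, Relation.ReflTransGen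
        (fun x y => ∃ k, y = x * s k ∧ (x, k) ∉ Set.range mob ∧ (y, k) ∉ Set.range mob) x y := by
  obtain ⟨T, hTle, hT⟩ := (mulCayley_range_connected hs ht).exists_isTree_le
  set F := Finset.univ.filter fun q : Q × ι => o q.1 q.2 = true ∧ ¬ T.Adj q.1 (q.1 * s q.2)
    with hF
  have hcard : Fintype.card M ≤ Fintype.card F := by
    have hsplit := Finset.card_filter_add_card_filter_not
      (s := Finset.univ.filter fun q : Q × ι => o q.1 q.2 = true) fun q => T.Adj q.1 (q.1 * s q.2)
    rw [Finset.filter_filter, Finset.filter_filter, ← hF] at hsplit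
    have := card_oriented_adj_le hs hinj ho T
    have := hT.card_edgeFinset
    have := two_mul_card_oriented hs ho
    have := Nat.mul_le_mul_left (Fintype.card Q) hι
    rw [Fintype.card_coe]
    omega
  obtain ⟨f⟩ := Function.Embedding.nonempty_of_card_le hcard
  have hf (τ : M) := (Finset.mem_filter.1 (f τ).2).2
  refine ⟨fun τ => (f τ).1, fun _ _ h => f.injective (Subtype.ext h), fun τ => (hf τ).1,
    fun x y => ?_⟩
  refine Relation.ReflTransGen.mono (fun a b hab => ?_) _ _
    ((T.reachable_iff_reflTransGen x y).1 (hT.connected x y))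
  obtain ⟨-, k, rfl⟩ := (mulCayley_range_adj hs).1 (hTle hab)
  refine ⟨k, rfl, ?_, ?_⟩
  · rintro ⟨τ, hτ⟩
    exact (hf τ).2 (by simpa [hτ] using hab)
  · rintro ⟨τ, hτ⟩
    exact (hf τ).2 (by simpa [hτ, mul_assoc, hs] using hab.symm)

end Base

/-! ### The construction -/

/-- The types of the marked edges of the base graph, whose lifts are not core edges: `core` joins
cores to roots of trees, `root` joins roots to roots, `link b q` joins a tree node at a level of
parity `q` to its child in direction `b`, and `leaf j` joins leaves to leaves along the `j`-th
expanding permutation. -/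
inductive EdgeType
  | core
  | root
  | link (b : Bool) (q : Fin 2)
  | leaf (j : Fin 30)
  deriving Fintype

/-- A base Cayley graph in which one edge of each type has been marked, outside a spanning tree.
The edge of type `τ` has initial vertex `(mob τ).1` and colour `(mob τ).2`. -/
structure Base (d : ℕ) (Q : Type*) [Group Q] extends OrientedCayley d Q where
  mob : EdgeType → Q × Fin d
  mob_injective : Function.Injective mob
  o_mob : ∀ τ, o (mob τ).1 (mob τ).2 = true
  tree : ∀ x y, Relation.ReflTransGen
    (fun x y => ∃ k, y = x * s k ∧ (x, k) ∉ Set.range mob ∧ (y, k) ∉ Set.range mob) x y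

/-- Addresses in a tree in which the vertices at levels divisible by `L` have two children and
the other ones have one. An address lists the directions from the vertex up to the root. -/
def ValidAddr (L : ℕ) : List Bool → Prop
  | [] => True
  | b :: w => ValidAddr L w ∧ (b = true → L ∣ w.length)

/-- The vertices of such a tree of height `h`. -/
abbrev Addr (L h : ℕ) : Type := {w : List Bool // ValidAddr L w ∧ w.length ≤ h}

instance (L h : ℕ) : Finite (Addr L h) :=
  ((List.finite_length_le Bool h).subset fun _ hw => hw.2).to_subtype

instance (L h : ℕ) : Fintype (Addr L h) := Fintype.ofFinite _

/-- The address of the root. -/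
def rootAddr (L h : ℕ) : Addr L h := ⟨[], trivial, Nat.zero_le _⟩

/-- Tree nodes; each element of `Bool × J` carries one tree, on the side given by the `Bool`. -/
abbrev TreeNode (J : Type*) (L h : ℕ) : Type _ := (Bool × J) × Addr L h

/-- The leaves of the trees. -/
abbrev Leaf (J : Type*) (L h : ℕ) : Type _ := {n : TreeNode J L h // n.2.1.length = h}

/-- The fibre of the construction: one core and one tree for each element of `Bool × J`. -/
abbrev Idx (J : Type*) (L h : ℕ) : Type _ := (Bool × J) ⊕ TreeNode J L h

/-- The exchange of an address `w` at a level of parity `q` with its child `b :: w`; fixing the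
parity keeps the exchanged pairs disjoint. -/
def linkFun (L h : ℕ) (b : Bool) (q : Fin 2) (w : List Bool) : List Bool :=
  if w.length % 2 = q.val ∧ w.length < h ∧ (b = true → L ∣ w.length) then b :: w
  else if w.head? = some b ∧ w.tail.length % 2 = q.val then w.tail else w

section Link

variable {L h : ℕ} {b : Bool} {q : Fin 2} {w : List Bool}

lemma validAddr_linkFun (hw : ValidAddr L w ∧ w.length ≤ h) :
    ValidAddr L (linkFun L h b q w) ∧ (linkFun L h b q w).length ≤ h := by
  unfold linkFun
  split_ifs with hchild hparent
  · exact ⟨⟨hw.1, hchild.2.2⟩, hchild.2.1⟩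
  · cases w with
    | nil => exact hw
    | cons a w => exact ⟨hw.1.1, (Nat.le_succ _).trans hw.2⟩
  · exact hw

lemma linkFun_eq_cons (hw : w.length % 2 = q.val ∧ w.length < h ∧ (b = true → L ∣ w.length)) :
    linkFun L h b q w = b :: w := if_pos hw

lemma linkFun_cons (hw : w.length % 2 = q.val) : linkFun L h b q (b :: w) = w := by
  rw [linkFun, if_neg, if_pos]
  · rfl
  · simpa using hw
  · simp only [List.length_cons]
    omega

lemma linkFun_linkFun (hw : ValidAddr L w ∧ w.length ≤ h) :
    linkFun L h b q (linkFun L h b q w) = w := by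
  by_cases hchild : w.length % 2 = q.val ∧ w.length < h ∧ (b = true → L ∣ w.length)
  · rw [linkFun_eq_cons hchild, linkFun_cons hchild.1]
  by_cases hparent : w.head? = some b ∧ w.tail.length % 2 = q.val
  · obtain ⟨w, rfl⟩ : ∃ w', w = b :: w' := List.head?_eq_some_iff.1 hparent.1
    have hlevel : w.length % 2 = q.val := hparent.2
    rw [linkFun_cons hlevel, linkFun_eq_cons ⟨hlevel, hw.2, hw.1.2⟩]
  · have hfix : linkFun L h b q w = w := by rw [linkFun, if_neg hchild, if_neg hparent]
    rw [hfix, hfix]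

variable (L h b q) in
/-- `linkFun` as a permutation of the tree. -/
def linkPerm : Equiv.Perm (Addr L h) :=
  Function.Involutive.toPerm (fun w => ⟨linkFun L h b q w.1, validAddr_linkFun w.2⟩)
    fun w => Subtype.ext (linkFun_linkFun w.2)

end Link

/-- The data determining the voltages: `κ k` permutes the cores of each side along every unmarked
edge of colour `k`, `ρ` matches the roots of each side, and the `f j` are the expanding permutations
of the leaves. -/
structure Fibre (d : ℕ) (J : Type*) (L h : ℕ) where
  κ : Fin d → Equiv.Perm J
  κ_κ : ∀ k j, κ k (κ k j) = j
  ρ : Equiv.Perm J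
  f : Fin 30 → Equiv.Perm (Leaf J L h)

/-- The exchange of the cores with the roots of their trees. -/
def coreSwap (J : Type*) (L h : ℕ) : Equiv.Perm (Idx J L h) :=
  Function.Involutive.toPerm
    (fun i => match i with
      | .inl i => .inr (i, rootAddr L h)
      | .inr n => if n.2 = rootAddr L h then .inl n.1 else .inr n)
    (fun i => by
      match i with
      | .inl i => simp
      | .inr n =>
        by_cases hn : n.2 = rootAddr L h
        · simp only [hn, if_true]; rw [← hn]
        · simp [hn])

variable {d : ℕ} {Q J : Type*} [Group Q] {L h : ℕ}

namespace Fibre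

variable (F : Fibre d J L h)

/-- The permutation of the cores along an edge of colour `k`. -/
def corePerm (k : Fin d) : Equiv.Perm (Bool × J) := (Equiv.refl Bool).prodCongr (F.κ k)

/-- The permutation of the tree nodes along the marked edge of type `τ`; on the edge of type
`core`, where cores and nodes are exchanged instead, it is a dummy. -/
def nodePerm : EdgeType → Equiv.Perm (TreeNode J L h)
  | .core => 1
  | .root => Equiv.prodCongrLeft fun w =>
      if w = rootAddr L h then (Equiv.refl Bool).prodCongr F.ρ else 1
  | .link b q => (Equiv.refl _).prodCongr (linkPerm L h b q)
  | .leaf j => Equiv.Perm.ofSubtype (F.f j)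

/-- The permutation of the fibre along an edge of colour `k`, given the type of the edge if it is
marked. -/
def act (k : Fin d) : Option EdgeType → Equiv.Perm (Idx J L h)
  | none => Equiv.Perm.sumCongr (F.corePerm k) 1
  | some .core => coreSwap J L h
  | some τ => Equiv.Perm.sumCongr (F.corePerm k) (F.nodePerm τ)

lemma corePerm_corePerm (k : Fin d) (i : Bool × J) : F.corePerm k (F.corePerm k i) = i := by
  obtain ⟨σ, j⟩ := i
  simp [corePerm, F.κ_κ]

lemma act_inl {k : Fin d} {τ : Option EdgeType} (hτ : τ ≠ some .core) (i : Bool × J) :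
    F.act k τ (.inl i) = .inl (F.corePerm k i) := by
  rcases τ with _ | _ | _ <;> first | rfl | exact absurd rfl hτ

lemma act_inr {k : Fin d} {τ : EdgeType} (hτ : τ ≠ .core) (n : TreeNode J L h) :
    F.act k (some τ) (.inr n) = .inr (F.nodePerm τ n) := by
  cases τ <;> first | rfl | exact absurd rfl hτ

lemma nodePerm_link (b : Bool) (q : Fin 2) (i : Bool × J) (w : Addr L h) :
    F.nodePerm (.link b q) (i, w) = (i, linkPerm L h b q w) := rfl

lemma nodePerm_root (i : Bool × J) :
    F.nodePerm .root (i, rootAddr L h) = ((i.1, F.ρ i.2), rootAddr L h) := by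
  obtain ⟨σ, j⟩ := i
  simp [nodePerm, Equiv.prodCongrLeft]

lemma nodePerm_root_of_ne {n : TreeNode J L h} (hn : n.2 ≠ rootAddr L h) :
    F.nodePerm .root n = n := by
  simp [nodePerm, Equiv.prodCongrLeft, hn]

lemma nodePerm_leaf (j : Fin 30) (l : Leaf J L h) : F.nodePerm (.leaf j) l.1 = (F.f j l).1 := by
  simp [nodePerm]

lemma nodePerm_leaf_of_length_ne (j : Fin 30) {n : TreeNode J L h} (hn : n.2.1.length ≠ h) :
    F.nodePerm (.leaf j) n = n :=
  Equiv.Perm.ofSubtype_apply_of_not_mem _ hn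

end Fibre

namespace Base

variable (B : Base d Q) (F : Fibre d J L h)

/-- The initial vertex of the marked edge of type `τ`. -/
abbrev src (τ : EdgeType) : Q := (B.mob τ).1

/-- The colour of the marked edge of type `τ`. -/
abbrev col (τ : EdgeType) : Fin d := (B.mob τ).2

/-- The final vertex of the marked edge of type `τ`. -/
abbrev tgt (τ : EdgeType) : Q := B.src τ * B.s (B.col τ)

/-- The type of the edge with initial vertex `x` and colour `k`, if it is marked. -/
def edgeType (x : Q) (k : Fin d) : Option EdgeType :=
  if h : ∃ τ, B.mob τ = (x, k) then some h.choose else none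

lemma edgeType_eq_some_iff {x : Q} {k : Fin d} {τ : EdgeType} :
    B.edgeType x k = some τ ↔ B.mob τ = (x, k) := by
  constructor
  · unfold edgeType
    split_ifs with hτ
    · rintro ⟨⟩
      exact hτ.choose_spec
    · simp
  · intro hτ
    have hex : ∃ τ, B.mob τ = (x, k) := ⟨τ, hτ⟩
    rw [edgeType, dif_pos hex, B.mob_injective (hex.choose_spec.trans hτ.symm)]

lemma edgeType_mob (τ : EdgeType) : B.edgeType (B.src τ) (B.col τ) = some τ :=
  B.edgeType_eq_some_iff.2 rfl

lemma edgeType_eq_none {x : Q} {k : Fin d} (h : (x, k) ∉ Set.range B.mob) : B.edgeType x k = none :=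
  dif_neg h

/-- The cover of the base graph with voltages given by `F`. -/
def cover : Cover d Q (Idx J L h) where
  toOrientedCayley := B.toOrientedCayley
  π x k := F.act k (B.edgeType x k)

lemma move_of_pos {x : Q} {k : Fin d} (hx : B.o x k = true) (i : Idx J L h) :
    (B.cover F).move k (i, x) = (F.act k (B.edgeType x k) i, x * B.s k) := by
  simp [Cover.move, cover, hx]

lemma move_of_neg {x : Q} {k : Fin d} (hx : ¬ B.o x k = true) (i : Idx J L h) :
    (B.cover F).move k (i, x) = ((F.act k (B.edgeType (x * B.s k) k))⁻¹ i, x * B.s k) := by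
  simp [Cover.move, cover, hx]

lemma label_of_pos {x : Q} {k : Fin d} (hx : B.o x k = true) (i : Idx J L h) :
    (B.cover F).label k (i, x) = ((i, x), k) := by
  simp [Cover.label, cover, hx]

lemma move_core {x : Q} {k : Fin d} (hx : ¬ IsCut B.s (B.src .core) (B.col .core) x k)
    (i : Bool × J) :
    (B.cover F).move k (.inl i, x) = (.inl (F.corePerm k i), x * B.s k) := by
  by_cases ho : B.o x k = true
  · rw [move_of_pos B F ho, F.act_inl]
    intro h
    have hmob := B.edgeType_eq_some_iff.1 h
    exact hx ⟨by simp [col, hmob], Or.inl (by simp [src, hmob])⟩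
  · rw [move_of_neg B F ho]
    congr 1
    rw [Equiv.Perm.inv_eq_iff_eq, F.act_inl, F.corePerm_corePerm]
    intro h
    have hmob := B.edgeType_eq_some_iff.1 h
    exact hx ⟨by simp [col, hmob], Or.inr (by simp [src, col, hmob, B.mul_s_mul_s])⟩

lemma move_core_root (i : Bool × J) :
    (B.cover F).move (B.col .core) (.inl i, B.src .core)
      = (.inr (i, rootAddr L h), B.tgt .core) := by
  rw [move_of_pos B F (B.o_mob _), edgeType_mob]
  rfl

lemma move_node_of_notMem_mob {x : Q} {k : Fin d} (hx : (x, k) ∉ Set.range B.mob)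
    (hx' : (x * B.s k, k) ∉ Set.range B.mob) (n : TreeNode J L h) :
    (B.cover F).move k (.inr n, x) = (.inr n, x * B.s k) := by
  by_cases ho : B.o x k = true
  · rw [move_of_pos B F ho, B.edgeType_eq_none hx]
    rfl
  · rw [move_of_neg B F ho, B.edgeType_eq_none hx']
    rfl

lemma move_node {τ : EdgeType} (hτ : τ ≠ .core) (n : TreeNode J L h) :
    (B.cover F).move (B.col τ) (.inr n, B.src τ) = (.inr (F.nodePerm τ n), B.tgt τ) := by
  rw [move_of_pos B F (B.o_mob _), edgeType_mob, F.act_inr hτ]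

end Base

/-! ### Expansion of covers -/

namespace Cover

variable {d : ℕ} {Q I : Type*} [Group Q] (C : Cover d Q I) [Fintype Q] [Fintype I]
  (S : Finset (I × Q))

/-- The half-edges with exactly one end in `S`. -/
def crossing : Finset ((I × Q) × Fin d) :=
  Finset.univ.filter fun q => ¬ (q.1 ∈ S ↔ C.move q.2 q.1 ∈ S)

variable {C S} in
lemma mem_crossing {v : I × Q} {k : Fin d} :
    (v, k) ∈ C.crossing S ↔ ¬ (v ∈ S ↔ C.move k v ∈ S) := by
  simp [crossing]

lemma crossing_compl [DecidableEq (I × Q)] : C.crossing Sᶜ = C.crossing S := by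
  ext ⟨v, k⟩
  simp only [mem_crossing, Finset.mem_compl, not_iff_not]

lemma card_le_card_add_crossing {T T' : Type*} {A : Finset T} {A' : Finset T'} {f : T → I × Q}
    {φ : T → T'} (hf : Function.Injective f) (hφ : Function.Injective φ) (k : Fin d)
    (hA : ∀ t ∈ A, f t ∈ S) (hA' : ∀ t, C.move k (f t) ∈ S → φ t ∈ A') :
    A.card ≤ A'.card + (C.crossing S).card := by
  rw [← Finset.card_filter_add_card_filter_not fun t => C.move k (f t) ∈ S]
  refine Nat.add_le_add (Finset.card_le_card_of_injOn φ (fun t ht => ?_) hφ.injOn)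
    (Finset.card_le_card_of_injOn (fun t => (f t, k)) (fun t ht => ?_) fun t _ t' _ h =>
      hf (Prod.ext_iff.1 h).1)
  · exact hA' t (Finset.mem_filter.1 ht).2
  · obtain ⟨ht, hmove⟩ := Finset.mem_filter.1 ht
    exact mem_crossing.2 fun h => hmove (h.1 (hA t ht))

/-- Each crossing half-edge leaves `S` or is the reverse of one that does. -/
lemma card_crossing_le_two_mul : (C.crossing S).card
    ≤ 2 * (Finset.univ.filter fun q : (I × Q) × Fin d => q.1 ∈ S ∧ C.move q.2 q.1 ∉ S).card := by
  set X := Finset.univ.filter fun q : (I × Q) × Fin d => q.1 ∈ S ∧ C.move q.2 q.1 ∉ S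
  let reverse : (I × Q) × Fin d → (I × Q) × Fin d := fun q => (C.move q.2 q.1, q.2)
  have hsub : C.crossing S ⊆ X ∪ X.image reverse := by
    rintro ⟨v, k⟩ hq
    rw [mem_crossing] at hq
    by_cases hv : v ∈ S
    · exact Finset.mem_union_left _ (Finset.mem_filter.2 ⟨Finset.mem_univ _, hv, by tauto⟩)
    · refine Finset.mem_union_right _ (Finset.mem_image.2 ⟨(C.move k v, k), ?_, ?_⟩)
      · exact Finset.mem_filter.2 ⟨Finset.mem_univ _, by tauto, by simpa [C.move_move] using hv⟩
      · simp [reverse, C.move_move]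
  calc (C.crossing S).card ≤ X.card + (X.image reverse).card :=
        (Finset.card_le_card hsub).trans (Finset.card_union_le _ _)
    _ ≤ 2 * X.card := by
        rw [two_mul]
        exact Nat.add_le_add_left Finset.card_image_le _

variable {W : Type} [Fintype W] (e : W ≃ I × Q)

lemma card_crossing_map_le (hs : Function.Injective C.s) (S : Finset W) :
    (C.crossing (S.map e.toEmbedding)).card ≤ 2 * cutCard (C.graph e) S := by
  refine (C.card_crossing_le_two_mul _).trans
    (Nat.mul_le_mul_left 2 (le_trans (le_of_eq ?_) (C.card_exit_le_cutCard e hs S)))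
  congr 1
  ext q
  simp [Finset.mem_map_equiv]

lemma isRegularExpander_graph (hs : Function.Injective C.s) {M : ℕ} (hM : 0 < M)
    (h : ∀ T : Finset (I × Q), 2 * T.card ≤ Fintype.card (I × Q) →
      T.card ≤ M * (C.crossing T).card) :
    IsRegularExpander (C.graph e) (1 / (2 * M)) d := by
  have hdeg : ∀ v, ((C.graph e).neighborSet v).ncard = d := C.ncard_neighborSet hs
  refine ⟨⟨fun v => (hdeg v).le, fun S hS => ?_⟩, hdeg⟩
  have hhalf : 2 * (S.map e.toEmbedding).card ≤ Fintype.card (I × Q) := by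
    rw [Finset.card_map, ← Fintype.card_congr e]
    rw [le_div_iff₀ two_pos, mul_comm] at hS
    exact_mod_cast hS
  have hbound := (h _ hhalf).trans (Nat.mul_le_mul_left M (C.card_crossing_map_le e hs S))
  rw [Finset.card_map, ← mul_assoc, mul_comm M] at hbound
  rw [one_div_mul_eq_div, div_le_iff₀' (by positivity)]
  exact_mod_cast hbound

end Cover

/-! ### Expansion of the construction -/

lemma exists_phase {L : ℕ} (hL : 1 ≤ L) :
    ∃ r : ℕ → ℕ, (∀ l, 1 ≤ r l) ∧ (∀ l, r l ≤ L) ∧ ∀ l, ¬ L ∣ l → r l + 1 ≤ r (l + 1) := by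
  have hpos {l : ℕ} (hl : ¬ L ∣ l) : 1 ≤ l % L :=
    Nat.one_le_iff_ne_zero.2 fun h => hl (Nat.dvd_of_mod_eq_zero h)
  refine ⟨fun l => if L ∣ l then L else l % L, fun l => ?_, fun l => ?_, fun l hl => ?_⟩
  · dsimp only
    split_ifs with h
    exacts [hL, hpos h]
  · dsimp only
    split_ifs
    exacts [le_rfl, (Nat.mod_lt l hL).le]
  · simp only [if_neg hl]
    split_ifs with h
    · exact Nat.mod_lt l hL
    · have hlt := Nat.mod_lt l hL
      have hne : l % L + 1 ≠ L := fun hmod => h <| Nat.dvd_of_mod_eq_zero <| by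
        rw [← Nat.mod_add_mod, hmod, Nat.mod_self]
      have hmod : (l + 1) % L = l % L + 1 := by
        rw [← Nat.mod_add_mod, Nat.mod_eq_of_lt (a := l % L + 1) (by omega)]
      exact hmod.ge

lemma sum_levels_le {L h : ℕ} (hL : 1 ≤ L) (a c : ℕ → ℕ) (hstep : ∀ l < h, a l ≤ a (l + 1) + c l)
    (hdouble : ∀ l < h, L ∣ l → 2 * a l ≤ a (l + 1) + 2 * c l) :
    ∑ j ∈ Finset.range (h + 1), a j ≤ 2 * L * a h + 2 * L * ∑ j ∈ Finset.range h, c j := by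
  obtain ⟨r, hr, hrL, hr_succ⟩ := exists_phase hL
  have hpartial : ∀ l ≤ h, ∑ j ∈ Finset.range (l + 1), a j
      ≤ (L + r l) * a l + 2 * L * ∑ j ∈ Finset.range l, c j := by
    intro l
    induction l with
    | zero =>
      intro _
      simpa using Nat.le_mul_of_pos_left (a 0) (by omega)
    | succ l ih =>
      intro hl
      rw [Finset.sum_range_succ, Finset.sum_range_succ (f := c)]
      have hlevel : (L + r l) * a l + a (l + 1) ≤ (L + r (l + 1)) * a (l + 1) + 2 * L * c l := by
        by_cases hdvd : L ∣ l
        · nlinarith [Nat.mul_le_mul_left L (hdouble l hl hdvd),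
            Nat.mul_le_mul_right (a l) (hrL l), Nat.mul_le_mul_right (a (l + 1)) (hr (l + 1))]
        · nlinarith [Nat.mul_le_mul_left (L + r l) (hstep l hl),
            Nat.mul_le_mul_right (c l) (hrL l),
            Nat.mul_le_mul_right (a (l + 1)) (hr_succ l hdvd)]
      have := ih (by omega)
      linarith
  refine (hpartial h le_rfl).trans (Nat.add_le_add_right (Nat.mul_le_mul_right _ ?_) _)
  have := hrL h
  omega

section Levels

variable {J : Type*} {L h : ℕ}

/-- The elements of `T` at level `l`. -/
def level (T : Finset (TreeNode J L h)) (l : ℕ) : Finset (TreeNode J L h) :=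
  T.filter fun n => n.2.1.length = l

/-- The elements of `T` at level `l` that are the children in direction `b` of their parents. -/
def levelToward (b : Bool) (T : Finset (TreeNode J L h)) (l : ℕ) : Finset (TreeNode J L h) :=
  (level T l).filter fun n => n.2.1.head? = some b

/-- The child of a node in direction `b`, for `b` allowed. -/
def child (b : Bool) (n : TreeNode J L h) : TreeNode J L h :=
  (n.1, linkPerm L h b ⟨n.2.1.length % 2, Nat.mod_lt _ two_pos⟩ n.2)

lemma mem_level {T : Finset (TreeNode J L h)} {l : ℕ} {n : TreeNode J L h} :
    n ∈ level T l ↔ n ∈ T ∧ n.2.1.length = l := Finset.mem_filter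

lemma sum_card_level (T : Finset (TreeNode J L h)) :
    ∑ l ∈ Finset.range (h + 1), (level T l).card = T.card :=
  (Finset.card_eq_sum_card_fiberwise fun n _ => by simpa using Nat.lt_succ_of_le n.2.2.2).symm

lemma card_levelToward_add_le (T : Finset (TreeNode J L h)) (l : ℕ) :
    (levelToward false T l).card + (levelToward true T l).card ≤ (level T l).card := by
  rw [← Finset.card_union_of_disjoint]
  · exact Finset.card_le_card (Finset.union_subset (Finset.filter_subset _ _)
      (Finset.filter_subset _ _))
  · exact Finset.disjoint_filter.2 fun n _ hfalse htrue => by simp [hfalse] at htrue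

variable {l : ℕ} {b : Bool}

lemma child_val {n : TreeNode J L h} (hl : n.2.1.length < h) (hb : b = true → L ∣ n.2.1.length) :
    (child b n).2.1 = b :: n.2.1 :=
  linkFun_eq_cons ⟨rfl, hl, hb⟩

lemma child_mem_levelToward (hl : l < h) (hb : b = true → L ∣ l) {n : TreeNode J L h}
    (hn : n.2.1.length = l) {T : Finset (TreeNode J L h)} (hT : child b n ∈ T) :
    child b n ∈ levelToward b T (l + 1) := by
  subst hn
  simp [levelToward, mem_level, hT, child_val hl hb]

lemma child_injOn (hl : l < h) (hb : b = true → L ∣ l) :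
    Set.InjOn (child b) {n : TreeNode J L h | n.2.1.length = l} := by
  intro n (hn : n.2.1.length = l) m (hm : m.2.1.length = l) hnm
  have hcons : b :: n.2.1 = b :: m.2.1 := by
    rw [← child_val (by rwa [hn]) (by rwa [hn]), hnm, child_val (by rwa [hm]) (by rwa [hm])]
  exact Prod.ext (Prod.ext_iff.1 hnm).1 (Subtype.ext (List.cons.inj hcons).2)

end Levels

section Expansion

variable {d : ℕ} {Q J : Type*} [Fintype J] {L h : ℕ} (S : Finset (Idx J L h × Q))

/-- The elements of `Bool × J` whose cores lie in `S` above `x`. -/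
def coresIn (x : Q) : Finset (Bool × J) := Finset.univ.filter fun i => (.inl i, x) ∈ S

/-- The elements of `Bool × J` whose roots lie in `S` above `x`. -/
def rootsIn (x : Q) : Finset (Bool × J) :=
  Finset.univ.filter fun i => (.inr (i, rootAddr L h), x) ∈ S

lemma card_filter_not_isRight [Fintype Q] :
    (S.filter fun v => ¬ v.1.isRight = true).card = ∑ x, (coresIn S x).card := by
  rw [Finset.card_eq_sum_card_fiberwise (f := fun v => v.2) (t := Finset.univ) (by simp)]
  refine Finset.sum_congr rfl fun x _ =>
    (Finset.card_bij (fun i _ => (.inl i, x)) ?_ (by simp) ?_).symm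
  · intro i hi
    simpa [coresIn] using hi
  · rintro ⟨i | n, y⟩ hv
    · simp only [Finset.mem_filter] at hv
      obtain ⟨⟨hv, -⟩, rfl⟩ := hv
      exact ⟨i, by simpa [coresIn] using hv, rfl⟩
    · simp at hv

variable [Group Q]

/-- The nodes whose copy above the identity lies in `S`. -/
def nodesIn : Finset (TreeNode J L h) := Finset.univ.filter fun n => (.inr n, 1) ∈ S

/-- The leaves whose copy above the identity lies in `S`. -/
def leavesIn : Finset (Leaf J L h) := Finset.univ.filter fun l => (.inr l.1, 1) ∈ S

lemma card_level_nodesIn : (level (nodesIn S) h).card = (leavesIn S).card := by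
  rw [← Finset.card_map (Function.Embedding.subtype _)]
  congr 1
  ext n
  simp only [mem_level, nodesIn, leavesIn, Finset.mem_filter, Finset.mem_univ, true_and,
    Finset.mem_map, Function.Embedding.coe_subtype, Subtype.exists]
  exact ⟨fun ⟨hn, hlength⟩ => ⟨n, hlength, hn, rfl⟩, fun ⟨_, hlength, hn, hm⟩ => hm ▸ ⟨hn, hlength⟩⟩

lemma card_leavesIn_compl [Fintype Q] :
    (leavesIn Sᶜ).card + (leavesIn S).card = Fintype.card (Leaf J L h) := by
  have hcompl : leavesIn Sᶜ = (leavesIn S)ᶜ := by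
    ext
    simp [leavesIn]
  rw [hcompl, Finset.card_compl_add_card]

namespace Base

variable [Fintype Q] (B : Base d Q) (F : Fibre d J L h)

/-- The nodes some copy of which is incident to an edge crossing the boundary of `S`. -/
def mixedNodes : Finset (TreeNode J L h) :=
  Finset.univ.filter fun n => ∃ x k, ((.inr n, x), k) ∈ (B.cover F).crossing S

lemma card_mixedNodes_le : (B.mixedNodes S F).card ≤ ((B.cover F).crossing S).card := by
  rw [← Finset.card_map ⟨_, Sum.inr_injective (α := Bool × J)⟩]
  refine (Finset.card_le_card (t := ((B.cover F).crossing S).image fun q => q.1.1) ?_).trans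
    Finset.card_image_le
  intro i hi
  obtain ⟨n, hn, rfl⟩ := Finset.mem_map.1 hi
  obtain ⟨x, k, hq⟩ := (Finset.mem_filter.1 hn).2
  exact Finset.mem_image_of_mem _ hq

variable {S}

lemma mem_iff_move_mem {n : TreeNode J L h} (hn : n ∉ B.mixedNodes S F) (x : Q) (k : Fin d) :
    (.inr n, x) ∈ S ↔ (B.cover F).move k (.inr n, x) ∈ S := by
  by_contra hne
  exact hn (Finset.mem_filter.2 ⟨Finset.mem_univ _, x, k, Cover.mem_crossing.2 hne⟩)

lemma mem_iff_mem {n : TreeNode J L h} (hn : n ∉ B.mixedNodes S F) (x y : Q) :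
    (.inr n, x) ∈ S ↔ (.inr n, y) ∈ S := by
  induction B.tree x y with
  | refl => rfl
  | tail _ hyz ih =>
    obtain ⟨k, rfl, hy, hz⟩ := hyz
    rw [ih, B.mem_iff_move_mem F hn _ k, B.move_node_of_notMem_mob F hy hz]

lemma nodePerm_mem_nodesIn {n : TreeNode J L h} {τ : EdgeType} (hτ : τ ≠ .core)
    (hn : n ∉ B.mixedNodes S F) (hn' : F.nodePerm τ n ∉ B.mixedNodes S F) (hS : n ∈ nodesIn S) :
    F.nodePerm τ n ∈ nodesIn S := by
  simp only [nodesIn, Finset.mem_filter, Finset.mem_univ, true_and] at hS ⊢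
  rwa [B.mem_iff_mem F hn 1 (B.src τ), B.mem_iff_move_mem F hn _ (B.col τ), B.move_node F hτ,
    B.mem_iff_mem F hn' _ 1] at hS

lemma mem_nodesIn_union_mixedNodes {n : TreeNode J L h} {x : Q} (hn : (.inr n, x) ∈ S) :
    n ∈ nodesIn S ∪ B.mixedNodes S F := by
  rw [Finset.mem_union, or_iff_not_imp_right]
  intro hmixed
  exact Finset.mem_filter.2 ⟨Finset.mem_univ _, (B.mem_iff_mem F hmixed x 1).1 hn⟩

lemma card_level_le_levelToward {l : ℕ} (hl : l < h) {b : Bool} (hb : b = true → L ∣ l) :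
    (level (nodesIn S) l).card ≤ (levelToward b (nodesIn S) (l + 1)).card
      + ((level (B.mixedNodes S F) l).card
        + (levelToward b (B.mixedNodes S F) (l + 1)).card) := by
  set N := nodesIn S
  set M := B.mixedNodes S F
  have hmaps : ∀ n ∈ level N l \ level M l,
      child b n ∈ levelToward b N (l + 1) ∪ levelToward b M (l + 1) := by
    intro n hn
    simp only [Finset.mem_sdiff, mem_level, not_and] at hn
    obtain ⟨⟨hnN, hlength⟩, hnM⟩ := hn
    rw [Finset.mem_union]
    by_cases hchild : child b n ∈ M
    · exact Or.inr (child_mem_levelToward hl hb hlength hchild)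
    · exact Or.inl (child_mem_levelToward hl hb hlength (B.nodePerm_mem_nodesIn F
        (τ := .link b _) (by simp) (fun h => hnM h hlength) hchild hnN))
  have hinj : Set.InjOn (child b) (↑(level N l \ level M l) : Set (TreeNode J L h)) := by
    refine Set.InjOn.mono ?_ (child_injOn hl hb)
    intro n hn
    exact (mem_level.1 (Finset.mem_sdiff.1 (Finset.mem_coe.1 hn)).1).2
  have hchildren := Finset.card_le_card_of_injOn _ hmaps hinj
  have := Finset.le_card_sdiff (level M l) (level N l)
  have := Finset.card_union_le (levelToward b N (l + 1)) (levelToward b M (l + 1))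
  omega

lemma card_nodesIn_le (hL : 1 ≤ L) : (nodesIn S).card
    ≤ 2 * L * (leavesIn S).card + 4 * L * (B.mixedNodes S F).card := by
  set M := B.mixedNodes S F with hM_def
  have hsum := sum_levels_le (h := h) hL (fun l => (level (nodesIn S) l).card)
    (fun l => (level M l).card + (level M (l + 1)).card)
    (fun l hl => by
      have hfalse := B.card_level_le_levelToward F (S := S) hl (b := false) (by simp)
      rw [← hM_def] at hfalse
      have := card_levelToward_add_le (nodesIn S) (l + 1)
      have := card_levelToward_add_le M (l + 1)
      omega)
    (fun l hl hdvd => by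
      have hfalse := B.card_level_le_levelToward F (S := S) hl (b := false) (by simp)
      have htrue := B.card_level_le_levelToward F (S := S) hl (b := true) fun _ => hdvd
      rw [← hM_def] at hfalse htrue
      have := card_levelToward_add_le (nodesIn S) (l + 1)
      have := card_levelToward_add_le M (l + 1)
      omega)
  have hM := sum_card_level M
  have hM' := hM
  rw [Finset.sum_range_succ] at hM
  rw [Finset.sum_range_succ'] at hM'
  rw [sum_card_level, Finset.sum_add_distrib, card_level_nodesIn] at hsum
  refine hsum.trans (Nat.add_le_add_left ?_ _)
  calc _ ≤ 2 * L * (2 * M.card) := Nat.mul_le_mul_left _ (by omega)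
    _ = 4 * L * M.card := by ring

lemma card_filter_isRight_le : (S.filter fun v => v.1.isRight = true).card
    ≤ Fintype.card Q * ((nodesIn S).card + (B.mixedNodes S F).card) := by
  have hsub : (S.filter fun v => v.1.isRight = true)
      ⊆ (Finset.univ ×ˢ (nodesIn S ∪ B.mixedNodes S F)).image fun q => (.inr q.2, q.1) := by
    rintro ⟨i | n, x⟩ hv
    · simp at hv
    · refine Finset.mem_image.2 ⟨(x, n), Finset.mem_product.2 ⟨Finset.mem_univ _, ?_⟩, rfl⟩
      exact B.mem_nodesIn_union_mixedNodes F (Finset.mem_filter.1 hv).1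
  refine (Finset.card_le_card hsub).trans (Finset.card_image_le.trans ?_)
  rw [Finset.card_product, Finset.card_univ]
  exact Nat.mul_le_mul_left _ (Finset.card_union_le _ _)

lemma card_rootsIn_le (x : Q) :
    (rootsIn S x).card ≤ (nodesIn S).card + (B.mixedNodes S F).card :=
  (Finset.card_le_card_of_injOn (fun i => (i, rootAddr L h))
    (fun _ hi => B.mem_nodesIn_union_mixedNodes F (Finset.mem_filter.1 hi).2)
    fun _ _ _ _ hij => (Prod.mk.inj hij).1).trans (Finset.card_union_le _ _)

lemma card_image_sdiff_leavesIn_le (j : Fin 30) :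
    (((leavesIn S).image (F.f j)) \ leavesIn S).card ≤ 2 * (B.mixedNodes S F).card := by
  set D := Finset.univ.filter fun l : Leaf J L h => l.1 ∈ B.mixedNodes S F
  have hD : D.card ≤ (B.mixedNodes S F).card :=
    Finset.card_le_card_of_injOn (fun l => l.1) (fun l hl => (Finset.mem_filter.1 hl).2)
      Subtype.val_injective.injOn
  have hsub : ((leavesIn S).image (F.f j)) \ leavesIn S ⊆ D.image (F.f j) ∪ D := by
    intro l' hl'
    obtain ⟨himage, hnotMem⟩ := Finset.mem_sdiff.1 hl'
    obtain ⟨l, hl, rfl⟩ := Finset.mem_image.1 himage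
    rw [Finset.mem_union]
    by_contra! hD
    have hmem := B.nodePerm_mem_nodesIn F (τ := .leaf j) (n := l.1) (by simp)
      (fun h => hD.1 (Finset.mem_image_of_mem _ (by simpa [D] using h)))
      (fun h => hD.2 (by simpa [D, F.nodePerm_leaf] using h))
      (by simpa [leavesIn, nodesIn] using hl)
    exact hnotMem (by simpa [leavesIn, nodesIn, F.nodePerm_leaf] using hmem)
  have := Finset.card_le_card hsub
  have := Finset.card_union_le (D.image (F.f j)) D
  have := Finset.card_image_le (s := D) (f := F.f j)
  omega

variable (S) in
lemma card_coresIn_le_mul {x : Q} {k : Fin d} (hk : ¬ IsCut B.s (B.src .core) (B.col .core) x k) :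
    (coresIn S x).card ≤ (coresIn S (x * B.s k)).card + ((B.cover F).crossing S).card :=
  (B.cover F).card_le_card_add_crossing S (f := fun i => (.inl i, x)) (φ := F.corePerm k)
    (fun i j h => Sum.inl_injective (Prod.mk.inj h).1) (F.corePerm k).injective k
    (fun i hi => (Finset.mem_filter.1 hi).2) fun i hi =>
      Finset.mem_filter.2 ⟨Finset.mem_univ _, by rwa [B.move_core F hk] at hi⟩

variable (S) in
lemma card_coresIn_src_le : (coresIn S (B.src .core)).card
    ≤ (rootsIn S (B.tgt .core)).card + ((B.cover F).crossing S).card :=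
  (B.cover F).card_le_card_add_crossing S (f := fun i => (.inl i, B.src .core)) (φ := id)
    (fun i j h => Sum.inl_injective (Prod.mk.inj h).1) Function.injective_id (B.col .core)
    (fun i hi => (Finset.mem_filter.1 hi).2) fun i hi =>
      Finset.mem_filter.2 ⟨Finset.mem_univ _, by rwa [B.move_core_root F] at hi⟩

end Base

/-- The permutations `F.f` expand the sets containing at most half of the leaves. -/
def Fibre.Expanding (F : Fibre d J L h) : Prop :=
  ∀ T : Finset (Leaf J L h), 2 * T.card ≤ Fintype.card (Leaf J L h) →
    T.card ≤ 2 * ∑ j, ((T.image (F.f j)) \ T).card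

variable {S} in
lemma Base.card_leavesIn_le [Fintype Q] (B : Base d Q) {F : Fibre d J L h} (hF : F.Expanding)
    (hS : 2 * (leavesIn S).card ≤ Fintype.card (Leaf J L h)) :
    (leavesIn S).card ≤ 120 * (B.mixedNodes S F).card := by
  have hsum : ∑ j, (((leavesIn S).image (F.f j)) \ leavesIn S).card
      ≤ 30 * (2 * (B.mixedNodes S F).card) := by
    simpa using Finset.sum_le_card_nsmul Finset.univ _ _
      fun j _ => B.card_image_sdiff_leavesIn_le F j
  have := hF _ hS
  omega

end Expansion

namespace Base

variable {d : ℕ} {Q : Type*} [Group Q] [Fintype Q] (B : Base d Q)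

lemma exists_card_coresIn_le_at (x : Q) : ∃ M : ℕ, ∀ (J : Type*) [Fintype J] (L h : ℕ)
    (F : Fibre d J L h) (S : Finset (Idx J L h × Q)),
    (coresIn S x).card ≤ (rootsIn S (B.tgt .core)).card + M * ((B.cover F).crossing S).card := by
  induction B.tree x (B.src .core) using Relation.ReflTransGen.head_induction_on with
  | refl => exact ⟨1, fun J _ L h F S => by simpa using B.card_coresIn_src_le S F⟩
  | @head x y hxy _ ih =>
    obtain ⟨M, hM⟩ := ih
    obtain ⟨k, rfl, hx, hy⟩ := hxy
    refine ⟨M + 1, fun J _ L h F S => ?_⟩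
    have hk : ¬ IsCut B.s (B.src .core) (B.col .core) x k := by
      rintro ⟨rfl, rfl | hend⟩
      · exact hx ⟨.core, rfl⟩
      · exact hy ⟨.core, Prod.ext (by rw [hend, B.mul_s_mul_s]) rfl⟩
    have := B.card_coresIn_le_mul S F hk
    have := hM J L h F S
    rw [add_mul]
    omega

lemma exists_card_coresIn_le : ∃ M : ℕ, ∀ (J : Type*) [Fintype J] (L h : ℕ)
    (F : Fibre d J L h) (S : Finset (Idx J L h × Q)) (x : Q),
    (coresIn S x).card ≤ (rootsIn S (B.tgt .core)).card + M * ((B.cover F).crossing S).card := by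
  choose M hM using B.exists_card_coresIn_le_at
  refine ⟨∑ x, M x, fun J _ L h F S x => (hM x J L h F S).trans ?_⟩
  gcongr
  exact Finset.single_le_sum (f := M) (fun _ _ => Nat.zero_le _) (Finset.mem_univ x)

lemma exists_card_le_mul_crossing {L : ℕ} (hL : 1 ≤ L) : ∃ M : ℕ, 0 < M ∧
    ∀ (J : Type*) [Fintype J] (h : ℕ) (F : Fibre d J L h), F.Expanding →
    ∀ S : Finset (Idx J L h × Q), 2 * (leavesIn S).card ≤ Fintype.card (Leaf J L h) →
      S.card ≤ M * ((B.cover F).crossing S).card := by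
  obtain ⟨M, hM⟩ := B.exists_card_coresIn_le
  refine ⟨Fintype.card Q * (488 * L + 2 + M), by positivity, fun J _ h F hF S hS => ?_⟩
  set c := ((B.cover F).crossing S).card
  have hnodes : (nodesIn S).card + (B.mixedNodes S F).card ≤ (244 * L + 1) * c := by
    have hmixed : (B.mixedNodes S F).card ≤ c := B.card_mixedNodes_le S F
    calc (nodesIn S).card + (B.mixedNodes S F).card
        ≤ 2 * L * (120 * (B.mixedNodes S F).card) + 4 * L * (B.mixedNodes S F).card
          + (B.mixedNodes S F).card := Nat.add_le_add_right ((B.card_nodesIn_le F hL).trans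
            (by gcongr; exact B.card_leavesIn_le hF hS)) _
      _ = (244 * L + 1) * (B.mixedNodes S F).card := by ring
      _ ≤ (244 * L + 1) * c := by gcongr
  have hcores : (S.filter fun v => ¬ v.1.isRight = true).card
      ≤ Fintype.card Q * ((244 * L + 1) * c + M * c) := by
    rw [card_filter_not_isRight, ← smul_eq_mul, ← Finset.card_univ]
    exact Finset.sum_le_card_nsmul _ _ _ fun x _ => (hM J L h F S x).trans
      (Nat.add_le_add_right ((B.card_rootsIn_le F _).trans hnodes) _)
  calc S.card = (S.filter fun v => v.1.isRight = true).card
        + (S.filter fun v => ¬ v.1.isRight = true).card :=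
          (Finset.card_filter_add_card_filter_not _).symm
    _ ≤ Fintype.card Q * ((244 * L + 1) * c)
        + Fintype.card Q * ((244 * L + 1) * c + M * c) :=
          Nat.add_le_add ((B.card_filter_isRight_le F).trans (by gcongr)) hcores
    _ = Fintype.card Q * (488 * L + 2 + M) * c := by ring

omit [Fintype Q] in
lemma exists_isRegularExpander [Finite Q] {L : ℕ} (hL : 1 ≤ L) (hs : Function.Injective B.s) :
    ∃ b > (0 : ℝ), ∀ (J : Type*) [Fintype J] (h : ℕ) (F : Fibre d J L h), F.Expanding →
    ∀ (W : Type) [Fintype W] (e : W ≃ Idx J L h × Q),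
      IsRegularExpander ((B.cover F).graph e) b d := by
  have := Fintype.ofFinite Q
  obtain ⟨M, hM_pos, hM⟩ := B.exists_card_le_mul_crossing hL
  refine ⟨1 / (2 * M), by positivity, fun J _ h F hF W _ e =>
    (B.cover F).isRegularExpander_graph e hs hM_pos fun T hT => ?_⟩
  have hleaves := card_leavesIn_compl T
  by_cases hT' : 2 * (leavesIn T).card ≤ Fintype.card (Leaf J L h)
  · exact hM J h F hF T hT'
  · have hcompl := hM J h F hF Tᶜ (by omega)
    rw [Cover.crossing_compl, Finset.card_compl] at hcompl
    omega

end Base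

/-! ### Long open paths in locally tree-like covers -/

section Survival

open MeasureTheory

namespace Cover

section Walks

variable {d : ℕ} {Q I : Type*} [Group Q] (C : Cover d Q I)

/-- The end of the walk from `v` whose successive edges have the colours `w`. -/
def walkEnd (v : I × Q) (w : List (Fin d)) : I × Q :=
  w.foldl (fun v k => C.move k v) v

/-- Nonbacktracking walks of length at most `n` with the same initial vertex have distinct ends,
so that balls of radius `n` are trees. -/
def TreeLike (n : ℕ) : Prop :=
  ∀ (v : I × Q) (w w' : List (Fin d)), w.IsChain (· ≠ ·) → w.length ≤ n → w'.IsChain (· ≠ ·) →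
    w'.length ≤ n → C.walkEnd v w = C.walkEnd v w' → w = w'

/-- The names of the last edges of the nonbacktracking walks from `v` of positive length at most
`n` with first colour `k`; the walk consists of the colours `w` followed by `k'`. -/
def branchLabels (n : ℕ) (v : I × Q) (k : Fin d) : Set ((I × Q) × Fin d) :=
  {l | ∃ w k', (w ++ [k']).IsChain (· ≠ ·) ∧ w.length < n ∧ k ∈ (w ++ [k']).head? ∧
    l = C.label k' (C.walkEnd v w)}

variable {C} {n m : ℕ} {v : I × Q} {k k' : Fin d} {w w' : List (Fin d)}

lemma walkEnd_cons : C.walkEnd v (k :: w) = C.walkEnd (C.move k v) w := rfl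

lemma walkEnd_concat : C.walkEnd v (w ++ [k]) = C.move k (C.walkEnd v w) := by
  simp [walkEnd]

lemma TreeLike.mono (h : C.TreeLike n) (hmn : m ≤ n) : C.TreeLike m :=
  fun v w w' hw hl hw' hl' => h v w w' hw (hl.trans hmn) hw' (hl'.trans hmn)

lemma eq_or_eq_move_of_label_eq {v' : I × Q} (h : C.label k v = C.label k' v') :
    k = k' ∧ (v = v' ∨ v' = C.move k v) := by
  obtain rfl : k = k' := congrArg Prod.snd h
  refine ⟨rfl, ?_⟩
  have hend := congrArg Prod.fst h
  simp only [label] at hend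
  split_ifs at hend
  · exact Or.inl hend
  · exact Or.inr (by rw [hend, C.move_move])
  · exact Or.inr hend.symm
  · exact Or.inl (by rw [← C.move_move k v, hend, C.move_move])

lemma TreeLike.concat_eq_concat (hC : C.TreeLike n) (hw : (w ++ [k]).IsChain (· ≠ ·))
    (hwn : w.length < n) (hw' : (w' ++ [k']).IsChain (· ≠ ·)) (hwn' : w'.length < n)
    (h : C.label k (C.walkEnd v w) = C.label k' (C.walkEnd v w')) : w ++ [k] = w' ++ [k'] := by
  obtain ⟨rfl, hend | hend⟩ := eq_or_eq_move_of_label_eq h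
  · rw [hC v w w' hw.left_of_append hwn.le hw'.left_of_append hwn'.le hend]
  · rw [← walkEnd_concat] at hend
    rw [hC v w' (w ++ [k]) hw'.left_of_append hwn'.le hw (by simpa using hwn) hend] at hw'
    simp at hw'

lemma TreeLike.disjoint_branchLabels (hC : C.TreeLike n) (v : I × Q) (hk : k ≠ k') :
    Disjoint (C.branchLabels n v k) (C.branchLabels n v k') := by
  rw [Set.disjoint_left]
  rintro l ⟨w, a, hw, hwn, hhead, rfl⟩ ⟨w', a', hw', hwn', hhead', h⟩
  rw [hC.concat_eq_concat hw hwn hw' hwn' h] at hhead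
  exact hk (Option.some_injective _ (hhead.symm.trans hhead'))

lemma label_mem_branchLabels (hn : 1 ≤ n) : C.label k v ∈ C.branchLabels n v k :=
  ⟨[], k, by simp, hn, by simp, rfl⟩

lemma branchLabels_move_subset (hk : k' ≠ k) :
    C.branchLabels n (C.move k v) k' ⊆ C.branchLabels (n + 1) v k := by
  rintro l ⟨w, a, hw, hwn, hhead, rfl⟩
  refine ⟨k :: w, a, List.isChain_cons.2 ⟨fun y hy => ?_, hw⟩, by simpa using hwn, by simp, rfl⟩
  exact Option.some_injective _ (hhead.symm.trans hy) ▸ hk.symm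

lemma TreeLike.label_notMem_branchLabels_move (hC : C.TreeLike (n + 1)) (hk : k' ≠ k) :
    C.label k v ∉ C.branchLabels n (C.move k v) k' := by
  rintro ⟨w, a, hw, hwn, hhead, h⟩
  have hchain : (k :: w ++ [a]).IsChain (· ≠ ·) := List.isChain_cons.2
    ⟨fun y hy => Option.some_injective _ (hhead.symm.trans hy) ▸ hk.symm, hw⟩
  have := hC.concat_eq_concat (v := v) (w := []) (by simp) (by simp) hchain (by simpa using hwn) h
  simp at this

end Walks

variable {d : ℕ} {Q I : Type*} [Group Q]

/-- There is an open nonbacktracking path of `n` uncut edges from `v` whose first colour is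
not `i`. -/
def Survives (C : Cover d Q I) (xc : Q) (kc : Fin d) (ω : (I × Q) × Fin d → Bool) :
    ℕ → I × Q → Fin d → Prop
  | 0, _, _ => True
  | n + 1, v, i => ∃ k ∈ nextColours C.s xc kc v.2 i,
      ω (C.label k v) = true ∧ Survives C xc kc ω n (C.move k v) k

/-- The names of the edges which nonbacktracking walks of length at most `n` from `v` with first
colour other than `i` can use. -/
def survivalLabels (C : Cover d Q I) (n : ℕ) (v : I × Q) (i : Fin d) : Set ((I × Q) × Fin d) :=
  ⋃ k, ⋃ _ : k ≠ i, C.branchLabels n v k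

/-- Adjacency along open uncut edges. -/
def OpenStep (C : Cover d Q I) (xc : Q) (kc : Fin d) (ω : (I × Q) × Fin d → Bool)
    (v v' : I × Q) : Prop :=
  ∃ k, ¬ IsCut C.s xc kc v.2 k ∧ v' = C.move k v ∧ ω (C.label k v) = true

variable {C : Cover d Q I} {xc : Q} {kc : Fin d}

lemma survivalLabels_move_subset (n : ℕ) (v : I × Q) (k : Fin d) :
    C.survivalLabels n (C.move k v) k ⊆ C.branchLabels (n + 1) v k :=
  Set.iUnion₂_subset fun _ hk' => branchLabels_move_subset hk'

lemma dependsOn_survives (n : ℕ) (v : I × Q) (i : Fin d) :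
    DependsOn (fun ω => C.Survives xc kc ω n v i) (C.survivalLabels n v i) := by
  induction n generalizing v i with
  | zero => exact fun _ _ _ => rfl
  | succ n ih =>
    intro ω ω' h
    have hbranch {k : Fin d} (hk : k ∈ nextColours C.s xc kc v.2 i) {l : (I × Q) × Fin d}
        (hl : l ∈ C.branchLabels (n + 1) v k) : ω l = ω' l :=
      h l (Set.mem_iUnion₂.2 ⟨k, (mem_nextColours.1 hk).1, hl⟩)
    refine propext (exists_congr fun k => and_congr_right fun hk => ?_)
    rw [hbranch hk (label_mem_branchLabels (by omega))]
    exact and_congr_right fun _ =>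
      (ih _ _ fun l hl => hbranch hk (survivalLabels_move_subset n v k hl)).to_iff

lemma Survives.exists_walk {ω : (I × Q) × Fin d → Bool} {n : ℕ} {v : I × Q} {i : Fin d}
    (h : C.Survives xc kc ω n v i) :
    ∃ w : List (Fin d), (i :: w).IsChain (· ≠ ·) ∧ w.length = n ∧
      ∀ m, Relation.ReflTransGen (C.OpenStep xc kc ω) v (C.walkEnd v (w.take m)) := by
  induction n generalizing v i with
  | zero => exact ⟨[], by simp, rfl, fun m => by simp [walkEnd, Relation.ReflTransGen.refl]⟩
  | succ n ih =>
    obtain ⟨k, hk, hopen, hsurvives⟩ := h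
    obtain ⟨hki, hcut⟩ := mem_nextColours.1 hk
    obtain ⟨w, hw, hlength, hreach⟩ := ih hsurvives
    refine ⟨k :: w, List.isChain_cons_cons.2 ⟨hki.symm, hw⟩, by simp [hlength], fun m => ?_⟩
    cases m with
    | zero => exact Relation.ReflTransGen.refl
    | succ m => exact Relation.ReflTransGen.head ⟨k, hcut, rfl, hopen⟩ (hreach m)

lemma Survives.exists_cluster {ω : (I × Q) × Fin d → Bool} {n : ℕ} {v : I × Q} {i : Fin d}
    (hC : C.TreeLike n) (h : C.Survives xc kc ω n v i) :
    ∃ T : Finset (I × Q), n ≤ T.card ∧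
      ∀ y ∈ T, Relation.ReflTransGen (C.OpenStep xc kc ω) v y := by
  obtain ⟨w, hw, hlength, hreach⟩ := h.exists_walk
  have hinj : Set.InjOn (fun m => C.walkEnd v (w.take m)) (Finset.range n) := by
    intro m hm m' hm' hmm
    simp only [Finset.coe_range, Set.mem_Iio] at hm hm'
    have htake := congrArg List.length <|
      hC v _ _ (hw.tail.take m) (by simp [hlength]) (hw.tail.take m')
        (by simp [hlength]) hmm
    simp only [List.length_take, List.tail_cons, hlength] at htake
    omega
  refine ⟨(Finset.range n).image fun m => C.walkEnd v (w.take m), ?_, ?_⟩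
  · rw [Finset.card_image_of_injOn hinj, Finset.card_range]
  · simp only [Finset.forall_mem_image]
    exact fun m _ => hreach m

variable [Fintype Q] [Fintype I] {p : unitInterval}

lemma bernoulliPi_real_survives_succ {n : ℕ} (hC : C.TreeLike (n + 1)) (v : I × Q) (i : Fin d) :
    (bernoulliPi ((I × Q) × Fin d) p).real {ω | C.Survives xc kc ω (n + 1) v i}
      = 1 - ∏ k ∈ nextColours C.s xc kc v.2 i, (1 - p *
        (bernoulliPi ((I × Q) × Fin d) p).real {ω | C.Survives xc kc ω n (C.move k v) k}) := by
  have hopen (k : Fin d) : DependsOn (fun ω : (I × Q) × Fin d → Bool => ω (C.label k v) = true)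
      {C.label k v} := fun ω ω' h => congrArg (· = true) (h _ rfl)
  have hdep (k : Fin d) : DependsOn (fun ω : (I × Q) × Fin d → Bool => ω (C.label k v) = true ∧
      C.Survives xc kc ω n (C.move k v) k) (C.branchLabels (n + 1) v k) := fun ω ω' h =>
    congrArg₂ And (hopen k fun l hl => h l (hl ▸ label_mem_branchLabels (by omega)))
      (dependsOn_survives n _ k fun l hl => h l (survivalLabels_move_subset n v k hl))
  simp only [Survives]
  rw [bernoulliPi_real_exists _ (fun k _ k' _ hk => hC.disjoint_branchLabels v hk)
    fun k _ => hdep k]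
  congr! 3 with k
  rw [bernoulliPi_real_and ?_ (hopen k) (dependsOn_survives n _ k), bernoulliPi_real_eval]
  simp only [Set.disjoint_singleton_left, survivalLabels, Set.mem_iUnion, not_exists]
  exact fun k' hk' => hC.label_notMem_branchLabels_move hk'

end Cover

lemma div_one_add_le_one_sub_prod {ι : Type*} (S : Finset ι) (z : ι → ℝ) (hz : ∀ k ∈ S, z k ≤ 1)
    {η : ℝ} (hsum0 : 0 ≤ ∑ k ∈ S, z k) (hsum : ∑ k ∈ S, z k ≤ η) :
    (∑ k ∈ S, z k) / (1 + η) ≤ 1 - ∏ k ∈ S, (1 - z k) := by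
  set Z := ∑ k ∈ S, z k with hZ
  have hprod : ∏ k ∈ S, (1 - z k) ≤ Real.exp (-Z) := by
    rw [hZ, ← Finset.sum_neg_distrib, Real.exp_sum]
    exact Finset.prod_le_prod (fun k hk => sub_nonneg.2 (hz k hk)) fun k _ => by
      linarith [Real.add_one_le_exp (-z k)]
  have hexp : Real.exp (-Z) ≤ 1 / (1 + Z) := by
    rw [Real.exp_neg, ← one_div]
    exact one_div_le_one_div_of_le (by linarith) (by linarith [Real.add_one_le_exp Z])
  calc Z / (1 + η) ≤ Z / (1 + Z) := by gcongr
    _ = 1 - 1 / (1 + Z) := by field_simp; ring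
    _ ≤ 1 - ∏ k ∈ S, (1 - z k) := by linarith

lemma exists_pos_mul_le {η : ℝ} (hη : 0 < η) (H : ℝ) : ∃ θ > (0 : ℝ), ∀ y ≤ H, θ * y ≤ η := by
  refine ⟨η / (|H| + 1), by positivity, fun y hy => ?_⟩
  rw [div_mul_eq_mul_div, div_le_iff₀ (by positivity)]
  gcongr
  linarith [le_abs_self H]

namespace Cover

variable {d : ℕ} {Q I : Type*} [Group Q] [Fintype Q] [Fintype I] {C : Cover d Q I} {xc : Q}
  {kc : Fin d} {p : unitInterval}

/-- By induction on `n`, since `1 - ∏ (1 - z k)` is almost `∑ z k` for small `z`. -/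
lemma le_bernoulliPi_real_survives {η : ℝ} {f : Q → Fin d → ℝ} (hη : 0 ≤ η)
    (hf0 : ∀ x i, 0 ≤ f x i) (hf1 : ∀ x i, f x i ≤ 1) (hfη : ∀ x i, d * f x i ≤ η)
    (hf : ∀ x i, (1 + η) * f x i ≤ p * nextSum C.s xc kc f x i) {n : ℕ} (hC : C.TreeLike n)
    (v : I × Q) (i : Fin d) :
    f v.2 i ≤ (bernoulliPi ((I × Q) × Fin d) p).real {ω | C.Survives xc kc ω n v i} := by
  induction n generalizing v i with
  | zero => simpa [Survives] using hf1 v.2 i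
  | succ n ih =>
    rw [bernoulliPi_real_survives_succ hC]
    have hz1 (k : Fin d) : p * f (v.2 * C.s k) k ≤ 1 :=
      mul_le_one₀ p.2.2 (hf0 _ _) (hf1 _ _)
    have hsum : ∑ k ∈ nextColours C.s xc kc v.2 i, p * f (v.2 * C.s k) k
        = p * nextSum C.s xc kc f v.2 i := by
      rw [nextSum, Finset.mul_sum]
    have hsumη : p * nextSum C.s xc kc f v.2 i ≤ η := by
      have hterm (k : Fin d) : p * f (v.2 * C.s k) k ≤ η / d := by
        rw [le_div_iff₀' (by exact_mod_cast i.pos)]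
        exact (mul_le_mul_of_nonneg_left
          (mul_le_of_le_one_left (hf0 _ _) p.2.2) d.cast_nonneg).trans (hfη _ _)
      calc p * nextSum C.s xc kc f v.2 i
          ≤ (nextColours C.s xc kc v.2 i).card • (η / d) :=
            hsum ▸ Finset.sum_le_card_nsmul _ _ _ fun k _ => hterm k
        _ ≤ d • (η / d) := nsmul_le_nsmul_left (by positivity) (card_finset_fin_le _)
        _ = η := by
            rw [nsmul_eq_mul, mul_div_cancel₀ _ (by exact_mod_cast i.pos.ne')]
    calc f v.2 i ≤ (∑ k ∈ nextColours C.s xc kc v.2 i, p * f (v.2 * C.s k) k) / (1 + η) := by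
          rw [le_div_iff₀' (by linarith), hsum]
          exact hf _ _
      _ ≤ 1 - ∏ k ∈ nextColours C.s xc kc v.2 i, (1 - p * f (v.2 * C.s k) k) := by
          refine div_one_add_le_one_sub_prod _ _ (fun k _ => hz1 k) ?_ (hsum.trans_le hsumη)
          exact Finset.sum_nonneg fun k _ => mul_nonneg p.2.1 (hf0 _ _)
      _ ≤ _ := by
          gcongr with k
          · exact fun k _ => sub_nonneg.2 (mul_le_one₀ p.2.2 measureReal_nonneg measureReal_le_one)
          · exact p.2.1
          · exact ih (hC.mono n.le_succ) (C.move k v) k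

lemma exists_le_bernoulliPi_real_survives (d : ℕ) (hd : 3 ≤ d) (p : unitInterval)
    (hp : 1 / ((d : ℝ) - 1) < p) : ∃ g : ℕ, ∃ γ > (0 : ℝ), ∀ (Q : Type*) [Group Q] [Fintype Q]
      (I : Type*) [Fintype I] (C : Cover d Q I), FreeUpTo C.s g → ∀ (xc : Q) (kc : Fin d) (n : ℕ),
      C.TreeLike n → ∀ v i,
        γ ≤ (bernoulliPi ((I × Q) × Fin d) p).real {ω | C.Survives xc kc ω n v i} := by
  obtain ⟨g, η, hη, H, hweight⟩ := exists_supercritical_weight d hd p hp p.2.2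
  obtain ⟨θ, hθ, hθH⟩ := exists_pos_mul_le (η := min 1 η / d) (by positivity) H
  refine ⟨g, θ / 2, by positivity, fun Q _ _ I _ C hs xc kc n hC v i => ?_⟩
  obtain ⟨f, hf_half, hf_le, hf⟩ := hweight Q C.s C.s_mul hs xc kc
  have hsmall (x i) : d * (θ * f x i) ≤ min 1 η := by
    have := hθH _ (hf_le x i)
    rwa [le_div_iff₀' (by positivity)] at this
  have hnonneg (x i) : 0 ≤ θ * f x i := mul_nonneg hθ.le (by linarith [hf_half x i])
  have hd1 : (1 : ℝ) ≤ d := by exact_mod_cast (by omega : 1 ≤ d)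
  refine le_trans ?_ (le_bernoulliPi_real_survives (f := fun x i => θ * f x i) hη.le hnonneg
    (fun x i => ?_) (fun x i => (hsmall x i).trans (min_le_right _ _)) (fun x i => ?_) hC v i)
  · nlinarith [hf_half v.2 i]
  · exact (le_mul_of_one_le_left (hnonneg x i) hd1).trans ((hsmall x i).trans (min_le_left _ _))
  · calc (1 + η) * (θ * f x i) = θ * ((1 + η) * f x i) := by ring
      _ ≤ θ * (p * nextSum C.s xc kc f x i) := mul_le_mul_of_nonneg_left (hf x i) hθ.le
      _ = p * nextSum C.s xc kc (fun x i => θ * f x i) x i := by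
          simp only [nextSum, Finset.mul_sum]
          exact Finset.sum_congr rfl fun k _ => by ring

end Cover

end Survival

/-! ### Good trees -/

section SecondMoment

open MeasureTheory ProbabilityTheory

variable {J β Ω : Type*} [Fintype J] [MeasurableSpace Ω] {μ : Measure Ω} [IsProbabilityMeasure μ]

lemma covariance_le_one {X Y : Ω → ℝ} (hX : MemLp X 2 μ) (hY : MemLp Y 2 μ)
    (hX01 : ∀ ω, X ω ∈ Set.Icc 0 1) (hY01 : ∀ ω, Y ω ∈ Set.Icc 0 1) : cov[X, Y; μ] ≤ 1 := by
  have hmul : μ[X * Y] ≤ 1 := by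
    refine (integral_mono (hX.integrable_mul hY) (integrable_const 1)
      fun ω => mul_le_one₀ (hX01 ω).2 (hY01 ω).1 (hY01 ω).2).trans (by simp)
  have hmean : 0 ≤ μ[X] * μ[Y] :=
    mul_nonneg (integral_nonneg fun ω => (hX01 ω).1) (integral_nonneg fun ω => (hY01 ω).1)
  rw [covariance_eq_sub hX hY]
  linarith

lemma variance_sum_le_of_blocks {X : J → Ω → ℝ} (hX : ∀ j, MemLp (X j) 2 μ)
    (hX01 : ∀ j ω, X j ω ∈ Set.Icc 0 1) (r : J → β) {m : ℕ}
    (hm : ∀ b, (Finset.univ.filter fun j => r j = b).card ≤ m)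
    (hind : ∀ j j', r j' ≠ r j → IndepFun (X j) (X j') μ) :
    Var[∑ j, X j; μ] ≤ m * Fintype.card J := by
  have hcov (j j' : J) : cov[X j, X j'; μ] ≤ if r j' = r j then 1 else 0 := by
    split_ifs with h
    · exact covariance_le_one (hX j) (hX j') (hX01 j) (hX01 j')
    · exact ((hind j j' h).covariance_eq_zero (hX j) (hX j')).le
  calc Var[∑ j, X j; μ] = ∑ j, ∑ j', cov[X j, X j'; μ] := variance_sum hX
    _ ≤ ∑ j, ∑ j', if r j' = r j then (1 : ℝ) else 0 := by gcongr; exact hcov _ _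
    _ ≤ ∑ _ : J, (m : ℝ) := by
      gcongr with j
      rw [Finset.sum_boole]
      exact_mod_cast hm (r j)
    _ = m * Fintype.card J := by simp [mul_comm]

lemma measureReal_lt_half_le_variance {X : Ω → ℝ} (hX : MemLp X 2 μ) {a : ℝ} (ha : 0 < a)
    (haX : a ≤ μ[X]) : μ.real {ω | X ω < a / 2} ≤ 4 * Var[X; μ] / a ^ 2 := by
  have hsub : {ω | X ω < a / 2} ⊆ {ω | a / 2 ≤ |X ω - μ[X]|} := by
    intro ω (hω : X ω < a / 2)
    change a / 2 ≤ |X ω - μ[X]|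
    exact le_abs.2 (Or.inr (by linarith))
  calc μ.real {ω | X ω < a / 2} ≤ μ.real {ω | a / 2 ≤ |X ω - μ[X]|} := measureReal_mono hsub
    _ ≤ Var[X; μ] / (a / 2) ^ 2 :=
      ENNReal.toReal_le_of_le_ofReal (div_nonneg (variance_nonneg _ _) (by positivity))
        (meas_ge_le_variance_div_sq hX (by positivity))
    _ = 4 * Var[X; μ] / a ^ 2 := by ring

lemma bernoulliPi_real_card_lt_le [Nonempty J] {E : Type*} [Fintype E] {p : unitInterval}
    {A : J → (E → Bool) → Prop} (r : J → β) {m : ℕ}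
    (hm : ∀ b, (Finset.univ.filter fun j => r j = b).card ≤ m) {S : β → Set E}
    (hS : Pairwise fun b b' => Disjoint (S b) (S b')) (hA : ∀ j, DependsOn (A j) (S (r j)))
    {γ : ℝ} (hγ : 0 < γ) (hAγ : ∀ j, γ ≤ (bernoulliPi E p).real {ω | A j ω}) :
    (bernoulliPi E p).real
      {ω | ((Finset.univ.filter fun j => A j ω).card : ℝ) < γ / 2 * Fintype.card J}
      ≤ 4 * m / (γ ^ 2 * Fintype.card J) := by
  set X : J → (E → Bool) → ℝ := fun j ω => if A j ω then 1 else 0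
  have hX (j : J) : MemLp (X j) 2 (bernoulliPi E p) := .of_discrete
  have hX01 (j : J) (ω : E → Bool) : X j ω ∈ Set.Icc 0 1 := by
    simp only [X]; split_ifs <;> simp
  have hmean : γ * Fintype.card J ≤ (bernoulliPi E p)[∑ j, X j] := by
    have hXj (j : J) : (bernoulliPi E p)[X j] = (bernoulliPi E p).real {ω | A j ω} := by
      rw [← integral_indicator_one .of_discrete]
      rfl
    simp only [Finset.sum_apply]
    rw [integral_finsetSum _ fun j _ => .of_finite]
    simp only [hXj]
    simpa [mul_comm] using Finset.card_nsmul_le_sum Finset.univ _ γ fun j _ => hAγ j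
  have hvar := variance_sum_le_of_blocks hX hX01 r hm fun j j' h =>
    indepFun_of_dependsOn (hS h.symm) (fun ω ω' hω => by simp only [X, hA j hω])
      (fun ω ω' hω => by simp only [X, hA j' hω])
  have hcard (ω : E → Bool) :
      ((Finset.univ.filter fun j => A j ω).card : ℝ) = (∑ j, X j) ω := by simp [X]
  calc _ = (bernoulliPi E p).real {ω | (∑ j, X j) ω < γ * Fintype.card J / 2} := by
        simp only [hcard, div_mul_eq_mul_div]
    _ ≤ 4 * Var[∑ j, X j; bernoulliPi E p] / (γ * Fintype.card J) ^ 2 :=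
      measureReal_lt_half_le_variance .of_discrete (mul_pos hγ (by simp [Fintype.card_pos])) hmean
    _ ≤ 4 * (m * Fintype.card J) / (γ * Fintype.card J) ^ 2 := by gcongr
    _ = 4 * m / (γ ^ 2 * Fintype.card J) := by field_simp

end SecondMoment

section Good

open MeasureTheory

variable {d : ℕ} {Q J : Type*} [Group Q]

section ColourCover

/-- The cover in which the voltage `κ k` of an edge depends on its colour `k` only. -/
def OrientedCayley.colourCover (X : OrientedCayley d Q) (κ : Fin d → Equiv.Perm J) :
    Cover d Q J where
  toOrientedCayley := X
  π _ k := κ k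

variable {X : OrientedCayley d Q} {κ : Fin d → Equiv.Perm J} {β : Type*} {r : J → β}

lemma OrientedCayley.block_move (hr : ∀ k j, r (κ k j) = r j) (k : Fin d) (v : J × Q) :
    r ((X.colourCover κ).move k v).1 = r v.1 := by
  by_cases ho : X.o v.2 k = true
  · simp [Cover.move, colourCover, ho, hr]
  · simpa [Cover.move, colourCover, ho] using (hr k ((κ k).symm v.1)).symm

lemma OrientedCayley.block_walkEnd (hr : ∀ k j, r (κ k j) = r j) (v : J × Q) (w : List (Fin d)) :
    r ((X.colourCover κ).walkEnd v w).1 = r v.1 := by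
  induction w generalizing v with
  | nil => rfl
  | cons k w ih => rw [Cover.walkEnd_cons, ih, block_move hr]

lemma OrientedCayley.block_of_mem_survivalLabels (hr : ∀ k j, r (κ k j) = r j) {n : ℕ} {v : J × Q}
    {i : Fin d} {l : (J × Q) × Fin d} (hl : l ∈ (X.colourCover κ).survivalLabels n v i) :
    r l.1.1 = r v.1 := by
  obtain ⟨_, _, w, k, -, -, -, rfl⟩ := Set.mem_iUnion₂.1 hl
  rw [Cover.label]
  split_ifs
  · exact block_walkEnd hr v w
  · rw [block_move hr, block_walkEnd hr]

end ColourCover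

variable {L h : ℕ}

/-- The inclusion of the core vertices on the side `σ`. -/
def coreVertex (L h : ℕ) (σ : Bool) (v : J × Q) : Idx J L h × Q := (.inl (σ, v.1), v.2)

/-- The inclusion of the names of the core edges on the side `σ`. -/
def coreLabel (L h : ℕ) (σ : Bool) (l : (J × Q) × Fin d) : (Idx J L h × Q) × Fin d :=
  (coreVertex L h σ l.1, l.2)

omit [Group Q] in
lemma coreLabel_injective (σ : Bool) :
    Function.Injective (coreLabel (d := d) (Q := Q) (J := J) L h σ) := by
  rintro ⟨⟨j, x⟩, k⟩ ⟨⟨j', x'⟩, k'⟩ hl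
  simp_all [coreLabel, coreVertex]

/-- The core, or the tree, to which an element of the fibre belongs. -/
def owner : Idx J L h → Bool × J := Sum.elim id Prod.fst

variable (B : Base d Q)

/-- The cover whose vertices are the core vertices of one side. -/
def Base.coreCover (κ : Fin d → Equiv.Perm J) : Cover d Q J := B.toOrientedCayley.colourCover κ

/-- The names of the edges at the root of a tree, and of the edge joining it to the core. -/
def nearLabels [Fintype Q] (L h : ℕ) (i : Bool × J) : Finset ((Idx J L h × Q) × Fin d) :=
  insert ((.inl i, B.src .core), B.col .core)
    (Finset.univ.image fun l : Q × Fin d => ((.inr (i, rootAddr L h), l.1), l.2))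

/-- The tree `i` is good if all edges at its root are open and there is an open path of `n` edges
from the end of its `core` edge in the cores. -/
def Good [Fintype Q] (κ : Fin d → Equiv.Perm J) (n : ℕ) (ω : (Idx J L h × Q) × Fin d → Bool)
    (i : Bool × J) : Prop :=
  (B.coreCover κ).Survives (B.src .core) (B.col .core) (ω ∘ coreLabel L h i.1) n
    (i.2, B.src .core) (B.col .core) ∧ ∀ e ∈ nearLabels B L h i, ω e = true

variable [Fintype Q] {κ : Fin d → Equiv.Perm J}

lemma dependsOn_good {β : Type*} {r : J → β} (hr : ∀ k j, r (κ k j) = r j) (n : ℕ)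
    (i : Bool × J) :
    DependsOn (fun ω => Good (L := L) (h := h) B κ n ω i) {e | r (owner e.1.1).2 = r i.2} := by
  intro ω ω' hω
  have hnear : ∀ e ∈ nearLabels B L h i, ω e = ω' e := by
    intro e he
    refine hω e ?_
    simp only [nearLabels, Finset.mem_insert, Finset.mem_image] at he
    rcases he with rfl | ⟨l, -, rfl⟩ <;> rfl
  refine congrArg₂ And (Cover.dependsOn_survives n _ _ fun l hl => hω _ ?_)
    (propext (forall₂_congr fun e he => by rw [hnear e he]))
  exact OrientedCayley.block_of_mem_survivalLabels hr hl

lemma disjoint_image_survivalLabels_nearLabels {n : ℕ} (hn : 1 ≤ n)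
    (htree : (B.coreCover κ).TreeLike n) (i : Bool × J) :
    Disjoint (coreLabel L h i.1 ''
      (B.coreCover κ).survivalLabels n (i.2, B.src .core) (B.col .core))
      (nearLabels B L h i : Set ((Idx J L h × Q) × Fin d)) := by
  rw [Set.disjoint_left]
  rintro _ ⟨l, hl, rfl⟩ hnear
  simp only [nearLabels, Finset.coe_insert, Finset.coe_image, Set.mem_insert_iff] at hnear
  obtain hcore | ⟨l', -, hl'⟩ := hnear
  · have hlabel : l = (B.coreCover κ).label (B.col .core) (i.2, B.src .core) := by
      refine coreLabel_injective i.1 (hcore.trans ?_)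
      simp [coreLabel, coreVertex, Cover.label, Base.coreCover, OrientedCayley.colourCover, B.o_mob]
    obtain ⟨k, hk, hlk⟩ := Set.mem_iUnion₂.1 hl
    exact Set.disjoint_left.1 (htree.disjoint_branchLabels _ hk) hlk
      (hlabel ▸ Cover.label_mem_branchLabels hn)
  · simp [coreLabel, coreVertex] at hl'

variable [Fintype J] {p : unitInterval}

lemma bernoulliPi_real_good_ge {n : ℕ} (hn : 1 ≤ n) (htree : (B.coreCover κ).TreeLike n) {γ : ℝ}
    (hγ : ∀ v i, γ ≤ (bernoulliPi ((J × Q) × Fin d) p).real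
      {ω | (B.coreCover κ).Survives (B.src .core) (B.col .core) ω n v i}) (i : Bool × J) :
    γ * (p : ℝ) ^ (Fintype.card Q * d + 1)
      ≤ (bernoulliPi _ p).real {ω | Good (L := L) (h := h) B κ n ω i} := by
  have hcard : (nearLabels B L h i).card ≤ Fintype.card Q * d + 1 := by
    refine (Finset.card_insert_le _ _).trans ?_
    gcongr
    exact Finset.card_image_le.trans (by simp)
  simp only [Good]
  rw [bernoulliPi_real_and (disjoint_image_survivalLabels_nearLabels B hn htree i)
      (A := fun ω => (B.coreCover κ).Survives _ _ (ω ∘ coreLabel L h i.1) n _ _)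
      (fun ω ω' hω => Cover.dependsOn_survives n _ _ fun l hl => hω _ ⟨l, hl, rfl⟩)
      (fun ω ω' hω => propext (forall₂_congr fun e he => by rw [hω e he])),
    bernoulliPi_real_forall_eval, bernoulliPi_real_comp (coreLabel_injective i.1)
      fun ω => (B.coreCover κ).Survives (B.src .core) (B.col .core) ω n _ _]
  exact mul_le_mul (hγ _ _) (pow_le_pow_of_le_one p.2.1 p.2.2 hcard) (pow_nonneg p.2.1 _)
    measureReal_nonneg

/-- The good trees on one side. -/
def goodSet (κ : Fin d → Equiv.Perm J) (n : ℕ) (ω : (Idx J L h × Q) × Fin d → Bool) (σ : Bool) :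
    Finset J :=
  Finset.univ.filter fun j => Good B κ n ω (σ, j)

lemma bernoulliPi_real_card_goodSet_lt_le [Nonempty J] {β : Type*} {r : J → β}
    (hr : ∀ k j, r (κ k j) = r j) {m : ℕ}
    (hm : ∀ b, (Finset.univ.filter fun j => r j = b).card ≤ m) {n : ℕ} {γ : ℝ} (hγ : 0 < γ)
    (hgood : ∀ i, γ ≤ (bernoulliPi _ p).real {ω | Good (L := L) (h := h) B κ n ω i}) (σ : Bool) :
    (bernoulliPi _ p).real
      {ω | ((goodSet (L := L) (h := h) B κ n ω σ).card : ℝ) < γ / 2 * Fintype.card J}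
      ≤ 4 * m / (γ ^ 2 * Fintype.card J) :=
  bernoulliPi_real_card_lt_le r hm
    (S := fun b => {e : (Idx J L h × Q) × Fin d | r (owner e.1.1).2 = b})
    (fun b b' hb => Set.disjoint_left.2 fun e (he : r (owner e.1.1).2 = b)
      (he' : r (owner e.1.1).2 = b') => hb (he.symm.trans he'))
    (fun j => dependsOn_good B hr n (σ, j)) hγ fun j => hgood (σ, j)

/-- The cluster, among the cores of the side `σ`, of the end of the `core` edge of the tree
`(σ, j)`. -/
def coreClass (κ : Fin d → Equiv.Perm J) (ω : (Idx J L h × Q) × Fin d → Bool) (σ : Bool) (j : J) :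
    Quot ((B.coreCover κ).OpenStep (B.src .core) (B.col .core) (ω ∘ coreLabel L h σ)) :=
  Quot.mk _ (j, B.src .core)

lemma card_coreClass_le {n : ℕ} (htree : (B.coreCover κ).TreeLike n)
    (ω : (Idx J L h × Q) × Fin d → Bool) (σ : Bool) :
    ((goodSet B κ n ω σ).image (coreClass B κ ω σ)).card * n
      ≤ Fintype.card J * Fintype.card Q := by
  set classes := (goodSet B κ n ω σ).image (coreClass B κ ω σ)
  have hlarge : ∀ c ∈ classes, n ≤ ((Finset.univ.filter fun v : J × Q =>
      Quot.mk _ v ∈ classes).filter fun v => Quot.mk _ v = c).card := by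
    intro c hc
    obtain ⟨j, hj, rfl⟩ := Finset.mem_image.1 hc
    obtain ⟨T, hT, hreach⟩ := (Finset.mem_filter.1 hj).2.1.exists_cluster htree
    refine hT.trans (Finset.card_le_card fun y hy => ?_)
    have hy : Quot.mk _ y = coreClass B κ ω σ j :=
      (Quot.eqvGen_sound (Relation.EqvGen.reflTransGen_le_eqvGen _ _ _ (hreach y hy))).symm
    simpa [hy] using hc
  calc classes.card * n = n * classes.card := mul_comm _ _
    _ ≤ (Finset.univ.filter fun v : J × Q => Quot.mk _ v ∈ classes).card :=
      Finset.mul_card_image_le_card_of_maps_to (fun v hv => (Finset.mem_filter.1 hv).2) n hlarge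
    _ ≤ Fintype.card J * Fintype.card Q := (Finset.card_le_univ _).trans (by simp)

end Good

/-! ### Large clusters -/

section Hubs

variable {d : ℕ} {Q J W : Type*} [Group Q] {L h : ℕ}

lemma Cover.openGraph_adj_move {I : Type*} (C : Cover d Q I) (e : W ≃ I × Q)
    {ω : (I × Q) × Fin d → Bool} {k : Fin d} {v : I × Q} (hω : ω (C.label k v) = true) :
    (C.openGraph e ω).Adj (e.symm v) (e.symm (C.move k v)) :=
  ⟨k, by simp, by simpa using hω⟩

variable (B : Base d Q) (F : Fibre d J L h)

lemma Base.move_coreVertex {k : Fin d} {v : J × Q}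
    (hk : ¬ IsCut B.s (B.src .core) (B.col .core) v.2 k) (σ : Bool) :
    (B.cover F).move k (coreVertex L h σ v)
      = coreVertex L h σ ((B.coreCover F.κ).move k v) := by
  have hinv : (F.κ k)⁻¹ v.1 = F.κ k v.1 := Equiv.Perm.inv_eq_iff_eq.2 (F.κ_κ k v.1).symm
  rw [coreVertex, B.move_core F hk, coreVertex]
  simp only [Cover.move, Base.coreCover, OrientedCayley.colourCover, hinv, ite_self]
  rfl

lemma Base.label_coreVertex {k : Fin d} {v : J × Q}
    (hk : ¬ IsCut B.s (B.src .core) (B.col .core) v.2 k) (σ : Bool) :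
    (B.cover F).label k (coreVertex L h σ v)
      = coreLabel L h σ ((B.coreCover F.κ).label k v) := by
  rw [Cover.label, B.move_coreVertex F hk, Cover.label, coreLabel, apply_ite (coreVertex L h σ)]
  rfl

/-- The vertex in the root of the tree `i` which is joined to a core. -/
def hub (e : W ≃ Idx J L h × Q) (i : Bool × J) : W :=
  e.symm (.inr (i, rootAddr L h), B.tgt .core)

variable {F} (e : W ≃ Idx J L h × Q) {ω : (Idx J L h × Q) × Fin d → Bool}

lemma adj_of_openStep {σ : Bool} {v v' : J × Q}
    (hv : (B.coreCover F.κ).OpenStep (B.src .core) (B.col .core) (ω ∘ coreLabel L h σ) v v') :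
    ((B.cover F).openGraph e ω).Adj (e.symm (coreVertex L h σ v))
      (e.symm (coreVertex L h σ v')) := by
  obtain ⟨k, hk, rfl, hopen⟩ := hv
  rw [← B.move_coreVertex F hk]
  refine Cover.openGraph_adj_move _ e ?_
  rwa [B.label_coreVertex F hk]

variable [Fintype Q] {κ : Fin d → Equiv.Perm J} {n : ℕ}

lemma mem_nearLabels_root (i : Bool × J) (x : Q) (k : Fin d) :
    ((.inr (i, rootAddr L h), x), k) ∈ nearLabels B L h i :=
  Finset.mem_insert_of_mem (Finset.mem_image_of_mem _ (Finset.mem_univ (x, k)))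

variable {B}

lemma Good.reachable_root {i : Bool × J} (hi : Good B κ n ω i) (x y : Q) :
    ((B.cover F).openGraph e ω).Reachable (e.symm (.inr (i, rootAddr L h), x))
      (e.symm (.inr (i, rootAddr L h), y)) := by
  refine (SimpleGraph.reachable_iff_reflTransGen _ _).2
    ((B.tree x y).lift (fun x => e.symm (.inr (i, rootAddr L h), x)) ?_)
  rintro x _ ⟨k, rfl, hx, hx'⟩
  have hmove := B.move_node_of_notMem_mob F hx hx' (i, rootAddr L h)
  change ((B.cover F).openGraph e ω).Adj _ (e.symm (_, x * B.s k))
  rw [← hmove]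
  refine Cover.openGraph_adj_move _ e (hi.2 _ ?_)
  rw [Cover.label, hmove]
  split_ifs <;> exact mem_nearLabels_root B i _ k

lemma Good.reachable_hub {i : Bool × J} (hi : Good B κ n ω i) :
    ((B.cover F).openGraph e ω).Reachable (e.symm (.inl i, B.src .core)) (hub B e i) := by
  rw [hub, ← B.move_core_root F i]
  refine (Cover.openGraph_adj_move _ e ?_).reachable
  rw [B.label_of_pos F (B.o_mob _)]
  exact hi.2 _ (Finset.mem_insert_self _ _)

lemma Good.reachable_match {σ : Bool} {j : J} (hj : Good B κ n ω (σ, j))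
    (hj' : Good B κ n ω (σ, F.ρ j)) :
    ((B.cover F).openGraph e ω).Reachable (hub B e (σ, j)) (hub B e (σ, F.ρ j)) := by
  refine (hj.reachable_root e _ (B.src .root)).trans
    (.trans ?_ (hj'.reachable_root e (B.tgt .root) _))
  have hmove := B.move_node F (τ := .root) (by simp) ((σ, j), rootAddr L h)
  rw [F.nodePerm_root] at hmove
  rw [← hmove]
  refine (Cover.openGraph_adj_move _ e ?_).reachable
  rw [B.label_of_pos F (B.o_mob _)]
  exact hj.2 _ (mem_nearLabels_root B _ _ _)

lemma exists_component_of_linked [Fintype J] (F : Fibre d J L h) (σ : Bool)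
    (q : Quot (Linked (goodSet B F.κ n ω σ) (coreClass B F.κ ω σ) F.ρ)) :
    ∃ c : ((B.cover F).openGraph e ω).ConnectedComponent,
      ∀ j ∈ (goodSet B F.κ n ω σ).filter fun j => Quot.mk _ j = q,
        ((B.cover F).openGraph e ω).connectedComponentMk (hub B e (σ, j)) = c := by
  set H := (B.cover F).openGraph e ω
  let ofCore : Quot ((B.coreCover F.κ).OpenStep (B.src .core) (B.col .core)
      (ω ∘ coreLabel L h σ)) → H.ConnectedComponent :=
    Quot.lift (fun v => H.connectedComponentMk (e.symm (coreVertex L h σ v)))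
      fun _ _ hv => SimpleGraph.ConnectedComponent.sound (adj_of_openStep B e hv).reachable
  have hcore {j : J} (hj : j ∈ goodSet B F.κ n ω σ) :
      ofCore (coreClass B F.κ ω σ j) = H.connectedComponentMk (hub B e (σ, j)) :=
    SimpleGraph.ConnectedComponent.sound ((Finset.mem_filter.1 hj).2.reachable_hub e)
  let ofLinked : Quot (Linked (goodSet B F.κ n ω σ) (coreClass B F.κ ω σ) F.ρ) →
      H.ConnectedComponent :=
    Quot.lift (fun j => ofCore (coreClass B F.κ ω σ j)) (by
      rintro j j' ⟨hj, hj', hclass | rfl⟩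
      · exact congrArg ofCore hclass
      · rw [hcore hj, hcore hj']
        exact SimpleGraph.ConnectedComponent.sound
          ((Finset.mem_filter.1 hj).2.reachable_match e (Finset.mem_filter.1 hj').2))
  refine ⟨ofLinked q, fun j hj => ?_⟩
  obtain ⟨hgood, rfl⟩ := Finset.mem_filter.1 hj
  exact (hcore hgood).symm

end Hubs

section Averaging

open MeasureTheory

lemma exists_measureReal_le_of_card_le {P Ω : Type*} [Fintype P] [Nonempty P] [MeasurableSpace Ω]
    {μ : Measure Ω} [IsProbabilityMeasure μ] {N : P → Set Ω} (hN : ∀ a, MeasurableSet (N a))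
    {F : Set Ω} (hF : MeasurableSet F) {β : ℝ} (hβ : 0 ≤ β)
    (hNβ : ∀ ω ∉ F, ((Finset.univ.filter fun a => ω ∈ N a).card : ℝ) ≤ Fintype.card P * β) :
    ∃ a, μ.real (N a) ≤ μ.real F + β := by
  have hindicator (S : Set Ω) (hS : MeasurableSet S) : Integrable (S.indicator (1 : Ω → ℝ)) μ :=
    (integrable_const 1).indicator hS
  have hpointwise (ω : Ω) : ∑ a, (N a).indicator (1 : Ω → ℝ) ω
      ≤ Fintype.card P * (F.indicator 1 ω + β) := by
    have hsum : ∑ a, (N a).indicator (1 : Ω → ℝ) ω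
        = (Finset.univ.filter fun a => ω ∈ N a).card := by
      simp [Set.indicator_apply]
    rw [hsum]
    by_cases hω : ω ∈ F
    · have : ((Finset.univ.filter fun a => ω ∈ N a).card : ℝ) ≤ Fintype.card P :=
        mod_cast Finset.card_le_univ _
      rw [Set.indicator_of_mem hω, Pi.one_apply]
      nlinarith [(Nat.cast_nonneg _ : (0 : ℝ) ≤ Fintype.card P)]
    · simpa [hω] using hNβ ω hω
  have haverage : ∑ a, μ.real (N a) ≤ ∑ _ : P, (μ.real F + β) := by
    calc ∑ a, μ.real (N a) = ∫ ω, ∑ a, (N a).indicator 1 ω ∂μ := by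
          rw [integral_finsetSum _ fun a _ => hindicator _ (hN a)]
          simp only [integral_indicator_one (hN _)]
      _ ≤ ∫ ω, Fintype.card P * (F.indicator 1 ω + β) ∂μ :=
        integral_mono (integrable_finsetSum _ fun a _ => hindicator _ (hN a))
          (((hindicator F hF).add (integrable_const β)).const_mul _) hpointwise
      _ = ∑ _ : P, (μ.real F + β) := by
        rw [integral_const_mul, integral_add (hindicator F hF) (integrable_const β),
          integral_indicator_one hF]
        simp [mul_add]
  obtain ⟨a, -, ha⟩ := Finset.exists_le_of_sum_le Finset.univ_nonempty haverage
  exact ⟨a, ha⟩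

lemma two_pow_mul_pow_le {η N : ℝ} {m : ℕ} (hη0 : 0 < η) (hη1 : η ≤ 1) (hN : 0 < N)
    (hm : (m : ℝ) ≤ η ^ 2 * N / 2) :
    (2 : ℝ) ^ m * (1 - η) ^ ⌈η * N⌉₊ ≤ 2 / (η ^ 2 * N) := by
  have htwo : (2 : ℝ) ^ m ≤ Real.exp (η ^ 2 * N / 2) := by
    calc (2 : ℝ) ^ m ≤ Real.exp 1 ^ m := by gcongr; linarith [Real.add_one_le_exp (1 : ℝ)]
      _ = Real.exp m := by rw [← Real.exp_nat_mul, mul_one]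
      _ ≤ _ := Real.exp_le_exp.2 hm
  have hsub : (1 - η) ^ ⌈η * N⌉₊ ≤ Real.exp (-(η ^ 2 * N)) := by
    calc (1 - η) ^ ⌈η * N⌉₊ ≤ Real.exp (-η) ^ ⌈η * N⌉₊ :=
          pow_le_pow_left₀ (by linarith) (by linarith [Real.add_one_le_exp (-η)]) _
      _ = Real.exp (⌈η * N⌉₊ * (-η)) := by rw [← Real.exp_nat_mul]
      _ ≤ _ := Real.exp_le_exp.2 (by nlinarith [Nat.le_ceil (η * N)])
  calc (2 : ℝ) ^ m * (1 - η) ^ ⌈η * N⌉₊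
      ≤ Real.exp (η ^ 2 * N / 2) * Real.exp (-(η ^ 2 * N)) :=
        mul_le_mul htwo hsub (pow_nonneg (by linarith) _) (Real.exp_nonneg _)
    _ = (Real.exp (η ^ 2 * N / 2))⁻¹ := by rw [← Real.exp_add, ← Real.exp_neg]; ring_nf
    _ ≤ (η ^ 2 * N / 2)⁻¹ := by
      gcongr
      linarith [Real.add_one_le_exp (η ^ 2 * N / 2)]
    _ = 2 / (η ^ 2 * N) := inv_div _ _

lemma measureReal_exists_le {ι Ω : Type*} [Fintype ι] [MeasurableSpace Ω] {μ : Measure Ω}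
    {A : ι → Ω → Prop} {δ : ℝ} (hδ : ∀ i, μ.real {ω | A i ω} ≤ δ) :
    μ.real {ω | ∃ i, A i ω} ≤ Fintype.card ι * δ := by
  have hunion : {ω | ∃ i, A i ω} = ⋃ i ∈ Finset.univ, {ω | A i ω} := by ext; simp
  rw [hunion]
  refine (measureReal_biUnion_finset_le _ _).trans ((Finset.sum_le_sum fun i _ => hδ i).trans ?_)
  simp

lemma card_filter_exists_le {ι P : Type*} [Fintype ι] [Fintype P] {A : ι → P → Prop} {b : ℝ}
    (hb : ∀ i, ((Finset.univ.filter (A i)).card : ℝ) ≤ b) :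
    ((Finset.univ.filter fun a => ∃ i, A i a).card : ℝ) ≤ Fintype.card ι * b := by
  have hunion : (Finset.univ.filter fun a => ∃ i, A i a)
      = Finset.univ.biUnion fun i => Finset.univ.filter (A i) := by ext; simp
  calc ((Finset.univ.filter fun a => ∃ i, A i a).card : ℝ)
      ≤ ∑ i, ((Finset.univ.filter (A i)).card : ℝ) := by
        rw [hunion]; exact_mod_cast Finset.card_biUnion_le
    _ ≤ ∑ _ : ι, b := Finset.sum_le_sum fun i _ => hb i
    _ = Fintype.card ι * b := by simp

lemma exists_measureReal_exists_le {S P Ω : Type*} [Fintype S] [Fintype P] [Nonempty P]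
    [MeasurableSpace Ω] [DiscreteMeasurableSpace Ω] {μ : Measure Ω} [IsProbabilityMeasure μ]
    {A : S → P → Ω → Prop} {E : S → Ω → Prop} {δ β : ℝ} (hβ : 0 ≤ β)
    (hδ : ∀ σ, μ.real {ω | E σ ω} ≤ δ)
    (hA : ∀ σ ω, ¬ E σ ω →
      ((Finset.univ.filter fun a => A σ a ω).card : ℝ) ≤ Fintype.card P * β) :
    ∃ a, μ.real {ω | ∃ σ, A σ a ω} ≤ Fintype.card S * δ + Fintype.card S * β := by
  have hE : μ.real {ω | ∃ σ, E σ ω} ≤ Fintype.card S * δ := measureReal_exists_le hδ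
  obtain ⟨a, ha⟩ := exists_measureReal_le_of_card_le (μ := μ)
    (N := fun a => {ω | ∃ σ, A σ a ω}) (F := {ω | ∃ σ, E σ ω}) (β := Fintype.card S * β)
    (fun _ => .of_discrete) .of_discrete (by positivity) fun ω hω => by
      have hcard := card_filter_exists_le fun σ => hA σ ω fun h => hω ⟨σ, h⟩
      rw [mul_left_comm] at hcard
      simpa only [Set.mem_ofPred_eq] using hcard
  exact ⟨a, ha.trans (by linarith)⟩

end Averaging

section Giant

open MeasureTheory

variable {d : ℕ} {Q J : Type*} [Group Q] [Fintype Q] [Fintype J] [Nonempty J] {L h : ℕ}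
  {p : unitInterval} {β : Type*} {r : J → β} {m n : ℕ} {η : ℝ}

lemma exists_perm_giant_linked_classes (B : Base d Q) {κ : Fin d → Equiv.Perm J}
    (hr : ∀ k j, r (κ k j) = r j) (hm : ∀ b, (Finset.univ.filter fun j => r j = b).card ≤ m)
    (htree : (B.coreCover κ).TreeLike n) (hη : 0 < η)
    (hgood : ∀ i, 6 * η ≤ (bernoulliPi _ p).real {ω | Good (L := L) (h := h) B κ n ω i})
    (hn : 2 * Fintype.card Q ≤ η ^ 2 * n) :
    ∃ ρ : Equiv.Perm J, (bernoulliPi _ p).real {ω | ∃ σ,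
      ∀ q : Quot (Linked (goodSet (L := L) (h := h) B κ n ω σ) (coreClass B κ ω σ) ρ),
        (((goodSet B κ n ω σ).filter fun j => Quot.mk _ j = q).card : ℝ) < η * Fintype.card J}
      ≤ 5 * m / (η ^ 2 * Fintype.card J) := by
  obtain ⟨j⟩ := ‹Nonempty J›
  have hJ : (0 : ℝ) < Fintype.card J := mod_cast Fintype.card_pos_iff.2 ⟨j⟩
  have hm1 : (1 : ℝ) ≤ m := mod_cast (Finset.card_pos.2 ⟨j, by simp⟩).trans_le (hm (r j))
  have hη1 : η ≤ 1 := by linarith [(hgood (true, j)).trans measureReal_le_one]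
  have hn0 : (0 : ℝ) < n := by
    have hQ : (0 : ℝ) < Fintype.card Q := mod_cast Fintype.card_pos
    exact pos_of_mul_pos_right (by linarith) (sq_nonneg η)
  have hclasses : ((Fintype.card J * Fintype.card Q / n : ℕ) : ℝ)
      ≤ η ^ 2 * Fintype.card J / 2 := by
    refine Nat.cast_div_le.trans ?_
    rw [div_le_iff₀ hn0, Nat.cast_mul]
    nlinarith
  obtain ⟨ρ, hρ⟩ := exists_measureReal_exists_le (μ := bernoulliPi _ p)
    (A := fun σ ρ ω => ∀ q : Quot (Linked (goodSet (L := L) (h := h) B κ n ω σ)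
        (coreClass B κ ω σ) ρ),
      (((goodSet B κ n ω σ).filter fun j => Quot.mk _ j = q).card : ℝ) < η * Fintype.card J)
    (by positivity) (bernoulliPi_real_card_goodSet_lt_le B hr hm (by positivity) hgood)
    fun σ ω hω => (card_perms_no_giant_le _ _
      ((Nat.le_div_iff_mul_le (mod_cast hn0)).2 (card_coreClass_le B htree ω σ)) hη
      (by linarith)).trans (mul_le_mul_of_nonneg_left (two_pow_mul_pow_le hη hη1 hJ hclasses)
        (Nat.cast_nonneg _))
  refine ⟨ρ, hρ.trans ?_⟩
  rw [Fintype.card_bool, le_div_iff₀ (by positivity)]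
  field_simp
  push_cast
  nlinarith

lemma exists_matching_with_giants (B : Base d Q) (F : Fibre d J L h)
    (hr : ∀ k j, r (F.κ k j) = r j) (hm : ∀ b, (Finset.univ.filter fun j => r j = b).card ≤ m)
    (htree : (B.coreCover F.κ).TreeLike n) (hη : 0 < η)
    (hgood : ∀ i, 6 * η ≤ (bernoulliPi _ p).real {ω | Good (L := L) (h := h) B F.κ n ω i})
    (hn : 2 * Fintype.card Q ≤ η ^ 2 * n) :
    ∃ ρ : Equiv.Perm J, ∀ (W : Type*) (e : W ≃ Idx J L h × Q),
      (bernoulliPi _ p).real {ω | ¬ ∀ σ,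
        ∃ c : ((B.cover { F with ρ := ρ }).openGraph e ω).ConnectedComponent,
        η * Fintype.card J ≤ ((Finset.univ.filter fun j =>
          ((B.cover { F with ρ := ρ }).openGraph e ω).connectedComponentMk (hub B e (σ, j))
            = c).card : ℝ)} ≤ 5 * m / (η ^ 2 * Fintype.card J) := by
  obtain ⟨ρ, hρ⟩ := exists_perm_giant_linked_classes B hr hm htree hη hgood hn
  refine ⟨ρ, fun W e => (measureReal_mono fun ω hω => ?_).trans hρ⟩
  by_contra hjoined
  simp only [Set.mem_ofPred_eq, not_exists, not_forall, not_lt] at hjoined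
  refine hω fun σ => ?_
  obtain ⟨q, hq⟩ := hjoined σ
  obtain ⟨c, hc⟩ := exists_component_of_linked e { F with ρ := ρ } σ q
  refine ⟨c, hq.trans (mod_cast Finset.card_le_card fun j hj => ?_)⟩
  exact Finset.mem_filter.2 ⟨Finset.mem_univ _, hc j hj⟩

end Giant

/-! ### Separation of the two sides -/

section Separation

variable {d : ℕ} {Q J : Type*} [Group Q] {L h : ℕ} (B : Base d Q)

/-- The labels of the edges between the tree nodes `w` and `b :: w`. -/
def linkLabels (i : Bool × J) (b : Bool) (w : List Bool) : Finset ((Idx J L h × Q) × Fin d) :=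
  (Finset.univ.filter fun w' : Addr L h => w'.1 ∈ ({w, b :: w} : Finset (List Bool))).image
    fun w' => ((.inr (i, w'), B.src (.link b (Fin.ofNat 2 w.length))),
      B.col (.link b (Fin.ofNat 2 w.length)))

/-- The event that one of the edges between the tree nodes `w` and `b :: w` is open. -/
def LinkOpen (ω : (Idx J L h × Q) × Fin d → Bool) (i : Bool × J) (b : Bool)
    (w : List Bool) : Prop :=
  ∃ l ∈ linkLabels B i b w, ω l = true

/-- The event that consecutive nodes on the branch from the root to `w` are joined by open
edges. -/
def AboveOpen (ω : (Idx J L h × Q) × Fin d → Bool) (i : Bool × J) : List Bool → Prop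
  | [] => True
  | b :: w => LinkOpen B ω i b w ∧ AboveOpen ω i w

/-- The upper part of the side `true`: its cores, and the tree nodes below which the branch from the
root is open. -/
def Upper (ω : (Idx J L h × Q) × Fin d → Bool) : Idx J L h → Prop
  | .inl i => i.1 = true
  | .inr n => n.1.1 = true ∧ AboveOpen B ω n.1 n.2.1

/-- The event that some branch of the side `true` is open down to a leaf. -/
def Leaks (J : Type*) (L h : ℕ) (ω : (Idx J L h × Q) × Fin d → Bool) : Prop :=
  ∃ (j : J) (w : Addr L h), w.1.length = h ∧ AboveOpen B ω (true, j) w.1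

lemma linkFun_cases (b : Bool) (q : Fin 2) (w : List Bool) :
    (linkFun L h b q w = b :: w ∧ q = Fin.ofNat 2 w.length) ∨
    (∃ w', w = b :: w' ∧ linkFun L h b q w = w' ∧ q = Fin.ofNat 2 w'.length) ∨
    linkFun L h b q w = w := by
  unfold linkFun
  split_ifs with hchild hparent
  · exact .inl ⟨rfl, Fin.ext hchild.1.symm⟩
  · obtain ⟨w', rfl⟩ : ∃ w', w = b :: w' := List.head?_eq_some_iff.1 hparent.1
    exact .inr (.inl ⟨w', rfl, rfl, Fin.ext hparent.2.symm⟩)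
  · exact .inr (.inr rfl)

variable {B} {ω : (Idx J L h × Q) × Fin d → Bool}

lemma aboveOpen_linkPerm {b : Bool} {q : Fin 2} {i : Bool × J} {w : Addr L h}
    (hω : ω ((.inr (i, w), B.src (.link b q)), B.col (.link b q)) = true) :
    AboveOpen B ω i (linkPerm L h b q w).1 ↔ AboveOpen B ω i w.1 := by
  change AboveOpen B ω i (linkFun L h b q w.1) ↔ _
  rcases linkFun_cases (L := L) (h := h) b q w.1 with ⟨hchild, rfl⟩ | ⟨w', hw, hparent, rfl⟩ | hfix
  · rw [hchild]
    exact ⟨fun h => h.2, fun h => ⟨⟨_, Finset.mem_image.2 ⟨w, by simp, rfl⟩, hω⟩, h⟩⟩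
  · rw [hparent, hw]
    exact ⟨fun h => ⟨⟨_, Finset.mem_image.2 ⟨w, by simp [hw], rfl⟩, hω⟩, h⟩, fun h => h.2⟩
  · rw [hfix]

lemma coreSwap_inr (n : TreeNode J L h) :
    coreSwap J L h (.inr n) = if n.2 = rootAddr L h then .inl n.1 else .inr n :=
  rfl

lemma upper_coreSwap (i : Idx J L h) : Upper B ω (coreSwap J L h i) ↔ Upper B ω i := by
  rcases i with i | ⟨i, w⟩
  · exact and_iff_left trivial
  · by_cases hw : w = rootAddr L h
    · subst hw
      rw [coreSwap_inr, if_pos rfl]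
      exact (and_iff_left trivial).symm
    · rw [coreSwap_inr, if_neg hw]

lemma upper_nodePerm (F : Fibre d J L h) (hω : ¬ Leaks B J L h ω) {τ : EdgeType}
    {n : TreeNode J L h} (hτ : ω ((.inr n, B.src τ), B.col τ) = true) :
    Upper B ω (.inr (F.nodePerm τ n)) ↔ Upper B ω (.inr n) := by
  obtain ⟨i, w⟩ := n
  cases τ with
  | core => rfl
  | root =>
    by_cases hw : w = rootAddr L h
    · subst hw
      rw [F.nodePerm_root]
      rfl
    · rw [F.nodePerm_root_of_ne hw]
  | link b q =>
    rw [F.nodePerm_link]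
    exact and_congr_right fun _ => aboveOpen_linkPerm hτ
  | leaf j =>
    by_cases hw : w.1.length = h
    · have hleaf : ∀ l : Leaf J L h, ¬ Upper B ω (.inr l.1) := by
        rintro ⟨⟨⟨_, j⟩, w⟩, hw⟩ ⟨rfl, habove⟩
        exact hω ⟨j, w, hw, habove⟩
      rw [F.nodePerm_leaf j ⟨(i, w), hw⟩]
      exact iff_of_false (hleaf _) (hleaf ⟨(i, w), hw⟩)
    · rw [F.nodePerm_leaf_of_length_ne j hw]

lemma upper_act (F : Fibre d J L h) (hω : ¬ Leaks B J L h ω) {x : Q} {k : Fin d} {i : Idx J L h}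
    (hi : ω ((i, x), k) = true) : Upper B ω (F.act k (B.edgeType x k) i) ↔ Upper B ω i := by
  by_cases hcore : B.edgeType x k = some .core
  · rw [hcore]
    exact upper_coreSwap i
  rcases i with i | n
  · rw [F.act_inl hcore]
    rfl
  rcases hτ : B.edgeType x k with _ | τ
  · rfl
  rw [F.act_inr (fun h => hcore (h ▸ hτ))]
  have hmob := B.edgeType_eq_some_iff.1 hτ
  exact upper_nodePerm F hω (by rwa [Base.src, Base.col, hmob])

lemma upper_move (F : Fibre d J L h) (hω : ¬ Leaks B J L h ω) {v : Idx J L h × Q} {k : Fin d}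
    (hv : ω ((B.cover F).label k v) = true) :
    Upper B ω ((B.cover F).move k v).1 ↔ Upper B ω v.1 := by
  have hpos (v : Idx J L h × Q) (hx : B.o v.2 k = true) (hv : ω ((B.cover F).label k v) = true) :
      Upper B ω ((B.cover F).move k v).1 ↔ Upper B ω v.1 := by
    obtain ⟨i, x⟩ := v
    rw [B.label_of_pos F hx] at hv
    rw [B.move_of_pos F hx]
    exact upper_act F hω hv
  by_cases hx : B.o v.2 k = true
  · exact hpos v hx hv
  · have hx' : B.o ((B.cover F).move k v).2 k = true := by
      rw [Cover.move_snd]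
      change B.o (v.2 * B.s k) k = true
      rw [B.o_mul]
      simpa using hx
    have hback := hpos _ hx' (by rwa [Cover.label_move])
    rw [Cover.move_move] at hback
    exact hback.symm

lemma connectedComponentMk_ne_of_upper (F : Fibre d J L h) {W : Type*} (e : W ≃ Idx J L h × Q)
    (hω : ¬ Leaks B J L h ω) {v w : W} (hv : Upper B ω (e v).1) (hw : ¬ Upper B ω (e w).1) :
    ((B.cover F).openGraph e ω).connectedComponentMk v ≠
      ((B.cover F).openGraph e ω).connectedComponentMk w := by
  rw [Ne, SimpleGraph.ConnectedComponent.eq, SimpleGraph.reachable_iff_reflTransGen]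
  intro hvw
  suffices ∀ u, Relation.ReflTransGen ((B.cover F).openGraph e ω).Adj v u → Upper B ω (e u).1 from
    hw (this w hvw)
  intro u hu
  induction hu with
  | refl => exact hv
  | tail _ hadj ih =>
    obtain ⟨k, hk, hopen⟩ := hadj
    rwa [hk, upper_move F hω hopen]

variable (B)

lemma card_linkLabels_le (i : Bool × J) (b : Bool) (w : List Bool) :
    (linkLabels (L := L) (h := h) B i b w).card ≤ 2 := by
  refine Finset.card_image_le.trans (le_trans ?_ (Finset.card_le_two (a := w) (b := b :: w)))
  exact Finset.card_le_card_of_injOn Subtype.val (fun w' hw' => (Finset.mem_filter.1 hw').2)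
    Subtype.val_injective.injOn

/-- The parity of the level distinguishes links of consecutive levels, which share a node. -/
lemma disjoint_linkLabels {i : Bool × J} {b b' : Bool} {w w' : List Bool}
    (hw : w'.length < w.length) :
    Disjoint (linkLabels (L := L) (h := h) B i b w) (linkLabels B i b' w') := by
  refine Finset.disjoint_left.2 fun l hl hl' => ?_
  obtain ⟨u, hu, rfl⟩ := Finset.mem_image.1 hl
  obtain ⟨u', hu', heq⟩ := Finset.mem_image.1 hl'
  simp only [Prod.mk.injEq, Sum.inr.injEq, true_and] at heq
  obtain ⟨⟨rfl, hsrc⟩, hcol⟩ := heq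
  have hlink := B.mob_injective (Prod.ext hsrc hcol)
  simp only [EdgeType.link.injEq, Fin.ext_iff, Fin.val_ofNat] at hlink
  simp only [Finset.mem_filter, Finset.mem_univ, true_and, Finset.mem_insert,
    Finset.mem_singleton] at hu hu'
  have hlen : u'.1.length = w.length ∨ u'.1.length = w.length + 1 := by
    rcases hu with h | h <;> simp [h]
  have hlen' : u'.1.length = w'.length ∨ u'.1.length = w'.length + 1 := by
    rcases hu' with h | h <;> simp [h]
  omega

lemma dependsOn_linkOpen (i : Bool × J) (b : Bool) (w : List Bool) :
    DependsOn (fun ω => LinkOpen (L := L) (h := h) B ω i b w)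
      (linkLabels (L := L) (h := h) B i b w) :=
  fun _ _ hω => propext (exists_congr fun l => and_congr_right fun hl => by rw [hω l hl])

lemma dependsOn_aboveOpen (i : Bool × J) (w : List Bool) :
    DependsOn (fun ω => AboveOpen (L := L) (h := h) B ω i w)
      {l | ∃ b w', b :: w' <:+ w ∧ l ∈ linkLabels (L := L) (h := h) B i b w'} := by
  induction w with
  | nil => exact fun _ _ _ => rfl
  | cons b w ih =>
    refine fun ω ω' hω => congrArg₂ And (dependsOn_linkOpen B i b w fun l hl => ?_) (ih ?_)
    · exact hω l ⟨b, w, List.suffix_rfl, hl⟩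
    · rintro l ⟨b', w', hw', hl⟩
      exact hω l ⟨b', w', hw'.trans (List.suffix_cons b w), hl⟩

variable [Fintype Q] [Fintype J] {p : unitInterval}

lemma bernoulliPi_real_linkOpen_le (i : Bool × J) (b : Bool) (w : List Bool) :
    (bernoulliPi _ p).real {ω | LinkOpen (L := L) (h := h) B ω i b w} ≤ 1 - (1 - (p : ℝ)) ^ 2 := by
  have hprob := bernoulliPi_real_exists (p := p) (linkLabels (L := L) (h := h) B i b w)
    (S := fun l => {l}) (fun l _ l' _ hll' => Set.disjoint_singleton.2 hll')
    (A := fun l ω => ω l = true) fun l _ ω ω' hω => congrArg (· = true) (hω l rfl)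
  simp only [bernoulliPi_real_eval, Finset.prod_const] at hprob
  refine hprob.trans_le (sub_le_sub_left ?_ _)
  exact pow_le_pow_of_le_one (sub_nonneg.2 p.2.2) (by linarith [p.2.1]) (card_linkLabels_le B i b w)

lemma bernoulliPi_real_aboveOpen_le (i : Bool × J) (w : List Bool) :
    (bernoulliPi _ p).real {ω | AboveOpen (L := L) (h := h) B ω i w}
      ≤ (1 - (1 - (p : ℝ)) ^ 2) ^ w.length := by
  induction w with
  | nil => simp [AboveOpen]
  | cons b w ih =>
    have hdisj : Disjoint (linkLabels (L := L) (h := h) B i b w : Set ((Idx J L h × Q) × Fin d))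
        {l | ∃ b' w', b' :: w' <:+ w ∧ l ∈ linkLabels (L := L) (h := h) B i b' w'} := by
      refine Set.disjoint_left.2 ?_
      rintro l hl ⟨b', w', hw', hl'⟩
      exact Finset.disjoint_left.1 (disjoint_linkLabels B hw'.length_le) hl hl'
    have hlink := bernoulliPi_real_linkOpen_le (L := L) (h := h) B (p := p) i b w
    rw [List.length_cons, pow_succ']
    exact (bernoulliPi_real_and hdisj (dependsOn_linkOpen B i b w)
      (dependsOn_aboveOpen B i w)).trans_le
        (mul_le_mul hlink ih MeasureTheory.measureReal_nonneg
          (MeasureTheory.measureReal_nonneg.trans hlink))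

end Separation

/-- The valid addresses of a given length. -/
def addrLevel (L : ℕ) : ℕ → Finset (List Bool)
  | 0 => {[]}
  | l + 1 => (addrLevel L l).image (List.cons false) ∪
      if L ∣ l then (addrLevel L l).image (List.cons true) else ∅

section Addresses

variable {L : ℕ}

lemma ValidAddr.mem_addrLevel {w : List Bool} (hw : ValidAddr L w) : w ∈ addrLevel L w.length := by
  induction w with
  | nil => simp [addrLevel]
  | cons b w ih =>
    cases b with
    | false => simp [addrLevel, ih hw.1]
    | true => simp [addrLevel, ih hw.1, hw.2 rfl]

lemma card_addrLevel_le (hL : 1 ≤ L) (l : ℕ) :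
    (addrLevel L l).card ≤ 2 ^ ((l + (L - 1)) / L) := by
  induction l with
  | zero => simp [addrLevel, Nat.one_le_two_pow]
  | succ l ih =>
    by_cases hl : L ∣ l
    · obtain ⟨t, rfl⟩ := hl
      have hceil : (L * t + (L - 1)) / L = t := by
        rw [Nat.mul_add_div (by omega), Nat.div_eq_of_lt (by omega), add_zero]
      have hceil' : (L * t + 1 + (L - 1)) / L = t + 1 := by
        rw [show L * t + 1 + (L - 1) = L * (t + 1) by rw [mul_add]; omega,
          Nat.mul_div_cancel_left _ (by omega)]
      rw [hceil] at ih
      rw [hceil', addrLevel, if_pos (dvd_mul_right _ _), pow_succ, mul_two]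
      exact (Finset.card_union_le _ _).trans
        (add_le_add (Finset.card_image_le.trans ih) (Finset.card_image_le.trans ih))
    · rw [addrLevel, if_neg hl, Finset.union_empty]
      refine Finset.card_image_le.trans (ih.trans ?_)
      exact Nat.pow_le_pow_right two_pos (Nat.div_le_div_right (by omega))

lemma card_addrLevel_le_two_pow (hL : 1 ≤ L) {l t : ℕ} (hl : l ≤ L * t) :
    (addrLevel L l).card ≤ 2 ^ t := by
  refine (card_addrLevel_le hL l).trans (Nat.pow_le_pow_right two_pos ?_)
  refine Nat.lt_succ_iff.1 (Nat.div_lt_of_lt_mul ?_)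
  rw [Nat.mul_succ]
  omega

lemma card_addr_le (hL : 1 ≤ L) (t : ℕ) :
    Fintype.card (Addr L (L * t)) ≤ (L * t + 1) * 2 ^ t := by
  have hcover : Fintype.card (Addr L (L * t))
      ≤ ((Finset.range (L * t + 1)).biUnion (addrLevel L)).card := by
    rw [← Finset.card_univ]
    refine Finset.card_le_card_of_injOn Subtype.val (fun w _ => ?_) Subtype.val_injective.injOn
    exact Finset.mem_biUnion.2 ⟨w.1.length, Finset.mem_range.2 (Nat.lt_succ_of_le w.2.2),
      w.2.1.mem_addrLevel⟩
  refine hcover.trans (Finset.card_biUnion_le.trans ?_)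
  refine (Finset.sum_le_card_nsmul _ _ (2 ^ t) fun l hl => ?_).trans (by simp)
  exact card_addrLevel_le_two_pow hL (Nat.lt_succ_iff.1 (Finset.mem_range.1 hl))

end Addresses

section Leaks

open MeasureTheory

lemma bernoulliPi_real_leaks_le {d : ℕ} {Q J : Type*} [Group Q] [Fintype Q] [Fintype J]
    (B : Base d Q) {L : ℕ} (hL : 1 ≤ L) (t : ℕ) {p : unitInterval} :
    (bernoulliPi _ p).real {ω | Leaks B J L (L * t) ω}
      ≤ Fintype.card J * (2 * (1 - (1 - (p : ℝ)) ^ 2) ^ L) ^ t := by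
  set r : ℝ := 1 - (1 - (p : ℝ)) ^ 2
  have hr : 0 ≤ r := sub_nonneg.2 (pow_le_one₀ (sub_nonneg.2 p.2.2) (by linarith [p.2.1]))
  let S : Finset (J × List Bool) :=
    Finset.univ ×ˢ (addrLevel L (L * t)).filter fun w => w.length = L * t
  have hS : S.card ≤ Fintype.card J * 2 ^ t := by
    rw [Finset.card_product, Finset.card_univ]
    exact Nat.mul_le_mul_left _ ((Finset.card_filter_le _ _).trans
      (card_addrLevel_le_two_pow hL le_rfl))
  have hunion : {ω | Leaks B J L (L * t) ω} ⊆ ⋃ a ∈ S, {ω | AboveOpen B ω (true, a.1) a.2} := by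
    rintro ω ⟨j, w, hw, hopen⟩
    refine Set.mem_biUnion (x := (j, w.1)) ?_ hopen
    exact Finset.mem_product.2 ⟨Finset.mem_univ _,
      Finset.mem_filter.2 ⟨by simpa [hw] using w.2.1.mem_addrLevel, hw⟩⟩
  calc (bernoulliPi _ p).real {ω | Leaks B J L (L * t) ω}
      ≤ ∑ a ∈ S, (bernoulliPi _ p).real
          {ω | AboveOpen (L := L) (h := L * t) B ω (true, a.1) a.2} :=
        (measureReal_mono hunion (measure_ne_top _ _)).trans (measureReal_biUnion_finset_le _ _)
    _ ≤ S.card • r ^ (L * t) := Finset.sum_le_card_nsmul _ _ _ fun a ha => by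
        have hlen : a.2.length = L * t := (Finset.mem_filter.1 (Finset.mem_product.1 ha).2).2
        simpa [hlen] using bernoulliPi_real_aboveOpen_le (L := L) (h := L * t) B (true, a.1) a.2
    _ ≤ Fintype.card J * 2 ^ t * r ^ (L * t) := by
        rw [nsmul_eq_mul]
        gcongr
        exact_mod_cast hS
    _ = Fintype.card J * (2 * r ^ L) ^ t := by rw [mul_pow, ← pow_mul, mul_assoc]

end Leaks

/-! ### Tree-like cores -/

section Cores

lemma exists_base (d : ℕ) (hd : 3 ≤ d) (g : ℕ) :
    ∃ (Q : Type) (_ : Group Q) (_ : Fintype Q) (B : Base d Q), FreeUpTo B.s g := by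
  have hcard_pos : 0 < Fintype.card EdgeType := Fintype.card_pos_iff.2 ⟨.core⟩
  obtain ⟨Q, _, _, s, hs, hfree, hclosure⟩ :=
    exists_freeUpTo_involutions (Fin d) (max g (2 * Fintype.card EdgeType))
  have hone : 1 ≤ max g (2 * Fintype.card EdgeType) := le_max_of_le_right (by omega)
  have : Nontrivial (Fin d) := Fin.nontrivial_iff_two_le.2 (by omega)
  have hcard : 2 * Fintype.card EdgeType ≤ Fintype.card Q :=
    (le_max_right g _).trans hfree.lt_card.le
  obtain ⟨o, ho⟩ := exists_orientation hs (hfree.ne_one hone)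
  obtain ⟨mob, mob_injective, o_mob, htree⟩ := exists_mobile_edges (by simpa using hd) hs
    (hfree.injective hone) hclosure ho EdgeType hcard
  exact ⟨Q, inferInstance, inferInstance, ⟨⟨s, hs, o, ho⟩, mob, mob_injective, o_mob, htree⟩,
    hfree.mono (le_max_left _ _)⟩

variable {d n : ℕ} {Q Γ : Type*} [Group Q] [Group Γ]

/-- The voltage permutations of the disjoint union, indexed by `U`, of copies of the Cayley graph
of `Γ` with generators `t`. -/
def cayleyVoltage (U : Type*) (t : Fin d → Γ) (k : Fin d) : Equiv.Perm (U × Γ) :=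
  Equiv.prodCongrRight fun _ => Equiv.mulRight (t k)

lemma cayleyVoltage_apply (U : Type*) (t : Fin d → Γ) (k : Fin d) (j : U × Γ) :
    cayleyVoltage U t k j = (j.1, j.2 * t k) :=
  rfl

lemma cayleyVoltage_involutive (U : Type*) {t : Fin d → Γ} (ht : ∀ k, t k * t k = 1) (k : Fin d)
    (j : U × Γ) : cayleyVoltage U t k (cayleyVoltage U t k j) = j :=
  Prod.ext rfl (by rw [cayleyVoltage_apply, cayleyVoltage_apply, mul_assoc, ht, mul_one])

lemma walkEnd_cayleyVoltage_snd (B : Base d Q) {U : Type*} {t : Fin d → Γ}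
    (ht : ∀ k, t k * t k = 1) (v : (U × Γ) × Q) (w : List (Fin d)) :
    ((B.coreCover (cayleyVoltage U t)).walkEnd v w).1.2 = v.1.2 * (w.map t).prod := by
  induction w generalizing v with
  | nil => simp [Cover.walkEnd]
  | cons k w ih =>
    have hinv : (cayleyVoltage U t k)⁻¹ = cayleyVoltage U t k :=
      inv_eq_of_mul_eq_one_left (Equiv.ext (cayleyVoltage_involutive U ht k))
    rw [Cover.walkEnd_cons, ih, List.map_cons, List.prod_cons, ← mul_assoc]
    simp only [Cover.move, Base.coreCover, OrientedCayley.colourCover, hinv, ite_self,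
      cayleyVoltage_apply]

lemma FreeUpTo.treeLike_coreCover (B : Base d Q) (U : Type*) {t : Fin d → Γ}
    (ht : ∀ k, t k * t k = 1) (hfree : FreeUpTo t n) :
    (B.coreCover (cayleyVoltage U t)).TreeLike n := by
  intro v w w' hw hl hw' hl' hend
  refine hfree w w' hw hl hw' hl' (mul_left_cancel (a := v.1.2) ?_)
  rw [← walkEnd_cayleyVoltage_snd B ht, hend, walkEnd_cayleyVoltage_snd B ht]

/-- Voltages `κ` on the cores which join only cores of one block, the blocks having at most `m`
elements, and for which every tree is good with probability at least `6 * η`. The depth `n` up to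
which good trees are explored is large enough for the second moment argument. -/
structure PercolatingCores [Fintype Q] {J : Type*} [Fintype J] (B : Base d Q) (p : unitInterval)
    (η : ℝ) (m : ℕ) (κ : Fin d → Equiv.Perm J) : Prop where
  involutive : ∀ k j, κ k (κ k j) = j
  exists_blocks : ∃ (β : Type) (r : J → β), (∀ k j, r (κ k j) = r j) ∧
    ∀ b, (Finset.univ.filter fun j => r j = b).card ≤ m
  exists_depth : ∃ n : ℕ, (B.coreCover κ).TreeLike n ∧ 2 * Fintype.card Q ≤ η ^ 2 * n ∧
    ∀ L h i, 6 * η ≤ (bernoulliPi _ p).real {ω | Good (L := L) (h := h) B κ n ω i}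

lemma exists_percolatingCores (hd : 3 ≤ d) (g : ℕ) {p : unitInterval}
    (hp : 1 / ((d : ℝ) - 1) < p) :
    ∃ (Q : Type) (_ : Group Q) (_ : Fintype Q) (B : Base d Q), FreeUpTo B.s g ∧
      ∃ η > (0 : ℝ), ∃ m > 0, ∀ u : ℕ, ∃ (J : Type) (_ : Fintype J) (κ : Fin d → Equiv.Perm J),
        Fintype.card J = u * m ∧ PercolatingCores B p η m κ := by
  have hp_pos : 0 < (p : ℝ) := by
    refine lt_of_le_of_lt (div_nonneg zero_le_one (sub_nonneg.2 ?_)) hp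
    exact_mod_cast (by omega : 1 ≤ d)
  obtain ⟨g', γ, hγ, hsurvives⟩ := Cover.exists_le_bernoulliPi_real_survives d hd p hp
  obtain ⟨Q, _, _, B, hB⟩ := exists_base d hd (max g' g)
  set η : ℝ := γ * (p : ℝ) ^ (Fintype.card Q * d + 1) / 6 with hη
  have hη_pos : 0 < η := by positivity
  obtain ⟨N, hN⟩ := exists_nat_ge (2 * Fintype.card Q / η ^ 2)
  have hdepth : 2 * (Fintype.card Q : ℝ) ≤ η ^ 2 * (N + 1 : ℕ) := by
    rw [← div_le_iff₀' (by positivity)]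
    exact hN.trans (by simp)
  obtain ⟨Γ, _, _, t, ht, hfree, -⟩ := exists_freeUpTo_involutions (Fin d) (N + 1)
  refine ⟨Q, _, _, B, hB.mono (le_max_right _ _), η, hη_pos, Fintype.card Γ, Fintype.card_pos,
    fun u => ⟨Fin u × Γ, _, cayleyVoltage (Fin u) t, by simp, cayleyVoltage_involutive _ ht, ?_,
      ?_⟩⟩
  · refine ⟨Fin u, Prod.fst, fun _ _ => rfl, fun b => ?_⟩
    rw [← Finset.card_univ]
    refine Finset.card_le_card_of_injOn Prod.snd (fun _ _ => Finset.mem_univ _) ?_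
    rintro ⟨_, a⟩ ha ⟨_, a'⟩ ha' rfl
    simp_all
  · have htree := hfree.treeLike_coreCover B (Fin u) ht
    refine ⟨N + 1, htree, hdepth, fun L h i => ?_⟩
    rw [hη, mul_div_cancel₀ _ (by norm_num)]
    exact bernoulliPi_real_good_ge B N.succ_pos htree
      (hsurvives Q _ _ (hB.mono (le_max_left _ _)) _ _ _ htree) i

end Cores

/-! ### Two large components -/

section TwoComponents

open MeasureTheory

/-- Some second largest component of `H` has at least `x` vertices. -/
def LargeSecondComponent {W : Type} [Fintype W] (H : SimpleGraph W) (x : ℝ) : Prop :=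
  ∃ c₁ c₂ : H.ConnectedComponent, IsLargestComp H c₁ ∧ c₂ ≠ c₁ ∧
    (∀ c' : H.ConnectedComponent, c' ≠ c₁ → (compVerts H c').card ≤ (compVerts H c₂).card) ∧
    x ≤ ((compVerts H c₂).card : ℝ)

lemma largeSecondComponent_of_ne {W : Type} [Fintype W] {H : SimpleGraph W}
    {a b : H.ConnectedComponent} (hab : a ≠ b) {x : ℝ} (ha : x ≤ (compVerts H a).card)
    (hb : x ≤ (compVerts H b).card) : LargeSecondComponent H x := by
  have : Fintype H.ConnectedComponent := Fintype.ofFinite _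
  obtain ⟨c₁, -, hc₁⟩ := Finset.exists_max_image Finset.univ (fun c => (compVerts H c).card)
    ⟨a, Finset.mem_univ a⟩
  obtain ⟨c, hc, hx⟩ : ∃ c, c ≠ c₁ ∧ x ≤ ((compVerts H c).card : ℝ) := by
    by_cases hac : a = c₁
    · exact ⟨b, fun hbc => hab (hac.trans hbc.symm), hb⟩
    · exact ⟨a, hac, ha⟩
  obtain ⟨c₂, hne, hc₂⟩ := Finset.exists_max_image (Finset.univ.filter (· ≠ c₁))
    (fun c => (compVerts H c).card) ⟨c, by simpa using hc⟩
  refine ⟨c₁, c₂, fun c' => hc₁ c' (Finset.mem_univ _), by simpa using hne,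
    fun c' hc' => hc₂ c' (by simpa using hc'), hx.trans ?_⟩
  exact_mod_cast hc₂ c (by simpa using hc)

variable {d : ℕ} {Q J : Type*} [Group Q] {L h : ℕ}

lemma hub_injective {W : Type*} (B : Base d Q) (e : W ≃ Idx J L h × Q) :
    Function.Injective (hub B e) := by
  intro i i' heq
  simpa [hub] using heq

variable [Fintype J]

lemma le_card_compVerts_of_hubs {W : Type} [Fintype W] (B : Base d Q) (e : W ≃ Idx J L h × Q)
    {H : SimpleGraph W} {σ : Bool} {c : H.ConnectedComponent} {x : ℝ}
    (hc : x ≤ ((Finset.univ.filter fun j =>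
      H.connectedComponentMk (hub B e (σ, j)) = c).card : ℝ)) :
    x ≤ (compVerts H c).card := by
  refine hc.trans (mod_cast Finset.card_le_card_of_injOn (fun j => hub B e (σ, j))
    (fun j hj => by simpa [compVerts] using hj) ?_)
  exact ((hub_injective B e).comp (Prod.mk_right_injective σ)).injOn

lemma largeSecondComponent_of_not_leaks {B : Base d Q} {F : Fibre d J L h} {W : Type} [Fintype W]
    {e : W ≃ Idx J L h × Q} {ω : (Idx J L h × Q) × Fin d → Bool} {x : ℝ} (hx : 0 < x)
    (hleaks : ¬ Leaks B J L h ω)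
    (hgiant : ∀ σ, ∃ c : ((B.cover F).openGraph e ω).ConnectedComponent,
      x ≤ ((Finset.univ.filter fun j =>
        ((B.cover F).openGraph e ω).connectedComponentMk (hub B e (σ, j)) = c).card : ℝ)) :
    LargeSecondComponent ((B.cover F).openGraph e ω) x := by
  choose c hc using hgiant
  have hhub (σ : Bool) :
      ∃ j, ((B.cover F).openGraph e ω).connectedComponentMk (hub B e (σ, j)) = c σ := by
    obtain ⟨j, hj⟩ := Finset.card_pos.1 (Nat.cast_pos.1 (hx.trans_le (hc σ)))
    exact ⟨j, (Finset.mem_filter.1 hj).2⟩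
  obtain ⟨j, hj⟩ := hhub true
  obtain ⟨j', hj'⟩ := hhub false
  refine largeSecondComponent_of_ne (a := c true) (b := c false) ?_
    (le_card_compVerts_of_hubs B e (hc true)) (le_card_compVerts_of_hubs B e (hc false))
  rw [← hj, ← hj']
  refine connectedComponentMk_ne_of_upper F e hleaks ?_ ?_
  · simp [hub, Upper, rootAddr, AboveOpen]
  · simp [hub, Upper]

lemma PercolatingCores.exists_matching [Fintype Q] [Nonempty J] {B : Base d Q} {p : unitInterval}
    {η : ℝ} {m : ℕ} {κ : Fin d → Equiv.Perm J} (hκ : PercolatingCores B p η m κ) (hη : 0 < η)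
    (hL : 1 ≤ L) {T : ℕ} (F : Fibre d J L (L * T)) (hF : F.κ = κ) {x : ℝ}
    (hx_pos : 0 < x) (hx : x ≤ η * Fintype.card J) :
    ∃ ρ : Equiv.Perm J, ∀ (W : Type) [Fintype W] (e : W ≃ Idx J L (L * T) × Q),
      1 - (5 * m / (η ^ 2 * Fintype.card J)
          + Fintype.card J * (2 * (1 - (1 - (p : ℝ)) ^ 2) ^ L) ^ T) ≤
        (bernoulliPi _ p).real
          {ω | LargeSecondComponent ((B.cover { F with ρ := ρ }).openGraph e ω) x} := by
  subst hF
  obtain ⟨β, r, hr, hm⟩ := hκ.exists_blocks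
  obtain ⟨n, htree, hn, hgood⟩ := hκ.exists_depth
  obtain ⟨ρ, hρ⟩ := exists_matching_with_giants B F hr hm htree hη (hgood L (L * T)) hn
  refine ⟨ρ, fun W _ e => ?_⟩
  rw [sub_le_comm, ← probReal_compl_eq_one_sub .of_discrete]
  refine (measureReal_mono (fun ω hω => ?_) (measure_ne_top _ _)).trans
    ((measureReal_union_le _ _).trans
      (add_le_add (hρ W e) (bernoulliPi_real_leaks_le (J := J) B hL T)))
  by_contra hnot
  rw [Set.mem_union, not_or] at hnot
  refine hω (largeSecondComponent_of_not_leaks hx_pos hnot.2 fun σ => ?_)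
  obtain ⟨c, hc⟩ := not_not.1 hnot.1 σ
  exact ⟨c, hx.trans hc⟩

lemma exists_expanding_fibre {κ : Fin d → Equiv.Perm J} (hκ : ∀ k j, κ k (κ k j) = j) (L h : ℕ) :
    ∃ F : Fibre d J L h, F.κ = κ ∧ F.Expanding := by
  obtain ⟨f, hf⟩ := exists_expanding_perms (Leaf J L h)
  refine ⟨⟨κ, hκ, 1, f⟩, rfl, fun T hT => ?_⟩
  convert hf T hT

lemma Base.exists_regularExpander_largeSecondComponent [Fintype Q] (B : Base d Q) {g : ℕ}
    (hg : 1 ≤ g) (hfree : FreeUpTo B.s g) (hd : 2 ≤ d) (hL : 1 ≤ L) (p : unitInterval) {η : ℝ}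
    (hη : 0 < η) (m : ℕ) :
    ∃ b > (0 : ℝ), ∀ (J : Type) [Fintype J] [Nonempty J] (κ : Fin d → Equiv.Perm J),
      PercolatingCores B p η m κ → ∀ (T : ℕ) (x : ℝ), 0 < x → x ≤ η * Fintype.card J →
      ∀ (W : Type) [Fintype W] [DecidableEq W], (W ≃ Idx J L (L * T) × Q) →
      ∃ G : SimpleGraph W, IsRegularExpander G b d ∧ (g : ℕ∞) ≤ G.girth ∧
        1 - (5 * m / (η ^ 2 * Fintype.card J)
            + Fintype.card J * (2 * (1 - (1 - (p : ℝ)) ^ 2) ^ L) ^ T)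
          ≤ percProb G p fun H => LargeSecondComponent H x := by
  obtain ⟨b, hb, hexpander⟩ := exists_isRegularExpander.{_, 0} B hL (hfree.injective hg)
  refine ⟨b, hb, fun J _ _ κ hκ T x hx_pos hx W _ _ e => ?_⟩
  obtain ⟨F, hFκ, hF⟩ := exists_expanding_fibre hκ.involutive L (L * T)
  obtain ⟨ρ, hρ⟩ := hκ.exists_matching hη hL F hFκ hx_pos hx
  have : Nonempty W := ⟨e.symm (.inl (true, Classical.arbitrary J), 1)⟩
  refine ⟨(B.cover { F with ρ := ρ }).graph e, ?_, ?_, ?_⟩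
  · convert hexpander J _ { F with ρ := ρ } hF W e
  · exact mod_cast (B.cover { F with ρ := ρ }).le_girth e hg hfree hd
  rw [Cover.percProb_graph _ e (hfree.injective hg)]
  exact hρ _ e

end TwoComponents

/-! ### Choice of the parameters -/

section Parameters

lemma card_addr_add_one_le {L : ℕ} (hL : 1 ≤ L) (t : ℕ) :
    Fintype.card (Addr L (L * t)) + 1 ≤ (L + 2) * 4 ^ t := by
  have hlevels : L * t + 1 + 1 ≤ (L + 2) * 2 ^ t := by
    have : t ≤ 2 ^ t := Nat.lt_two_pow_self.le
    have : 1 ≤ 2 ^ t := Nat.one_le_two_pow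
    nlinarith
  calc Fintype.card (Addr L (L * t)) + 1 ≤ (L * t + 1) * 2 ^ t + 2 ^ t :=
        Nat.add_le_add (card_addr_le hL t) Nat.one_le_two_pow
    _ = (L * t + 1 + 1) * 2 ^ t := by ring
    _ ≤ (L + 2) * 2 ^ t * 2 ^ t := Nat.mul_le_mul_right _ hlevels
    _ = (L + 2) * 4 ^ t := by rw [mul_assoc, ← mul_pow]; norm_num

lemma card_idx_prod_le {J Q : Type*} [Fintype J] [Fintype Q] {L : ℕ} (hL : 1 ≤ L) (t : ℕ) :
    (Fintype.card (Idx J L (L * t) × Q) : ℝ)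
      ≤ 2 * Fintype.card Q * (L + 2) * Fintype.card J * 4 ^ t := by
  have hcard : Fintype.card (Idx J L (L * t) × Q)
      = 2 * Fintype.card J * (Fintype.card (Addr L (L * t)) + 1) * Fintype.card Q := by
    simp only [Fintype.card_sum, Fintype.card_prod, Fintype.card_bool]
    ring
  calc (Fintype.card (Idx J L (L * t) × Q) : ℝ)
      ≤ ((2 * Fintype.card J * ((L + 2) * 4 ^ t) * Fintype.card Q : ℕ) : ℝ) := by
        rw [hcard]
        gcongr
        exact card_addr_add_one_le hL t
    _ = 2 * Fintype.card Q * (L + 2) * Fintype.card J * 4 ^ t := by push_cast; ring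

lemma card_le_card_idx_prod (J Q : Type*) [Fintype J] [Fintype Q] [Nonempty Q] (L h : ℕ) :
    Fintype.card J ≤ Fintype.card (Idx J L h × Q) :=
  Fintype.card_le_of_injective (fun j => (.inl (true, j), Classical.arbitrary Q)) fun j j' h => by
    simpa using h

lemma le_card_idx_prod {J Q : Type*} [Fintype J] [Fintype Q] [Nonempty Q] {s t : ℕ} (hs : 1 ≤ s)
    (hJ : 2 ^ (s * t) ≤ Fintype.card J) (L h : ℕ) : t ≤ Fintype.card (Idx J L h × Q) :=
  calc t ≤ s * t := Nat.le_mul_of_pos_left t hs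
    _ ≤ 2 ^ (s * t) := Nat.lt_two_pow_self.le
    _ ≤ Fintype.card J := hJ
    _ ≤ Fintype.card (Idx J L h × Q) := card_le_card_idx_prod J Q L h

lemma rpow_le_mul_of_le_mul_four_pow {α C N x : ℝ} {s t : ℕ} (hα : 0 ≤ α)
    (hs : 2 ≤ s * (1 - α)) (hC : 0 ≤ C) (hx : 0 ≤ x) (hxN : x ≤ C * N * 4 ^ t)
    (hN : 2 ^ (s * t) ≤ N) : x ^ α ≤ C ^ α * N := by
  have hN_pos : 0 < N := lt_of_lt_of_le (by positivity) hN
  have hα' : 0 ≤ 1 - α := by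
    by_contra! hlt
    linarith [mul_nonpos_of_nonneg_of_nonpos (Nat.cast_nonneg (α := ℝ) s) hlt.le]
  have hpow : ((4 : ℝ) ^ t) ^ α ≤ N ^ (1 - α) := by
    calc ((4 : ℝ) ^ t) ^ α ≤ (4 : ℝ) ^ t := by
          have hone : (1 : ℝ) ≤ 4 ^ t := one_le_pow₀ (by norm_num)
          simpa using Real.rpow_le_rpow_of_exponent_le hone (sub_nonneg.1 hα')
      _ = (2 : ℝ) ^ ((2 * t : ℕ) : ℝ) := by
          rw [Real.rpow_natCast, pow_mul]
          norm_num
      _ ≤ (2 : ℝ) ^ (((s * t : ℕ) : ℝ) * (1 - α)) := by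
          refine Real.rpow_le_rpow_of_exponent_le one_le_two ?_
          push_cast
          nlinarith [(Nat.cast_nonneg t : (0 : ℝ) ≤ t)]
      _ = ((2 : ℝ) ^ (s * t)) ^ (1 - α) := by
          rw [Real.rpow_mul (by norm_num), Real.rpow_natCast]
      _ ≤ N ^ (1 - α) := Real.rpow_le_rpow (by positivity) hN hα'
  calc x ^ α ≤ (C * N * 4 ^ t) ^ α := Real.rpow_le_rpow hx hxN hα
    _ = C ^ α * (N ^ α * (4 ^ t) ^ α) := by
        rw [Real.mul_rpow (by positivity) (by positivity), Real.mul_rpow hC hN_pos.le, mul_assoc]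
    _ ≤ C ^ α * (N ^ α * N ^ (1 - α)) := by gcongr
    _ = C ^ α * N := by rw [← Real.rpow_add hN_pos]; simp

lemma div_rpow_mul_card_idx_prod_rpow_le {J Q : Type*} [Fintype J] [Fintype Q] [Nonempty Q]
    {L s t : ℕ} {α η : ℝ} (hη : 0 ≤ η) (hL : 1 ≤ L) (hα : 0 ≤ α) (hs : 2 ≤ s * (1 - α))
    (hJ : 2 ^ (s * t) ≤ Fintype.card J) :
    η / (2 * Fintype.card Q * (L + 2)) ^ α * (Fintype.card (Idx J L (L * t) × Q) : ℝ) ^ α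
      ≤ η * Fintype.card J := by
  rw [div_mul_eq_mul_div, div_le_iff₀ (by positivity), mul_assoc, mul_comm (Fintype.card J : ℝ)]
  exact mul_le_mul_of_nonneg_left (rpow_le_mul_of_le_mul_four_pow hα hs (by positivity)
    (Nat.cast_nonneg _) (card_idx_prod_le hL t) (mod_cast hJ)) hη

lemma exists_nat_two_le_mul {x : ℝ} (hx : 0 < x) : ∃ s : ℕ, 1 ≤ s ∧ 2 ≤ s * x := by
  obtain ⟨s, hs⟩ := exists_nat_ge (2 / x)
  have hs' : 0 < s := Nat.cast_pos.1 ((div_pos two_pos hx).trans_le hs)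
  exact ⟨s, hs', (div_le_iff₀ hx).1 hs⟩

lemma exists_two_mul_one_sub_sq_pow_le {p : unitInterval} (hp : (p : ℝ) < 1) {x : ℝ}
    (hx : 0 < x) :
    ∃ L : ℕ, 1 ≤ L ∧ 0 ≤ 2 * (1 - (1 - (p : ℝ)) ^ 2) ^ L ∧
      2 * (1 - (1 - (p : ℝ)) ^ 2) ^ L ≤ x := by
  have hr : 0 ≤ 1 - (1 - (p : ℝ)) ^ 2 := by nlinarith [p.2.1]
  have hr' : 1 - (1 - (p : ℝ)) ^ 2 < 1 := by nlinarith
  obtain ⟨L, hL⟩ := exists_pow_lt_of_lt_one (half_pos hx) hr'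
  refine ⟨L + 1, by omega, by positivity, ?_⟩
  linarith [pow_le_pow_of_le_one hr hr'.le (Nat.le_add_right L 1)]

lemma exists_mul_half_pow_le (M : ℝ) {ε : ℝ} (hε : 0 < ε) (n₀ : ℕ) :
    ∃ T ≥ n₀, M * (1 / 2) ^ T ≤ ε := by
  have hlim := (tendsto_pow_atTop_nhds_zero_of_lt_one (r := (1 / 2 : ℝ)) (by norm_num)
    (by norm_num)).const_mul M
  rw [mul_zero] at hlim
  obtain ⟨T, hT, hn₀⟩ :=
    ((hlim.eventually_le_const hε).and (Filter.eventually_ge_atTop n₀)).exists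
  exact ⟨T, hn₀, hT⟩

lemma error_le {η r : ℝ} {s T m N : ℕ} (hη : 0 < η) (hr : 0 ≤ r) (hs : 1 ≤ s) (hm : 0 < m)
    (hrs : r ≤ (1 / 2) ^ (s + 1)) (hN : N = 2 ^ (s * T) * m) :
    5 * m / (η ^ 2 * N) + N * r ^ T ≤ (5 / η ^ 2 + m) * (1 / 2) ^ T := by
  have hm' : (m : ℝ) ≠ 0 := by positivity
  have hN' : (N : ℝ) = 2 ^ (s * T) * m := mod_cast hN
  have hsecondMoment : 5 * m / (η ^ 2 * N) ≤ 5 / η ^ 2 * (1 / 2) ^ T := by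
    calc 5 * m / (η ^ 2 * N) = 5 / η ^ 2 * (1 / 2) ^ (s * T) := by
          rw [hN', one_div, inv_pow]
          field_simp
      _ ≤ 5 / η ^ 2 * (1 / 2) ^ T := by
          refine mul_le_mul_of_nonneg_left ?_ (by positivity)
          exact pow_le_pow_of_le_one (by norm_num) (by norm_num) (Nat.le_mul_of_pos_left _ hs)
  have hleaks : N * r ^ T ≤ m * (1 / 2) ^ T := by
    calc N * r ^ T ≤ N * ((1 / 2) ^ (s + 1)) ^ T := by
          rw [hN']
          gcongr
      _ = m * (1 / 2) ^ T * (2 ^ (s * T) * (1 / 2) ^ (s * T)) := by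
          rw [hN', ← pow_mul, add_mul, one_mul, pow_add]
          ring
      _ = m * (1 / 2) ^ T := by rw [← mul_pow]; norm_num
  linarith

end Parameters

theorem large_second_component (d : ℕ) (hd : 3 ≤ d) (R : ℕ) (hR : 1 ≤ R)
    (p : ℝ) (hp : 1 / ((d : ℝ) - 1) < p) (hp1 : p < 1)
    (α : ℝ) (hα0 : 0 < α) (hα1 : α < 1) :
    ∃ b > (0:ℝ), ∃ c > (0:ℝ), ∀ ε > (0:ℝ), ∀ n₀ : ℕ, ∃ n ≥ n₀,
      ∃ G : SimpleGraph (Fin n), IsRegularExpander G b d ∧ (R : ℕ∞) ≤ G.girth ∧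
        1 - ε ≤ percProb G p (fun H =>
          ∃ c₁ c₂ : H.ConnectedComponent, IsLargestComp H c₁ ∧ c₂ ≠ c₁ ∧
            (∀ c' : H.ConnectedComponent, c' ≠ c₁ →
              (compVerts H c').card ≤ (compVerts H c₂).card) ∧
            c * (n : ℝ) ^ α ≤ ((compVerts H c₂).card : ℝ)) := by
  have hd' : (3 : ℝ) ≤ d := mod_cast hd
  have hp0 : 0 < p := (one_div_pos.2 (by linarith)).trans hp
  lift p to unitInterval using ⟨hp0.le, hp1.le⟩
  obtain ⟨Q, _, _, B, hfree, η, hη, m, hm, hcores⟩ := exists_percolatingCores hd R hp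
  obtain ⟨s, hs, hsα⟩ := exists_nat_two_le_mul (sub_pos.2 hα1)
  obtain ⟨L, hL, hr, hrs⟩ :=
    exists_two_mul_one_sub_sq_pow_le hp1 (show (0 : ℝ) < (1 / 2) ^ (s + 1) by positivity)
  obtain ⟨b, hb, hgraph⟩ :=
    B.exists_regularExpander_largeSecondComponent hR hfree (by omega) hL p hη m
  refine ⟨b, hb, η / (2 * Fintype.card Q * (L + 2)) ^ α, by positivity, fun ε hε n₀ => ?_⟩
  obtain ⟨T, hT, hTε⟩ := exists_mul_half_pow_le (5 / η ^ 2 + m) hε n₀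
  obtain ⟨J, _, κ, hJ, hκ⟩ := hcores (2 ^ (s * T))
  have hJ_le : 2 ^ (s * T) ≤ Fintype.card J := hJ ▸ Nat.le_mul_of_pos_right _ hm
  have : Nonempty J := Fintype.card_pos_iff.1 ((Nat.two_pow_pos _).trans_le hJ_le)
  have hx := div_rpow_mul_card_idx_prod_rpow_le (Q := Q) hη.le hL hα0.le hsα hJ_le
  obtain ⟨G, hG, hgirth, hprob⟩ :=
    hgraph J κ hκ T _ (by positivity) hx _ (Fintype.equivFin _).symm
  refine ⟨_, hT.trans (le_card_idx_prod hs hJ_le L (L * T)), G, hG, hgirth, le_trans ?_ hprob⟩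
  linarith [error_le hη hr hs hm hrs hJ]

end Percolation

end
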